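/- arXiv:1707.08997 — 3 statements merged into one kernel-verified Lean document; each statement's English description precedes it below -/
import Mathlib

section
/- Let A be a unital ring that is finitely generated and torsion-free as a ℤ-module (i.e., A is an order in the finite-dimensional ℚ-algebra A ⊗ ℚ). Then there are only finitely many isomorphism classes of cyclic projective right A-modules, i.e., of right A-modules that are projective and generated by one element. -/
/-- finitely generated and torsion free over the integers -/
structure Latt (M : Type) [AddCommGroup M] : Prop where
  fin : Module.Finite ℤ M
  tf : ∀ (n : ℤ) (x : M), n • x = 0 → n = 0 ∨ x = 0

/-- rationally simple -/
def QS (R M : Type) [Ring R] [AddCommGroup M] [Module R M] : Prop :=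
  Nontrivial M ∧ ∀ Z : Submodule R M, Z ≠ ⊥ → ∃ m : ℤ, m ≠ 0 ∧ ∀ x : M, m • x ∈ Z

/-- no nonzero square zero left ideals -/
def SP (R : Type) [Ring R] : Prop :=
  ∀ L : Submodule R R, (∀ a ∈ L, ∀ b ∈ L, a * b = 0) → L = ⊥

section basics

theorem Latt.torsionFree {M : Type} [AddCommGroup M] (h : Latt M) : Module.IsTorsionFree ℤ M := by
  refine ⟨fun n hn x y hxy => ?_⟩
  have h0 : n • (x - y) = 0 := by
    have : n • x = n • y := hxy
    rw [smul_sub, this, sub_self]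
  rcases h.tf _ _ h0 with h1 | h1
  · exact absurd h1 hn.ne_zero
  · exact sub_eq_zero.mp h1

theorem Latt.free {M : Type} [AddCommGroup M] (h : Latt M) : Module.Free ℤ M := by
  have := h.torsionFree
  have := h.fin
  infer_instance

theorem Latt.of_inj {M N : Type} [AddCommGroup M] [AddCommGroup N] (h : Latt N) (f : M →+ N)
    (hf : Function.Injective f) : Latt M := by
  have := h.fin
  refine ⟨Module.Finite.of_injective f.toIntLinearMap hf, fun n x hx => ?_⟩
  have : n • f x = 0 := by rw [← map_zsmul, hx, map_zero]
  rcases h.tf _ _ this with h1 | h1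
  · exact Or.inl h1
  · exact Or.inr (hf (by rw [h1, map_zero]))

theorem Latt.sub {R M : Type} [Ring R] [AddCommGroup M] [Module R M] (h : Latt M)
    (N : Submodule R M) : Latt N :=
  h.of_inj N.subtype.toAddMonoidHom N.injective_subtype

theorem full_of_finrank {M N : Type} [AddCommGroup M] [AddCommGroup N] (hM : Latt M)
    (f : N →+ M) (hf : Function.Injective f)
    (hr : Module.finrank ℤ M ≤ Module.finrank ℤ N) :
    ∃ m : ℤ, m ≠ 0 ∧ ∀ x, ∃ y, f y = m • x := by
  have := hM.fin
  have := hM.free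
  let g := f.toIntLinearMap
  have hfr : Module.finrank ℤ (LinearMap.range g) = Module.finrank ℤ M := by
    refine le_antisymm (Submodule.finrank_le _) ?_
    rw [LinearMap.finrank_range_of_inj (f := g) hf]
    exact hr
  have hfin := Submodule.finiteQuotientOfFreeOfRankEq _ hfr
  refine ⟨Nat.card (M ⧸ LinearMap.range g), ?_, fun x => ?_⟩
  · exact_mod_cast Nat.card_pos.ne'
  · have : (Nat.card (M ⧸ LinearMap.range g)) • x ∈ LinearMap.range g := by
      simpa using! AddSubgroup.nsmul_index_mem (LinearMap.range g).toAddSubgroup x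
    obtain ⟨y, hy⟩ := this
    exact ⟨y, by rw [natCast_zsmul]; exact hy⟩

variable {R M : Type} [Ring R] [AddCommGroup M] [Module R M]

theorem full_sub (hM : Latt M) (N K : Submodule R M) (hNK : N ≤ K)
    (hr : Module.finrank ℤ K ≤ Module.finrank ℤ N) :
    ∃ m : ℤ, m ≠ 0 ∧ ∀ x ∈ K, m • x ∈ N := by
  obtain ⟨m, hm, h⟩ := full_of_finrank (hM.sub K) (Submodule.inclusion hNK).toAddMonoidHom
    (Submodule.inclusion_injective hNK) hr
  refine ⟨m, hm, fun x hx => ?_⟩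
  obtain ⟨y, hy⟩ := h ⟨x, hx⟩
  have := congrArg Subtype.val hy
  change (y : M) = m • x at this
  rw [← this]; exact y.2

theorem finrank_mono (hM : Latt M) (N K : Submodule R M) (hNK : N ≤ K) :
    Module.finrank ℤ N ≤ Module.finrank ℤ K := by
  have := (hM.sub K).fin
  have := (hM.sub K).free
  exact LinearMap.finrank_le_finrank_of_injective
    (f := (Submodule.inclusion hNK).toAddMonoidHom.toIntLinearMap)
    (Submodule.inclusion_injective hNK)

/-- every nonzero lattice submodule contains a rationally simple one -/
theorem exists_qs (hM : Latt M) (K : Submodule R M) (hK : K ≠ ⊥) :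
    ∃ L : Submodule R M, L ≤ K ∧ QS R L := by
  classical
  have hex : ∃ n, ∃ L : Submodule R M, L ≤ K ∧ L ≠ ⊥ ∧ Module.finrank ℤ L = n :=
    ⟨_, K, le_rfl, hK, rfl⟩
  obtain ⟨L, hLK, hL0, hLn⟩ := Nat.find_spec hex
  refine ⟨L, hLK, Submodule.nontrivial_iff_ne_bot.mpr hL0, fun Z hZ => ?_⟩
  have h1 : Z.map L.subtype ≤ L := Submodule.map_subtype_le L Z
  have h2 : Z.map L.subtype ≠ ⊥ := by
    intro h
    exact hZ (Submodule.map_injective_of_injective L.injective_subtype (by rw [h, Submodule.map_bot]))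
  have h3 := Nat.find_min' hex ⟨Z.map L.subtype, h1.trans hLK, h2, rfl⟩
  obtain ⟨m, hm, h⟩ := full_sub hM _ L h1 (by rw [hLn]; exact h3)
  refine ⟨m, hm, fun x => ?_⟩
  obtain ⟨z, hz, hzx⟩ := h x x.2
  have : z = m • x := Subtype.ext hzx
  rwa [← this]

theorem QS.eq_bot_or (hq : QS R M) {N : Type} [AddCommGroup N] [Module R N]
    (hN : Latt N) (f : M →ₗ[R] N) (hf : f ≠ 0) : Function.Injective f := by
  rw [← LinearMap.ker_eq_bot]
  by_contra hk
  obtain ⟨m, hm, h⟩ := hq.2 _ hk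
  apply hf
  ext x
  have h1 : f (m • x) = 0 := h x
  rw [map_zsmul] at h1
  exact (hN.tf _ _ h1).resolve_left hm

theorem noeth (hM : Latt M) : IsNoetherian R M := by
  have := hM.fin
  have h : IsNoetherian ℤ M := inferInstance
  rw [isNoetherian_iff'] at h ⊢
  let e : Submodule R M → Submodule ℤ M := fun N => N.toAddSubgroup.toIntSubmodule
  have he : StrictMono e := by
    intro a b hab
    refine lt_of_le_of_ne (fun x hx => hab.le hx) fun h => ?_
    apply hab.ne
    ext x
    exact (SetLike.ext_iff.mp h x)
  exact he.wellFoundedGT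

end basics

/-- quasi idempotents -/
theorem exists_qidem {R : Type} [Ring R] (hR : Latt R) (hs : SP R) :
    ∀ (n : ℕ) (K : Submodule R R), Module.finrank ℤ K ≤ n →
    ∃ m : ℤ, m ≠ 0 ∧ ∃ e ∈ K, ∀ x ∈ K, x * e = m • x := by
  intro n
  induction n with
  | zero =>
    intro K hK
    obtain ⟨m, hm, h⟩ := full_sub hR ⊥ K bot_le (by omega)
    refine ⟨1, one_ne_zero, 0, K.zero_mem, fun x hx => ?_⟩
    have h1 := (hR.tf _ _ ((Submodule.mem_bot R).mp (h x hx))).resolve_left hm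
    simp [h1]
  | succ n ih =>
    intro K hK
    by_cases hK0 : K = ⊥
    · refine ⟨1, one_ne_zero, 0, K.zero_mem, fun x hx => ?_⟩
      rw [hK0, Submodule.mem_bot] at hx
      simp [hx]
    obtain ⟨L, hLK, hL⟩ := exists_qs hR K hK0
    have hL0 : L ≠ ⊥ := Submodule.nontrivial_iff_ne_bot.mp hL.1
    have : ∃ a ∈ L, ∃ b ∈ L, b * a ≠ 0 := by
      by_contra hcon
      push Not at hcon
      exact hL0 (hs L fun a ha b hb => hcon b hb a ha)
    obtain ⟨a, ha, b, hb, hba⟩ := this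
    let f : L →ₗ[R] L := 
      { toFun := fun x => ⟨x * a, L.smul_mem x ha⟩
        map_add' := fun x y => by ext; simp [add_mul]
        map_smul' := fun r x => by ext; simp [mul_assoc] }
    have hfinj : Function.Injective f := by
      refine hL.eq_bot_or (hR.sub L) f fun h => hba ?_
      have := congrArg Subtype.val (LinearMap.congr_fun h ⟨b, hb⟩)
      exact this
    obtain ⟨m, hm, hf⟩ := full_of_finrank (hR.sub L) f.toAddMonoidHom hfinj le_rfl
    obtain ⟨e, he⟩ := hf ⟨a, ha⟩
    have he' : (e : R) * a = m • a := congrArg Subtype.val he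
    have heL : ∀ x ∈ L, x * e = m • x := by
      intro x hx
      have h1 : f ⟨x * e, L.smul_mem x e.2⟩ = f (m • ⟨x, hx⟩) := by
        apply Subtype.ext
        change x * e * a = (m • x) * a
        rw [mul_assoc, he', mul_smul_comm, smul_mul_assoc]
      exact congrArg Subtype.val (hfinj h1)
    let K0 : Submodule R R := 
      { carrier := {x | x ∈ K ∧ x * e = 0}
        add_mem' := fun {x y} hx hy => ⟨K.add_mem hx.1 hy.1, by rw [add_mul, hx.2, hy.2, add_zero]⟩
        zero_mem' := ⟨K.zero_mem, zero_mul _⟩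
        smul_mem' := fun r x hx => ⟨K.smul_mem r hx.1, by
          rw [smul_eq_mul, mul_assoc, hx.2, mul_zero]⟩ }
    have hK0K : K0 ≤ K := fun x hx => hx.1
    have hlt : Module.finrank ℤ K0 < Module.finrank ℤ K := by
      by_contra hge
      obtain ⟨t, ht, h⟩ := full_sub hR K0 K hK0K (not_lt.mp hge)
      apply hL0
      rw [Submodule.eq_bot_iff]
      intro x hx
      have h1 := (h x (hLK hx)).2
      rw [smul_mul_assoc, heL x hx] at h1
      exact (hR.tf _ _ ((hR.tf _ _ h1).resolve_left ht)).resolve_left hm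
    obtain ⟨m0, hm0, e0, he0, h0⟩ := ih K0 (by omega)
    refine ⟨m * m0, mul_ne_zero hm hm0, m0 • (e : R) + m • e0 - e * e0, ?_, ?_⟩
    · refine K.sub_mem (K.add_mem (zsmul_mem (hLK e.2) _) (zsmul_mem he0.1 _)) (K.smul_mem _ he0.1)
    · intro x hx
      have hxe : x * e ∈ L := L.smul_mem x e.2
      have h1 : m • x - x * e ∈ K0 := by
        refine ⟨K.sub_mem (zsmul_mem hx _) (hLK hxe), ?_⟩
        rw [sub_mul, heL _ hxe, smul_mul_assoc, sub_self]
      have h2 := h0 _ h1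
      simp only [sub_mul, smul_sub, smul_mul_assoc] at h2
      have h3 : x * (m0 • (e : R) + m • e0 - e * e0) = m0 • (x * e) + (m • (x * e0) - x * e * e0) := by
        simp only [mul_sub, mul_add, mul_smul_comm, mul_assoc]; abel
      rw [h3, h2, mul_comm m, mul_smul]; abel
theorem exists_root (d k : ℕ) (hd : d ≠ 0) : ∃ T : ℕ, T ^ d ≤ k ∧ k < (T + 1) ^ d := by
  classical
  refine ⟨Nat.findGreatest (fun T => T ^ d ≤ k) k, ?_, ?_⟩
  · exact Nat.findGreatest_spec (P := fun T => T ^ d ≤ k) (Nat.zero_le k) (by simp [hd])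
  · by_contra h
    push Not at h
    have h1 : Nat.findGreatest (fun T => T ^ d ≤ k) k + 1 ≤ k :=
      (Nat.le_self_pow hd _).trans h
    have := Nat.le_findGreatest (P := fun T => T ^ d ≤ k) h1 h
    omega

theorem det_bound {E : Type} [Ring E] {d : ℕ} (b : Module.Basis (Fin d) ℤ E) :
    ∃ C : ℕ, ∀ (T : ℕ) (x : E), (∀ i, |b.repr x i| ≤ T) →
      (LinearMap.det (LinearMap.mulLeft ℤ x)).natAbs ≤ C * T ^ d := by
  classical
  let A : Fin d → Matrix (Fin d) (Fin d) ℤ := fun k => LinearMap.toMatrix b b (LinearMap.mulLeft ℤ (b k))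
  let y : ℤ := ∑ k, ∑ i, ∑ j, |A k i j|
  have hy : ∀ k i j, AbsoluteValue.abs (A k i j) ≤ y := by
    intro k i j
    calc |A k i j| ≤ ∑ j, |A k i j| :=
          Finset.single_le_sum (f := fun j => |A k i j|) (fun _ _ => abs_nonneg _) (Finset.mem_univ j)
      _ ≤ ∑ i, ∑ j, |A k i j| :=
          Finset.single_le_sum (f := fun i => ∑ j, |A k i j|)
            (fun _ _ => Finset.sum_nonneg fun _ _ => abs_nonneg _) (Finset.mem_univ i)
      _ ≤ y := Finset.single_le_sum (f := fun k => ∑ i, ∑ j, |A k i j|)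
            (fun _ _ => Finset.sum_nonneg fun _ _ => Finset.sum_nonneg fun _ _ => abs_nonneg _)
            (Finset.mem_univ k)
  have hy0 : 0 ≤ y := Finset.sum_nonneg fun _ _ => Finset.sum_nonneg fun _ _ =>
    Finset.sum_nonneg fun _ _ => abs_nonneg _
  refine ⟨d.factorial * (d * y.natAbs) ^ d, fun T x hx => ?_⟩
  have h1 : LinearMap.toMatrix b b (LinearMap.mulLeft ℤ x) = ∑ k, b.repr x k • A k := by
    have : LinearMap.mulLeft ℤ x = ∑ k, b.repr x k • LinearMap.mulLeft ℤ (b k) := by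
      ext z
      simp only [LinearMap.mulLeft_apply, LinearMap.sum_apply, LinearMap.smul_apply]
      conv_lhs => rw [← b.sum_repr x]
      simp only [Finset.sum_mul, smul_mul_assoc]
    rw [this, map_sum]
    simp only [map_smul, A]
  rw [← LinearMap.det_toMatrix b, h1]
  have h2 := Matrix.det_sum_smul_le (Finset.univ) (c := fun k => b.repr x k) (A := A) hy
    (y := (T : ℤ)) hx
  zify
  have h3 : |y| = y := abs_of_nonneg hy0
  rw [h3]
  refine le_trans (le_trans (le_of_eq (by rfl)) h2) (le_of_eq ?_)
  simp only [Fintype.card_fin, Finset.card_univ, nsmul_eq_mul, mul_pow]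
  ring

theorem right_ideal_bound {E : Type} [Ring E] [Nontrivial E] [NoZeroDivisors E] (hE : Latt E) :
    ∃ N : ℤ, N ≠ 0 ∧ ∀ H : AddSubgroup E, (∀ h ∈ H, ∀ e, h * e ∈ H) → (∃ h ∈ H, h ≠ 0) →
      ∃ ψ ∈ H, ψ ≠ 0 ∧ ∀ h ∈ H, ∃ ε, N • h = ψ * ε := by
  classical
  have := hE.fin
  have := hE.free
  let d := Module.finrank ℤ E
  let b : Module.Basis (Fin d) ℤ E := Module.finBasis ℤ E
  have hd : d ≠ 0 := Module.finrank_pos.ne'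
  obtain ⟨C, hC⟩ := det_bound b
  refine ⟨C.factorial, by exact_mod_cast C.factorial_ne_zero, fun H hH hne => ?_⟩
  obtain ⟨h0, h0H, h00⟩ := hne
  -- index finite
  have hinj : ∀ x : E, x ≠ 0 → Function.Injective (LinearMap.mulLeft ℤ x) := by
    intro x hx y z hyz
    exact mul_left_cancel₀ hx hyz
  have hcard : ∀ x : E, x ≠ 0 →
      (LinearMap.range (LinearMap.mulLeft ℤ x)).toAddSubgroup.index =
        (LinearMap.det (LinearMap.mulLeft ℤ x)).natAbs := by
    intro x hx
    have := Submodule.natAbs_det_equiv (LinearMap.range (LinearMap.mulLeft ℤ x))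
      (LinearEquiv.ofInjective _ (hinj x hx))
    rw [AddSubgroup.index]
    refine Eq.trans ?_ this.symm
    rfl
  have hfinidx : ∀ x : E, x ≠ 0 →
      (LinearMap.range (LinearMap.mulLeft ℤ x)).toAddSubgroup.index ≠ 0 := by
    intro x hx
    rw [hcard x hx, Int.natAbs_ne_zero]
    exact fun h => LinearMap.det_eq_zero_iff_ker_ne_bot.mp h (LinearMap.ker_eq_bot.mpr (hinj x hx))
  have hsub : ∀ x ∈ H, (LinearMap.range (LinearMap.mulLeft ℤ x)).toAddSubgroup ≤ H := by
    rintro x hx _ ⟨e, rfl⟩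
    exact hH x hx e
  have hHi : H.index ≠ 0 := fun h => hfinidx h0 h00
    (Nat.eq_zero_of_zero_dvd (h ▸ AddSubgroup.index_dvd_of_le (hsub h0 h0H)))
  have hfinq : Finite (E ⧸ H) := by
    have := AddSubgroup.finiteIndex_iff.mpr hHi
    infer_instance
  have := Fintype.ofFinite (E ⧸ H)
  obtain ⟨T, hT1, hT2⟩ := exists_root d H.index hd
  let F : (Fin d → Fin (T + 1)) → E ⧸ H := fun c =>
    QuotientAddGroup.mk (∑ i, ((c i : ℕ) : ℤ) • b i)
  obtain ⟨c, c', hcc, hF⟩ := Fintype.exists_ne_map_eq_of_card_lt F (by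
    rw [← Nat.card_eq_fintype_card]
    simpa [AddSubgroup.index] using hT2)
  let ψ : E := ∑ i, (-((c i : ℕ) : ℤ) + ((c' i : ℕ) : ℤ)) • b i
  have hψH : ψ ∈ H := by
    have := QuotientAddGroup.eq.mp hF
    convert! this using 1
    simp only [ψ, add_smul, Finset.sum_add_distrib, neg_smul, Finset.sum_neg_distrib]
  have hrep : ∀ i, b.repr ψ i = -((c i : ℕ) : ℤ) + ((c' i : ℕ) : ℤ) := by
    intro i
    simp only [ψ]
    rw [b.repr_sum_self]
  have hψ0 : ψ ≠ 0 := by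
    intro h
    apply hcc
    funext i
    have := hrep i
    rw [h] at this
    simp at this
    apply Fin.ext
    omega
  have hψT : ∀ i, |b.repr ψ i| ≤ T := by
    intro i
    rw [hrep i, abs_le]
    have := (c i).is_lt
    have := (c' i).is_lt
    omega
  refine ⟨ψ, hψH, hψ0, fun h hh => ?_⟩
  let W := (LinearMap.range (LinearMap.mulLeft ℤ ψ)).toAddSubgroup
  have hW := AddSubgroup.relIndex_mul_index (hsub ψ hψH)
  have hle : W.relIndex H ≤ C := by
    have h1 : W.relIndex H * H.index ≤ C * H.index := by
      rw [hW, hcard ψ hψ0]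
      exact (hC T ψ hψT).trans (Nat.mul_le_mul_left C hT1)
    exact Nat.le_of_mul_le_mul_right h1 (Nat.pos_of_ne_zero hHi)
  have hpos : 0 < W.relIndex H := Nat.pos_of_ne_zero fun h => hfinidx ψ hψ0 (by
    rw [← hW]; exact Nat.mul_eq_zero.mpr (Or.inl h))
  obtain ⟨q, hq⟩ := Nat.dvd_factorial hpos hle
  have hmem : (W.relIndex H) • h ∈ W := by
    have := AddSubgroup.nsmul_index_mem (W.addSubgroupOf H) ⟨h, hh⟩
    exact this
  obtain ⟨ε, hε⟩ := hmem
  refine ⟨q • ε, ?_⟩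
  rw [natCast_zsmul, hq, mul_comm, mul_smul, ← hε, mul_smul_comm]
  rfl

/-- finitely many isomorphism classes -/
def FinIso (R : Type) [Ring R] (P : ModuleCat.{0} R → Prop) : Prop :=
  ∃ S : Set (ModuleCat.{0} R), S.Finite ∧ (∀ N ∈ S, P N) ∧
    ∀ M, P M → ∃ N ∈ S, Nonempty (M ≃ₗ[R] N)

theorem FinIso.mk' {R : Type} [Ring R] {P : ModuleCat.{0} R → Prop} {ι : Type*} [Finite ι]
    (Q : ι → ModuleCat.{0} R → Prop) (hcov : ∀ M, P M → ∃ i, Q i M)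
    (huniq : ∀ i M M', P M → P M' → Q i M → Q i M' → Nonempty (M ≃ₗ[R] M')) : FinIso R P := by
  classical
  let f : {i : ι // ∃ M, P M ∧ Q i M} → ModuleCat.{0} R := fun i => i.2.choose
  refine ⟨Set.range f, Set.finite_range f, ?_, fun M hM => ?_⟩
  · rintro _ ⟨i, rfl⟩
    exact i.2.choose_spec.1
  · obtain ⟨i, hi⟩ := hcov M hM
    let i' : {i : ι // ∃ M, P M ∧ Q i M} := ⟨i, M, hM, hi⟩
    exact ⟨f i', ⟨i', rfl⟩, huniq i _ _ hM i'.2.choose_spec.1 hi i'.2.choose_spec.2⟩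

theorem finite_between {R L : Type} [Ring R] [AddCommGroup L] [Module R L] (hL : Latt L)
    (c : ℤ) (hc : c ≠ 0) : Finite {Z : Submodule R L // ∀ x, c • x ∈ Z} := by
  have := hL.fin
  let W : Submodule ℤ L := LinearMap.range (LinearMap.lsmul ℤ L c)
  have hfin : Finite (L ⧸ W) := by
    apply Module.finite_of_fg_torsion
    intro x
    obtain ⟨x, rfl⟩ := Submodule.Quotient.mk_surjective _ x
    refine ⟨⟨c, mem_nonZeroDivisors_of_ne_zero hc⟩, ?_⟩
    change c • (Submodule.Quotient.mk x : L ⧸ W) = 0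
    rw [← Submodule.Quotient.mk_smul W]
    exact (Submodule.Quotient.mk_eq_zero _).mpr ⟨x, rfl⟩
  let F : {Z : Submodule R L // ∀ x, c • x ∈ Z} → Set (L ⧸ W) := fun Z =>
    (fun x : L => (Submodule.Quotient.mk x : L ⧸ W)) '' (Z.1 : Set L)
  have key : ∀ Z Z', F Z = F Z' → Z.1 ≤ Z'.1 := by
    intro Z Z' h x hx
    have : (Submodule.Quotient.mk x : L ⧸ W) ∈ F Z' := h ▸ ⟨x, hx, rfl⟩
    obtain ⟨y, hy, hyx⟩ := this
    obtain ⟨z, hz⟩ := (Submodule.Quotient.eq W).mp hyx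
    have h1 : c • z = y - x := hz
    have : x = y - c • z := by rw [h1]; abel
    rw [this]
    exact Z'.1.sub_mem hy (Z'.2 z)
  exact Finite.of_injective F fun Z Z' h => Subtype.ext (le_antisymm (key _ _ h) (key _ _ h.symm))

theorem Latt.hom {R K Y : Type} [Ring R] [AddCommGroup K] [Module R K] [AddCommGroup Y]
    [Module R Y] (hK : Latt K) (hY : Latt Y) : Latt (K →ₗ[R] Y) := by
  have := hK.fin
  have := hK.free
  have := hY.fin
  have := hY.free
  have h : Latt (K →ₗ[ℤ] Y) := ⟨inferInstance, fun n f hf => by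
    by_cases hn : n = 0
    · exact Or.inl hn
    · right
      ext x
      have : n • f x = 0 := LinearMap.congr_fun hf x
      exact (hY.tf _ _ this).resolve_left hn⟩
  refine h.of_inj (AddMonoidHom.mk' (fun f => f.toAddMonoidHom.toIntLinearMap) ?_) ?_
  · intro f g; rfl
  · intro f g hfg
    ext x
    exact LinearMap.congr_fun hfg x

theorem exists_back {R L M : Type} [Ring R] [AddCommGroup L] [Module R L] [AddCommGroup M]
    [Module R M] (hM : Latt M) (ψ : L →ₗ[R] M) (hψ : Function.Injective ψ) (c : ℤ) (hc : c ≠ 0)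
    (h : ∀ y, c • y ∈ LinearMap.range ψ) :
    ∃ θ : M →ₗ[R] L, Function.Injective θ ∧ ∀ y, ψ (θ y) = c • y := by
  choose f hf using h
  refine ⟨{ toFun := f, map_add' := fun x y => hψ ?_, map_smul' := fun r x => hψ ?_ }, ?_, hf⟩
  · rw [map_add, hf, hf, hf, smul_add]
  · simp only [RingHom.id_apply]
    rw [map_smul, hf, hf, smul_comm]
  · intro x y hxy
    have h1 : f x = f y := hxy
    have h2 : c • (x - y) = 0 := by rw [smul_sub, ← hf, ← hf, h1, sub_self]
    exact sub_eq_zero.mp ((hM.tf _ _ h2).resolve_left hc)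

theorem simple_one {R : Type} [Ring R] (hR : Latt R) (hs : SP R) (L : Submodule R R)
    (hL : QS R L) :
    FinIso R (fun M => Latt M ∧ QS R M ∧ ∃ x ∈ L, ∃ y : M, x • y ≠ 0) := by
  have hLl := hR.sub L
  have hnt := hL.1
  have : Nontrivial (Module.End R L) := inferInstance
  have : NoZeroDivisors (Module.End R L) := by
    refine ⟨fun {a b} hab => ?_⟩
    by_contra hcon
    push Not at hcon
    have ha := hL.eq_bot_or hLl a hcon.1
    apply hcon.2
    ext1 x
    apply ha
    rw [LinearMap.zero_apply, map_zero]
    exact LinearMap.congr_fun hab x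
  obtain ⟨N, hN, hbound⟩ := right_ideal_bound (E := Module.End R L) (hLl.hom hLl)
  let I : Submodule R R := Submodule.span R {z | ∃ l ∈ L, ∃ r, z = l * r}
  have hIr : ∀ x ∈ I, ∀ r, x * r ∈ I := by
    intro x hx r
    induction hx using Submodule.span_induction with
    | mem x hx =>
      obtain ⟨l, hl, s, rfl⟩ := hx
      exact Submodule.subset_span ⟨l, hl, s * r, by rw [mul_assoc]⟩
    | zero => rw [zero_mul]; exact I.zero_mem
    | add x y _ _ hx hy => rw [add_mul]; exact I.add_mem hx hy
    | smul a x _ hx => rw [smul_eq_mul, mul_assoc]; exact I.smul_mem a hx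
  have hLI : ∀ x ∈ L, x ∈ I := fun x hx => Submodule.subset_span ⟨x, hx, 1, by rw [mul_one]⟩
  obtain ⟨k, hk, g, hg, hIg⟩ := exists_qidem hR hs _ I le_rfl
  have := finite_between (R := R) hLl (N * k) (mul_ne_zero hN hk)
  refine FinIso.mk' (ι := {Z : Submodule R L // ∀ x, (N * k) • x ∈ Z})
    (fun Z M => Nonempty (M ≃ₗ[R] Z.1)) ?_ ?_
  swap
  · rintro Z M M' _ _ ⟨e⟩ ⟨e'⟩
    exact ⟨e.trans e'.symm⟩
  rintro M ⟨hM, hMq, x0, hx0, y0, hxy0⟩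
  -- multiplication maps
  let ρ : M → (L →ₗ[R] M) := fun y => (LinearMap.toSpanSingleton R M y).comp L.subtype
  have hρ : ∀ y (l : L), ρ y l = (l : R) • y := fun y l => rfl
  have hρ0 : ρ y0 ≠ 0 := fun h => hxy0 (by
    have := LinearMap.congr_fun h ⟨x0, hx0⟩
    exact this)
  have hρi := hL.eq_bot_or hM _ hρ0
  obtain ⟨n, hn, hnM⟩ := hMq.2 (LinearMap.range (ρ y0)) (fun h => hρ0 (LinearMap.range_eq_bot.mp h))
  obtain ⟨j, hj, -⟩ := exists_back hM _ hρi n hn hnM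
  let Φ : (L →ₗ[R] M) →+ Module.End R L := AddMonoidHom.mk' (fun φ => j ∘ₗ φ) (fun a b => by
    rw [LinearMap.comp_add])
  obtain ⟨ψ', ⟨ψ, rfl⟩, hψ0, hψ⟩ := hbound Φ.range (by
    rintro _ ⟨φ, rfl⟩ e
    exact ⟨φ ∘ₗ e, rfl⟩) ⟨Φ (ρ y0), ⟨_, rfl⟩, fun h => hρ0 (by
      ext x
      apply hj
      rw [LinearMap.zero_apply, map_zero]
      exact LinearMap.congr_fun h x)⟩
  have hψn : ψ ≠ 0 := fun h => hψ0 (by rw [h, map_zero])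
  have hψi := hL.eq_bot_or hM _ hψn
  have hNφ : ∀ (φ : L →ₗ[R] M) (l : L), N • φ l ∈ LinearMap.range ψ := by
    intro φ l
    obtain ⟨ε, hε⟩ := hψ _ ⟨φ, rfl⟩
    refine ⟨ε l, hj ?_⟩
    rw [map_zsmul]
    exact (LinearMap.congr_fun hε l).symm
  have hNI : ∀ x ∈ I, ∀ y : M, N • (x • y) ∈ LinearMap.range ψ := by
    intro x hx
    induction hx using Submodule.span_induction with
    | mem x hx =>
      obtain ⟨l, hl, s, rfl⟩ := hx
      intro y
      rw [mul_smul]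
      exact hNφ (ρ (s • y)) ⟨l, hl⟩
    | zero => intro y; rw [zero_smul, smul_zero]; exact Submodule.zero_mem _
    | add x y _ _ hx hy =>
      intro z
      rw [add_smul, smul_add]; exact Submodule.add_mem _ (hx z) (hy z)
    | smul a x _ hx =>
      intro z
      rw [smul_assoc, smul_comm]; exact Submodule.smul_mem _ a (hx z)
  let Ann : Submodule R M :=
    { carrier := {z | ∀ x ∈ I, x • z = 0}
      add_mem' := fun {a b} ha hb x hx => by rw [smul_add, ha x hx, hb x hx, add_zero]
      zero_mem' := fun x _ => smul_zero x
      smul_mem' := fun r z hz x hx => by rw [← mul_smul]; exact hz _ (hIr x hx r) }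
  have hAnn : Ann = ⊥ := by
    by_contra hcon
    obtain ⟨t, ht, h⟩ := hMq.2 Ann hcon
    have := h y0 x0 (hLI x0 hx0)
    rw [smul_comm] at this
    exact hxy0 ((hM.tf _ _ this).resolve_left ht)
  have hkg : ∀ y : M, k • y = g • y := by
    intro y
    have : k • y - g • y ∈ Ann := by
      intro x hx
      rw [smul_sub, ← mul_smul, hIg x hx, smul_comm, smul_assoc, sub_self]
    rw [hAnn, Submodule.mem_bot] at this
    exact sub_eq_zero.mp this
  have hfull : ∀ y : M, (N * k) • y ∈ LinearMap.range ψ := by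
    intro y
    rw [mul_smul, hkg]
    exact hNI g hg y
  obtain ⟨θ, hθ, hψθ⟩ := exists_back hM ψ hψi _ (mul_ne_zero hN hk) hfull
  refine ⟨⟨LinearMap.range θ, fun x => ⟨ψ x, hψi ?_⟩⟩, ⟨LinearEquiv.ofInjective θ hθ⟩⟩
  rw [hψθ, map_zsmul]

theorem simple_fin {R : Type} [Ring R] (hR : Latt R) (hs : SP R) :
    FinIso R (fun M => Latt M ∧ QS R M) := by
  let S : Set (Submodule R R) := {L | QS R L}
  let Sg := sSup S
  obtain ⟨m, hm, g, hg, h⟩ := exists_qidem hR hs _ Sg le_rfl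
  have hz : ∀ x : R, x * g = 0 → x = 0 := by
    intro x hx
    by_contra hx0
    let K : Submodule R R := LinearMap.ker (LinearMap.toSpanSingleton R R g)
    have hxK : x ∈ K := hx
    have hK : K ≠ ⊥ := fun h => hx0 (by rw [h] at hxK; exact hxK)
    obtain ⟨L, hLK, hL⟩ := exists_qs hR K hK
    have := hL.1
    apply Submodule.nontrivial_iff_ne_bot.mp hL.1
    rw [Submodule.eq_bot_iff]
    intro y hy
    have h1 : y * g = 0 := hLK hy
    have h2 := h y ((le_sSup (a := L) hL : L ≤ Sg) hy)
    rw [h1] at h2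
    exact (hR.tf _ _ h2.symm).resolve_left hm
  have hg1 : m • (1 : R) = g := by
    have : (m • (1 : R) - g) * g = 0 := by
      rw [sub_mul, h g hg, smul_mul_assoc, one_mul, sub_self]
    exact sub_eq_zero.mp (hz _ this)
  obtain ⟨s, hsS, hgs⟩ := Submodule.mem_sSup_iff_exists_finset.mp hg
  choose T hTf hTP hT using fun L : s => simple_one hR hs L (hsS L.2)
  have := fun L => (hTf L).to_subtype
  refine FinIso.mk' (ι := Σ L : s, T L) (fun i M => Nonempty (M ≃ₗ[R] i.2.1)) ?_ ?_
  swap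
  · rintro Z M M' _ _ ⟨e⟩ ⟨e'⟩
    exact ⟨e.trans e'.symm⟩
  rintro M ⟨hM, hMq⟩
  have : ∃ L ∈ s, ∃ x ∈ L, ∃ y : M, x • y ≠ 0 := by
    by_contra hcon
    push Not at hcon
    have := hMq.1
    obtain ⟨y, hy⟩ := exists_ne (0 : M)
    let K : Submodule R R := LinearMap.ker (LinearMap.toSpanSingleton R M y)
    have hle : (⨆ i ∈ s, i) ≤ K := iSup₂_le fun L hL x hx => hcon L hL x hx y
    have h1 : g • y = 0 := hle hgs
    rw [← hg1, smul_assoc, one_smul] at h1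
    exact hy ((hM.tf _ _ h1).resolve_left hm)
  obtain ⟨L, hLs, hL⟩ := this
  obtain ⟨N, hN, e⟩ := hT ⟨L, hLs⟩ M ⟨hM, hMq, hL⟩
  exact ⟨⟨⟨L, hLs⟩, ⟨N, hN⟩⟩, e⟩

theorem unif {M : Type} [AddCommGroup M] (hM : Latt M) (p : AddSubgroup M)
    (h : ∀ x, ∃ n : ℤ, n ≠ 0 ∧ n • x ∈ p) : ∃ m : ℤ, m ≠ 0 ∧ ∀ x, m • x ∈ p := by
  have := hM.fin
  let W : Submodule ℤ M := p.toIntSubmodule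
  have hfin : Finite (M ⧸ W) := by
    apply Module.finite_of_fg_torsion
    intro x
    obtain ⟨x, rfl⟩ := Submodule.Quotient.mk_surjective _ x
    obtain ⟨n, hn, hx⟩ := h x
    refine ⟨⟨n, mem_nonZeroDivisors_of_ne_zero hn⟩, ?_⟩
    change n • (Submodule.Quotient.mk x : M ⧸ W) = 0
    rw [← Submodule.Quotient.mk_smul W]
    exact (Submodule.Quotient.mk_eq_zero _).mpr hx
  refine ⟨Nat.card (M ⧸ W), by exact_mod_cast Nat.card_pos.ne', fun x => ?_⟩
  rw [natCast_zsmul]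
  have := AddSubgroup.nsmul_index_mem p x
  exact this

open TensorProduct in
theorem extend_mul {R : Type} [Ring R] (hR : Latt R) (hs : SP R) {F Y : Type} [AddCommGroup F]
    [Module R F] [AddCommGroup Y] [Module R Y] (hF : Latt F) (hY : Latt Y) (K : Submodule R F)
    (f : K →ₗ[R] Y) : ∃ m : ℤ, m ≠ 0 ∧ ∃ h : F →ₗ[R] Y, ∀ k : K, h k = m • f k := by
  have := hY.torsionFree
  have hB : Module.Baer R (Y ⊗[ℤ] ℚ) := by
    intro I g
    obtain ⟨m, hm, e, he, hI⟩ := exists_qidem hR hs _ I le_rfl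
    let D : (Y ⊗[ℤ] ℚ) →ₗ[R] (Y ⊗[ℤ] ℚ) :=
      TensorProduct.AlgebraTensorModule.map LinearMap.id
        (LinearMap.mulLeft ℤ ((m : ℚ)⁻¹))
    have hD : ∀ z, D (m • z) = z := by
      intro z
      rw [map_zsmul]
      induction z with
      | zero => simp
      | tmul y q =>
        simp only [D, TensorProduct.AlgebraTensorModule.map_tmul, LinearMap.id_apply,
          LinearMap.mulLeft_apply]
        rw [← TensorProduct.tmul_smul]
        congr 1
        have : (m : ℚ) ≠ 0 := by exact_mod_cast hm
        rw [zsmul_eq_mul]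
        field_simp
      | add a b ha hb => rw [map_add, smul_add, ha, hb]
    refine ⟨D ∘ₗ g ∘ₗ (LinearMap.toSpanSingleton R I ⟨e, he⟩), fun x hx => ?_⟩
    rw [LinearMap.comp_apply, LinearMap.comp_apply]
    have : LinearMap.toSpanSingleton R I ⟨e, he⟩ x = m • ⟨x, hx⟩ := by
      apply Subtype.ext
      exact hI x hx
    rw [this, map_zsmul, hD]
  let ι : Y →ₗ[R] (Y ⊗[ℤ] ℚ) := (TensorProduct.AlgebraTensorModule.mk ℤ R Y ℚ).flip 1
  have hι : ∀ y, ι y = y ⊗ₜ 1 := fun y => rfl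
  have hιinj : Function.Injective ι := by
    have h1 : Function.Injective (Algebra.linearMap ℤ ℚ) := by
      intro a b hab
      simpa using hab
    have h2 := Module.Flat.lTensor_preserves_injective_linearMap (M := Y) _ h1
    intro a b hab
    have : a ⊗ₜ[ℤ] (1 : ℤ) = b ⊗ₜ[ℤ] (1 : ℤ) := by
      apply h2
      simpa [hι] using hab
    have := congrArg (TensorProduct.rid ℤ Y) this
    simpa using this
  have hden : ∀ z : Y ⊗[ℤ] ℚ, ∃ n : ℤ, n ≠ 0 ∧ n • z ∈ LinearMap.range ι := by
    intro z
    induction z with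
    | zero => exact ⟨1, one_ne_zero, by simp⟩
    | tmul y q =>
      refine ⟨q.den, by exact_mod_cast q.den_nz, q.num • y, ?_⟩
      rw [hι, ← TensorProduct.tmul_smul, TensorProduct.smul_tmul]
      congr 1
      simp [Rat.den_mul_eq_num]
    | add a b ha hb =>
      obtain ⟨n, hn, h1⟩ := ha
      obtain ⟨m, hm, h2⟩ := hb
      refine ⟨n * m, mul_ne_zero hn hm, ?_⟩
      rw [smul_add, mul_smul _ _ b, mul_comm, mul_smul]
      exact Submodule.add_mem _ (zsmul_mem h1 _) (zsmul_mem h2 _)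
  obtain ⟨h', hh'⟩ := hB.extension_property K.subtype K.injective_subtype (ι ∘ₗ f)
  obtain ⟨m, hm, hmem⟩ := unif hF ((LinearMap.range ι).comap h').toAddSubgroup (fun x => by
    obtain ⟨n, hn, h1⟩ := hden (h' x)
    refine ⟨n, hn, ?_⟩
    change h' (n • x) ∈ LinearMap.range ι
    rwa [map_zsmul])
  choose g hg using hmem
  refine ⟨m, hm, { toFun := g, map_add' := fun x y => hιinj ?_, map_smul' := fun r x => hιinj ?_ },
    fun k => hιinj ?_⟩
  · rw [map_add, hg, hg, hg, smul_add, map_add]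
  · simp only [RingHom.id_apply]
    rw [map_smul, hg, hg, smul_comm, map_smul]
  · change ι (g k) = _
    rw [hg, map_zsmul, map_zsmul]
    congr 1
    exact LinearMap.congr_fun hh' k

theorem Latt.pi {R : Type} [AddCommGroup R] (hR : Latt R) (n : ℕ) : Latt (Fin n → R) := by
  have := hR.fin
  refine ⟨inferInstance, fun n x hx => ?_⟩
  by_cases hn : n = 0
  · exact Or.inl hn
  · right
    funext i
    exact (hR.tf n (x i) (congrFun hx i)).resolve_left hn

theorem ext_fin {R : Type} [Ring R] (hR : Latt R) (hs : SP R) {X Y : Type} [AddCommGroup X]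
    [Module R X] [AddCommGroup Y] [Module R Y] (hX : Latt X) (hY : Latt Y) :
    FinIso R (fun M => ∃ (i : Y →ₗ[R] M) (p : M →ₗ[R] X), Function.Injective i ∧
      Function.Surjective p ∧ LinearMap.range i = LinearMap.ker p) := by
  have hno := noeth (R := R) hX
  obtain ⟨n, π, hπ⟩ := Module.Finite.exists_fin' R X
  have hF := hR.pi n
  let K := LinearMap.ker π
  let Res : ((Fin n → R) →ₗ[R] Y) →+ (K →ₗ[R] Y) :=
    AddMonoidHom.mk' (fun h => h ∘ₗ K.subtype) (fun a b => by rw [LinearMap.add_comp])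
  let W : Submodule ℤ (K →ₗ[R] Y) := Res.range.toIntSubmodule
  have hG := (hF.sub K).hom (R := R) hY
  have := hG.fin
  have hfin : Finite ((K →ₗ[R] Y) ⧸ W) := by
    apply Module.finite_of_fg_torsion
    intro x
    obtain ⟨x, rfl⟩ := Submodule.Quotient.mk_surjective _ x
    obtain ⟨m, hm, h, hh⟩ := extend_mul hR hs hF hY K x
    refine ⟨⟨m, mem_nonZeroDivisors_of_ne_zero hm⟩, ?_⟩
    change m • (Submodule.Quotient.mk x : _ ⧸ W) = 0
    rw [← Submodule.Quotient.mk_smul W]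
    refine (Submodule.Quotient.mk_eq_zero _).mpr ⟨h, ?_⟩
    ext k
    exact hh k
  refine FinIso.mk' (ι := (K →ₗ[R] Y) ⧸ W) (fun q M => ∃ (i : Y →ₗ[R] M) (p : M →ₗ[R] X)
    (s : (Fin n → R) →ₗ[R] M) (f : K →ₗ[R] Y), Function.Injective i ∧
      Function.Surjective p ∧ LinearMap.range i = LinearMap.ker p ∧ p ∘ₗ s = π ∧
      (∀ k : K, s k = i (f k)) ∧ Submodule.Quotient.mk f = q) ?_ ?_
  · rintro M ⟨i, p, hi, hp, hip⟩
    obtain ⟨s, hs⟩ := Module.projective_lifting_property p π hp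
    have hsk : ∀ k : K, ∃ y, i y = s k := by
      intro k
      have : s k ∈ LinearMap.range i := by
        rw [hip, LinearMap.mem_ker]
        exact (LinearMap.congr_fun hs k).trans k.2
      exact this
    choose f hf using hsk
    have hadd : ∀ x y, f (x + y) = f x + f y := fun x y => hi (by
      rw [map_add, hf, hf, hf, Submodule.coe_add, map_add])
    have hsm : ∀ (r : R) x, f (r • x) = r • f x := fun r x => hi (by
      rw [map_smul, hf, hf, Submodule.coe_smul, map_smul])
    let f' : K →ₗ[R] Y := ⟨⟨f, hadd⟩, hsm⟩
    exact ⟨Submodule.Quotient.mk f', i, p, s, f', hi, hp, hip, hs, fun k => (hf k).symm, rfl⟩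
  · rintro q M M' - - ⟨i, p, s, f, hi, hp, hip, hps, hsf, hfq⟩ ⟨i', p', s', f', hi', hp', hip', hps', hsf', hfq'⟩
    obtain ⟨h, hh⟩ : ∃ h, Res h = f' - f := (Submodule.Quotient.eq W).mp (hfq'.trans hfq.symm)
    have hh' : ∀ k : K, h k = f' k - f k := fun k => LinearMap.congr_fun hh k
    have hpi' : ∀ y, p' (i' y) = 0 := fun y => by
      have : i' y ∈ LinearMap.ker p' := hip' ▸ ⟨y, rfl⟩
      exact this
    let t := s' - i' ∘ₗ h
    have ht : p' ∘ₗ t = π := by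
      refine LinearMap.ext fun x => ?_
      simp only [t, LinearMap.comp_apply, LinearMap.sub_apply, map_sub, hpi', sub_zero]
      exact LinearMap.congr_fun hps' x
    have htf : ∀ k : K, t k = i' (f k) := by
      intro k
      simp only [t, LinearMap.comp_apply, LinearMap.sub_apply, hsf', hh', map_sub]
      abel
    have key : ∀ (M : ModuleCat.{0} R) (i : Y →ₗ[R] M) (p : M →ₗ[R] X) (s : (Fin n → R) →ₗ[R] M),
        Function.Injective i → Function.Surjective p → LinearMap.range i = LinearMap.ker p →
        p ∘ₗ s = π → (∀ k : K, s k = i (f k)) →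
        Function.Surjective (i.coprod s) ∧
          ∀ z, z ∈ LinearMap.ker (i.coprod s) ↔ ∃ k : K, z.2 = k ∧ z.1 = - f k := by
      intro M i p s hi hp hip hps hsf
      have hpi : ∀ y, p (i y) = 0 := fun y => by
        have : i y ∈ LinearMap.ker p := hip ▸ ⟨y, rfl⟩
        exact this
      have hps' : ∀ v, p (s v) = π v := fun v => LinearMap.congr_fun hps v
      constructor
      · intro m
        obtain ⟨v, hv⟩ := hπ (p m)
        have : m - s v ∈ LinearMap.range i := by
          rw [hip, LinearMap.mem_ker, map_sub, hps', hv, sub_self]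
        obtain ⟨y, hy⟩ := this
        refine ⟨(y, v), ?_⟩
        rw [LinearMap.coprod_apply, hy, sub_add_cancel]
      · rintro ⟨y, v⟩
        rw [LinearMap.mem_ker, LinearMap.coprod_apply]
        constructor
        · intro h0
          have hv : v ∈ K := by
            have := congrArg p h0
            rw [map_add, hpi, zero_add, map_zero, hps'] at this
            exact this
          refine ⟨⟨v, hv⟩, rfl, hi ?_⟩
          rw [map_neg, ← hsf ⟨v, hv⟩]
          exact eq_neg_of_add_eq_zero_left h0
        · rintro ⟨k, hk1, hk2⟩
          simp only at hk1 hk2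
          rw [hk1, hk2, hsf, map_neg, neg_add_cancel]
    obtain ⟨hA, hB⟩ := key M i p s hi hp hip hps hsf
    obtain ⟨hA', hB'⟩ := key M' i' p' t hi' hp' hip' ht htf
    have hker : LinearMap.ker (i.coprod s) = LinearMap.ker (i'.coprod t) := by
      ext z
      rw [hB, hB']
    exact ⟨(LinearMap.quotKerEquivOfSurjective _ hA).symm.trans
      ((Submodule.quotEquivOfEq _ _ hker).trans (LinearMap.quotKerEquivOfSurjective _ hA'))⟩

theorem exists_quot {R : Type} [Ring R] {M : Type} [AddCommGroup M] [Module R M] [Nontrivial M]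
    (hM : Latt M) : ∃ Y : Submodule R M, Latt (M ⧸ Y) ∧ QS R (M ⧸ Y) ∧
      Module.finrank ℤ Y < Module.finrank ℤ M := by
  have hno := noeth (R := R) hM
  have hfin := hM.fin
  let S : Set (Submodule R M) := {Y | Y ≠ ⊤ ∧ ∀ (n : ℤ) x, n • x ∈ Y → n = 0 ∨ x ∈ Y}
  have hS : S.Nonempty := ⟨⊥, bot_ne_top, fun n x h => by
    rw [Submodule.mem_bot] at h ⊢
    exact hM.tf n x h⟩
  obtain ⟨Y, ⟨hY1, hY2⟩, hmax⟩ := WellFounded.has_min (wellFounded_gt (α := Submodule R M)) S hS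
  have hnt : Nontrivial (M ⧸ Y) := Submodule.Quotient.nontrivial_iff.mpr hY1
  refine ⟨Y, ⟨?_, ?_⟩, ⟨hnt, fun Z hZ => ?_⟩, ?_⟩
  · exact Module.Finite.of_surjective (Y.mkQ.toAddMonoidHom.toIntLinearMap) Y.mkQ_surjective
  · intro n x hx
    obtain ⟨x, rfl⟩ := Y.mkQ_surjective x
    rw [← map_zsmul] at hx
    have := hY2 n x ((Submodule.Quotient.mk_eq_zero Y).mp hx)
    exact this.imp_right (Submodule.Quotient.mk_eq_zero Y).mpr
  · let Z' := Z.comap Y.mkQ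
    let T : Submodule R M :=
      { carrier := {x | ∃ n : ℤ, n ≠ 0 ∧ n • x ∈ Z'}
        add_mem' := by
          rintro a b ⟨n, hn, h1⟩ ⟨m, hm, h2⟩
          refine ⟨n * m, mul_ne_zero hn hm, ?_⟩
          rw [smul_add, mul_smul _ _ b, mul_comm, mul_smul]
          exact Submodule.add_mem _ (zsmul_mem h1 _) (zsmul_mem h2 _)
        zero_mem' := ⟨1, one_ne_zero, by rw [smul_zero]; exact Z'.zero_mem⟩
        smul_mem' := by
          rintro r x ⟨n, hn, h1⟩
          refine ⟨n, hn, ?_⟩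
          rw [smul_comm]
          exact Z'.smul_mem r h1 }
    have hZT : Z' ≤ T := fun x hx => ⟨1, one_ne_zero, by rwa [one_smul]⟩
    have hYZ : Y ≤ Z' := by
      intro x hx
      change Y.mkQ x ∈ Z
      have : Y.mkQ x = 0 := (Submodule.Quotient.mk_eq_zero Y).mpr hx
      rw [this]; exact Z.zero_mem
    have hT : T = ⊤ := by
      by_contra hT
      refine hmax T ⟨hT, ?_⟩ ?_
      · rintro n x ⟨m, hm, h⟩
        by_cases hn : n = 0
        · exact Or.inl hn
        · exact Or.inr ⟨m * n, mul_ne_zero hm hn, by rwa [mul_smul]⟩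
      · refine lt_of_le_of_ne (hYZ.trans hZT) fun h => hZ ?_
        rw [Submodule.eq_bot_iff]
        intro z hz
        obtain ⟨x, rfl⟩ := Y.mkQ_surjective z
        have : x ∈ T := hZT hz
        rw [← h] at this
        exact (Submodule.Quotient.mk_eq_zero Y).mpr this
    obtain ⟨m, hm, h⟩ := unif hM Z'.toAddSubgroup (fun x => by
      have : x ∈ T := hT ▸ Submodule.mem_top
      exact this)
    refine ⟨m, hm, fun x => ?_⟩
    obtain ⟨x, rfl⟩ := Y.mkQ_surjective x
    rw [← map_zsmul]
    exact h x
  · by_contra hge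
    obtain ⟨m, hm, h⟩ := full_of_finrank hM Y.subtype.toAddMonoidHom Y.injective_subtype
      (not_lt.mp hge)
    apply hY1
    rw [eq_top_iff]
    intro x _
    obtain ⟨y, hy⟩ := h x
    refine (hY2 m x ?_).resolve_left hm
    rw [← hy]
    exact y.2

theorem JZ {R : Type} [Ring R] (hR : Latt R) (hs : SP R) (n : ℕ) :
    FinIso R (fun M => Latt M ∧ Module.finrank ℤ M ≤ n) := by
  induction n with
  | zero =>
    refine FinIso.mk' (ι := Unit) (fun _ _ => True) (fun _ _ => ⟨(), trivial⟩) ?_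
    rintro - M M' ⟨hM, h0⟩ ⟨hM', h0'⟩ - -
    have := hM.fin
    have := hM.torsionFree
    have := hM'.fin
    have := hM'.torsionFree
    have : Subsingleton M := Module.finrank_zero_iff.mp (Nat.le_zero.mp h0)
    have : Subsingleton M' := Module.finrank_zero_iff.mp (Nat.le_zero.mp h0')
    exact ⟨LinearEquiv.ofLinearMap 0 0 (Subsingleton.elim _ _) (Subsingleton.elim _ _)⟩
  | succ n ih =>
    obtain ⟨S1, hS1f, hS1P, hS1⟩ := ih
    obtain ⟨S2, hS2f, hS2P, hS2⟩ := simple_fin hR hs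
    choose T hTf hTP hT using fun (Y : S1) (X : S2) =>
      ext_fin hR hs (hS2P X X.2).1 (hS1P Y Y.2).1
    have := hS1f.to_subtype
    have := hS2f.to_subtype
    have := fun Y X => (hTf Y X).to_subtype
    refine FinIso.mk' (ι := Option (Σ (Y : S1) (X : S2), T Y X)) (fun o M => match o with
      | none => Subsingleton M
      | some i => Nonempty (M ≃ₗ[R] i.2.2.1)) ?_ ?_
    · rintro M ⟨hM, hMn⟩
      rcases subsingleton_or_nontrivial M with h | h
      · exact ⟨none, h⟩
      obtain ⟨Y, hX, hXq, hlt⟩ := exists_quot (R := R) hM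
      obtain ⟨Y0, hY0, ⟨e⟩⟩ := hS1 (ModuleCat.of R Y) ⟨hM.sub Y, by
        change Module.finrank ℤ Y ≤ n
        omega⟩
      obtain ⟨X0, hX0, ⟨e'⟩⟩ := hS2 (ModuleCat.of R (M ⧸ Y)) ⟨hX, hXq⟩
      let e1 : Y ≃ₗ[R] Y0 := e
      let e2 : (M ⧸ Y) ≃ₗ[R] X0 := e'
      obtain ⟨N, hN, eN⟩ := hT ⟨Y0, hY0⟩ ⟨X0, hX0⟩ M
        ⟨Y.subtype ∘ₗ e1.symm.toLinearMap, e2.toLinearMap ∘ₗ Y.mkQ,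
          Y.injective_subtype.comp e1.symm.injective, e2.surjective.comp Y.mkQ_surjective, by
          rw [LinearMap.range_comp_of_range_eq_top _ (LinearEquiv.range _), LinearEquiv.ker_comp,
            Submodule.range_subtype, Submodule.ker_mkQ]⟩
      exact ⟨some ⟨⟨Y0, hY0⟩, ⟨X0, hX0⟩, ⟨N, hN⟩⟩, eN⟩
    · rintro (_ | i) M M' - - h h'
      · have h1 : Subsingleton M := h
        have h2 : Subsingleton M' := h'
        exact ⟨LinearEquiv.ofLinearMap 0 0 (Subsingleton.elim _ _) (Subsingleton.elim _ _)⟩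
      · obtain ⟨e⟩ := h
        obtain ⟨e'⟩ := h'
        exact ⟨e.trans e'.symm⟩

theorem pow_le_of_sq {R : Type} [Ring R] (T J : Ideal R) (h : T * T ≤ J) (k : ℕ) :
    T ^ (2 * k) ≤ J ^ k := by
  induction k with
  | zero => rw [Nat.mul_zero, Submodule.pow_zero, Submodule.pow_zero]
  | succ k ih =>
    rw [Nat.mul_succ, show 2 * k + 2 = (2 * k + 1) + 1 from rfl, Submodule.pow_succ,
      Submodule.pow_succ, Submodule.pow_succ, Ideal.mul_assoc]
    exact Ideal.mul_mono ih h

theorem pow_smul_mem {R : Type} [Ring R] (T J : Ideal R) (m : ℤ) (h : ∀ x ∈ T, m • x ∈ J)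
    (k : ℕ) : ∀ x ∈ T ^ k, (m ^ k) • x ∈ J ^ k := by
  induction k with
  | zero =>
    intro x _
    rw [Submodule.pow_zero, Ideal.one_eq_top]
    exact Submodule.mem_top
  | succ k ih =>
    intro x hx
    rw [Submodule.pow_succ] at hx ⊢
    refine Submodule.mul_induction_on hx (fun a ha b hb => ?_) (fun a b ha hb => ?_)
    · have : (m ^ (k + 1)) • (a * b) = ((m ^ k) • a) * (m • b) := by
        rw [smul_mul_smul_comm, pow_succ]
      rw [this]
      exact Ideal.mul_mem_mul (ih a ha) (h b hb)
    · rw [smul_add]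
      exact Submodule.add_mem _ ha hb

theorem exists_J {R : Type} [Ring R] (hR : Latt R) : ∃ (J : Ideal R) (_ : J.IsTwoSided),
    (∃ n : ℕ, J ^ n = ⊥) ∧ Latt (R ⧸ J) ∧ SP (R ⧸ J) := by
  have hno := noeth (R := R) hR
  have hfin := hR.fin
  let S : Set (Ideal R) := {J | J.IsTwoSided ∧ ∃ n : ℕ, J ^ n = ⊥}
  have hS : S.Nonempty := ⟨⊥, inferInstance, 1, Submodule.pow_one _⟩
  obtain ⟨J, ⟨hJ2, n, hn⟩, hmax⟩ := WellFounded.has_min (wellFounded_gt (α := Ideal R)) S hS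
  have hmax' : ∀ T : Ideal R, T.IsTwoSided → (∃ k : ℕ, T ^ k = ⊥) → J ≤ T → T = J := by
    intro T hT hk hle
    by_contra hne
    exact hmax T ⟨hT, hk⟩ (lt_of_le_of_ne hle (Ne.symm hne))
  have htf : ∀ (k : ℤ) (x : R), k ≠ 0 → k • x ∈ J → x ∈ J := by
    let T : Ideal R :=
      { carrier := {x | ∃ n : ℤ, n ≠ 0 ∧ n • x ∈ J}
        add_mem' := by
          rintro a b ⟨n, hn, h1⟩ ⟨m, hm, h2⟩
          refine ⟨n * m, mul_ne_zero hn hm, ?_⟩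
          rw [smul_add, mul_smul _ _ b, mul_comm, mul_smul]
          exact Submodule.add_mem _ (zsmul_mem h1 _) (zsmul_mem h2 _)
        zero_mem' := ⟨1, one_ne_zero, by rw [smul_zero]; exact Submodule.zero_mem _⟩
        smul_mem' := by
          rintro r x ⟨n, hn, h1⟩
          refine ⟨n, hn, ?_⟩
          rw [smul_comm]
          exact Submodule.smul_mem _ _ h1 }
    have hT : T.IsTwoSided := ⟨by
      rintro x r ⟨n, hn, h1⟩
      refine ⟨n, hn, ?_⟩
      rw [← smul_mul_assoc]
      exact Ideal.mul_mem_right _ _ h1⟩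
    obtain ⟨m, hm, h⟩ := unif (hR.sub T) (Submodule.comap T.subtype J).toAddSubgroup (fun x => by
      obtain ⟨n, hn, h⟩ := x.2
      exact ⟨n, hn, h⟩)
    have h1 := pow_smul_mem T J m (fun x hx => h ⟨x, hx⟩) n
    have h2 : T = J := hmax' T hT ⟨n, by
      rw [eq_bot_iff]
      intro x hx
      have := h1 x hx
      rw [hn, Submodule.mem_bot] at this
      rcases hR.tf _ _ this with h3 | h3
      · exact absurd h3 (pow_ne_zero _ hm)
      · exact h3⟩ (fun x hx => ⟨1, one_ne_zero, by rwa [one_smul]⟩)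
    intro k x hk hx
    rw [← h2]
    exact ⟨k, hk, hx⟩
  refine ⟨J, hJ2, ⟨n, hn⟩, ⟨?_, ?_⟩, ?_⟩
  · exact Module.Finite.of_surjective ((Ideal.Quotient.mk J).toAddMonoidHom.toIntLinearMap)
      Ideal.Quotient.mk_surjective
  · intro k x hx
    obtain ⟨x, rfl⟩ := Ideal.Quotient.mk_surjective x
    rw [← map_zsmul, Ideal.Quotient.eq_zero_iff_mem] at hx
    by_cases hk : k = 0
    · exact Or.inl hk
    · exact Or.inr (Ideal.Quotient.eq_zero_iff_mem.mpr (htf k x hk hx))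
  · intro L hL
    let L' : Ideal R := Ideal.comap (Ideal.Quotient.mk J) L
    have hLL : L' * L' ≤ J := by
      rw [Ideal.mul_le]
      intro a ha b hb
      rw [← Ideal.Quotient.eq_zero_iff_mem, map_mul]
      exact hL _ ha _ hb
    let I : Ideal R := L' * ⊤
    have hLI : L' ≤ I := fun x hx => by
      have := Ideal.mul_mem_mul hx (Submodule.mem_top (R := R) (x := (1 : R)))
      rwa [mul_one] at this
    have hI : I.IsTwoSided := inferInstance
    have hII : I * I ≤ J := by
      change (L' * ⊤) * (L' * ⊤) ≤ J
      rw [Ideal.mul_assoc, ← Ideal.mul_assoc (I := ⊤) (J := L') (K := ⊤)]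
      calc L' * (⊤ * L' * ⊤) ≤ L' * (L' * ⊤) :=
            Ideal.mul_mono le_rfl (Ideal.mul_mono Ideal.mul_le_right le_rfl)
        _ = L' * L' * ⊤ := Ideal.mul_assoc.symm
        _ ≤ J * ⊤ := Ideal.mul_mono hLL le_rfl
        _ ≤ J := Ideal.mul_le_left
    have hTJ : I ⊔ J = J := by
      refine hmax' _ ⟨?_⟩ ⟨2 * n, ?_⟩ le_sup_right
      · intro a b hab
        obtain ⟨y, hy, z, hz, rfl⟩ := Submodule.mem_sup.mp hab
        rw [add_mul]
        exact Submodule.add_mem_sup (Ideal.mul_mem_right _ _ hy) (Ideal.mul_mem_right _ _ hz)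
      · rw [eq_bot_iff, ← hn]
        apply pow_le_of_sq
        rw [Ideal.mul_le]
        intro a ha b hb
        obtain ⟨y, hy, z, hz, rfl⟩ := Submodule.mem_sup.mp ha
        obtain ⟨y', hy', z', hz', rfl⟩ := Submodule.mem_sup.mp hb
        rw [add_mul, mul_add]
        refine Submodule.add_mem _ (Submodule.add_mem _ ?_ ?_) ?_
        · exact hII (Ideal.mul_mem_mul hy hy')
        · exact Ideal.mul_mem_left _ _ hz'
        · exact Ideal.mul_mem_right _ _ hz
    rw [eq_bot_iff]
    intro x hx
    obtain ⟨x, rfl⟩ := Ideal.Quotient.mk_surjective x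
    have h1 : x ∈ L' := hx
    have h2 : x ∈ J := hTJ ▸ (Submodule.mem_sup_left (hLI h1) : x ∈ I ⊔ J)
    rw [Submodule.mem_bot]
    exact Ideal.Quotient.eq_zero_iff_mem.mpr h2

/-- projective and cyclic -/
def CP (R : Type) [Ring R] (M : Type) [AddCommGroup M] [Module R M] : Prop :=
  Module.Projective R M ∧ ∃ m : M, Submodule.span R ({m} : Set M) = ⊤

theorem CP.split {R M : Type} [Ring R] [AddCommGroup M] [Module R M] (h : CP R M) :
    ∃ (p : R →ₗ[R] M) (i : M →ₗ[R] R), Function.Surjective p ∧ ∀ x, p (i x) = x := by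
  obtain ⟨hp, m, hm⟩ := h
  have hs : Function.Surjective (LinearMap.toSpanSingleton R M m) := by
    rw [← LinearMap.range_eq_top, LinearMap.range_toSpanSingleton, hm]
  obtain ⟨i, hi⟩ := Module.projective_lifting_property (LinearMap.toSpanSingleton R M m)
    LinearMap.id hs
  exact ⟨_, i, hs, fun x => LinearMap.congr_fun hi x⟩

theorem CP.latt {R M : Type} [Ring R] [AddCommGroup M] [Module R M] (h : CP R M) (hR : Latt R) :
    Latt M := by
  obtain ⟨p, i, hp, hi⟩ := h.split
  refine hR.of_inj i.toAddMonoidHom fun x y hxy => ?_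
  rw [← hi x, ← hi y]
  exact congrArg p hxy

theorem CP.quot {R M : Type} [Ring R] [AddCommGroup M] [Module R M] (h : CP R M) (hR : Latt R)
    (J : Ideal R) [J.IsTwoSided] (hJ : Latt (R ⧸ J)) :
    Latt (M ⧸ (J • ⊤ : Submodule R M)) ∧
      Module.finrank ℤ (M ⧸ (J • ⊤ : Submodule R M)) ≤ Module.finrank ℤ R := by
  obtain ⟨p, i, hp, hi⟩ := h.split
  have := hR.fin
  have := hR.free
  let q := (J • ⊤ : Submodule R M).mkQ ∘ₗ p
  have hq : Function.Surjective q := (Submodule.mkQ_surjective _).comp hp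
  have hiJ : ∀ x ∈ (J • ⊤ : Submodule R M), i x ∈ J := by
    intro x hx
    refine Submodule.smul_induction_on hx (fun r hr y _ => ?_) (fun a b ha hb => ?_)
    · rw [map_smul]
      exact Ideal.mul_mem_right _ _ hr
    · rw [map_add]
      exact Submodule.add_mem _ ha hb
  refine ⟨⟨Module.Finite.of_surjective q.toAddMonoidHom.toIntLinearMap hq, ?_⟩,
    LinearMap.finrank_le_finrank_of_surjective (f := q.toAddMonoidHom.toIntLinearMap) hq⟩
  intro n x hx
  obtain ⟨x, rfl⟩ := Submodule.mkQ_surjective _ x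
  rw [← map_zsmul] at hx
  have h1 := hiJ _ ((Submodule.Quotient.mk_eq_zero _).mp hx)
  rw [map_zsmul, ← Ideal.Quotient.eq_zero_iff_mem, map_zsmul] at h1
  refine (hJ.tf _ _ h1).imp_right fun h2 => (Submodule.Quotient.mk_eq_zero _).mpr ?_
  have h3 : p (i x) = i x • p 1 := by rw [← map_smul, smul_eq_mul, mul_one]
  rw [← hi x, h3]
  exact Submodule.smul_mem_smul (Ideal.Quotient.eq_zero_iff_mem.mp h2) Submodule.mem_top

theorem lift_surj {R M N : Type} [Ring R] [AddCommGroup M] [Module R M] [AddCommGroup N]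
    [Module R N] (hM : Module.Projective R M) (J : Ideal R) (n : ℕ) (hn : J ^ n = ⊥)
    (e : (M ⧸ (J • ⊤ : Submodule R M)) →ₗ[R] (N ⧸ (J • ⊤ : Submodule R N)))
    (he : Function.Surjective e) : ∃ f : M →ₗ[R] N, Function.Surjective f := by
  obtain ⟨f, hf⟩ := Module.projective_lifting_property (J • ⊤ : Submodule R N).mkQ
    (e ∘ₗ (J • ⊤ : Submodule R M).mkQ) (Submodule.mkQ_surjective _)
  refine ⟨f, ?_⟩
  have h1 : LinearMap.range f ⊔ (J • ⊤ : Submodule R N) = ⊤ := by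
    rw [eq_top_iff]
    rintro y -
    obtain ⟨z, hz⟩ := he ((J • ⊤ : Submodule R N).mkQ y)
    obtain ⟨x, rfl⟩ := Submodule.mkQ_surjective _ z
    have h2 : (J • ⊤ : Submodule R N).mkQ (f x) = (J • ⊤ : Submodule R N).mkQ y :=
      (LinearMap.congr_fun hf x).trans hz
    have h3 := (Submodule.Quotient.eq _).mp h2.symm
    exact Submodule.mem_sup.mpr ⟨f x, ⟨x, rfl⟩, _, h3, add_sub_cancel _ _⟩
  have h2 : ∀ k : ℕ, LinearMap.range f ⊔ (J ^ k • ⊤ : Submodule R N) = ⊤ := by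
    intro k
    induction k with
    | zero => rw [Submodule.pow_zero, Ideal.one_eq_top, Submodule.top_smul, sup_top_eq]
    | succ k ih =>
      have h4 : (J ^ k • ⊤ : Submodule R N) ≤
          LinearMap.range f ⊔ (J ^ (k + 1) • ⊤ : Submodule R N) := by
        have h5 : (J ^ k • ⊤ : Submodule R N) =
            J ^ k • (LinearMap.range f ⊔ (J • ⊤ : Submodule R N)) := by rw [h1]
        have h6 : (J ^ (k + 1) • ⊤ : Submodule R N) = J ^ k • (J • ⊤ : Submodule R N) := by
          rw [Submodule.pow_succ]
          exact Submodule.mul_smul _ _ _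
        rw [h5, h6, Submodule.smul_sup]
        exact sup_le_sup_right Submodule.smul_le_right _
      exact top_le_iff.mp (ih.symm.le.trans (sup_le le_sup_left h4))
  have h3 := h2 n
  rw [hn, Submodule.bot_smul, sup_bot_eq] at h3
  exact LinearMap.range_eq_top.mp h3

theorem iso_of_quot {R M N : Type} [Ring R] [AddCommGroup M] [Module R M] [AddCommGroup N]
    [Module R N] (hR : Latt R) (hM : CP R M) (hN : CP R N) (J : Ideal R) (n : ℕ) (hn : J ^ n = ⊥)
    (e : (M ⧸ (J • ⊤ : Submodule R M)) ≃ₗ[R] (N ⧸ (J • ⊤ : Submodule R N))) :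
    Nonempty (M ≃ₗ[R] N) := by
  obtain ⟨f, hf⟩ := lift_surj hM.1 J n hn e.toLinearMap e.surjective
  obtain ⟨g, hg⟩ := lift_surj hN.1 J n hn e.symm.toLinearMap e.symm.surjective
  have := noeth (R := R) (hM.latt hR)
  have h := IsNoetherian.injective_of_surjective_endomorphism (g ∘ₗ f) (hg.comp hf)
  exact ⟨LinearEquiv.ofBijective f ⟨Function.Injective.of_comp (f := g) h, hf⟩⟩

theorem main_fin {R : Type} [Ring R] (hR : Latt R) : FinIso R (fun M => CP R M) := by
  obtain ⟨J, hJ2, ⟨n, hn⟩, hJ, hs⟩ := exists_J hR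
  obtain ⟨S, hS, -, hcov⟩ := JZ hJ hs (Module.finrank ℤ R)
  have : Finite S := hS
  refine FinIso.mk' (ι := S)
    (fun X M => Nonempty ((M ⧸ (J • ⊤ : Submodule R M)) ≃ₗ[R ⧸ J] X.1)) ?_ ?_
  · intro M hM
    obtain ⟨X, hX, ⟨e⟩⟩ := hcov (ModuleCat.of (R ⧸ J) (M ⧸ (J • ⊤ : Submodule R M)))
      (hM.quot hR J hJ)
    exact ⟨⟨X, hX⟩, ⟨e⟩⟩
  · rintro X M M' hM hM' ⟨e⟩ ⟨e'⟩
    let E := e.trans e'.symm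
    refine iso_of_quot hR hM hM' J n hn { E with map_smul' := ?_ }
    intro r x
    have h := E.map_smul (Ideal.Quotient.mk J r) x
    exact h

/-- Let `A` be a unital ring which is finitely generated and torsion-free as a
`ℤ`-module.  Then there are only finitely many isomorphism classes of cyclic
projective right `A`-modules (right `A`-modules = left `Aᵐᵒᵖ`-modules). -/
theorem stmt_10 (A : Type) [Ring A] (hfg : AddGroup.FG A)
    (htf : ∀ (n : ℤ) (a : A), n • a = 0 → n = 0 ∨ a = 0) :
    ∃ (n : ℕ) (N : Fin n → ModuleCat.{0} Aᵐᵒᵖ),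
      ∀ M : ModuleCat.{0} Aᵐᵒᵖ, Module.Projective Aᵐᵒᵖ M →
        (∃ m : M, Submodule.span Aᵐᵒᵖ ({m} : Set M) = ⊤) →
        ∃ i, Nonempty (M ≅ N i) := by
  have hA : Latt A := ⟨Module.Finite.iff_addGroup_fg.mpr hfg, htf⟩
  have hR : Latt Aᵐᵒᵖ := hA.of_inj (MulOpposite.opAddEquiv (α := A)).symm.toAddMonoidHom
    (MulOpposite.opAddEquiv (α := A)).symm.injective
  obtain ⟨S, hS, -, hcov⟩ := main_fin hR
  have : Finite S := hS
  obtain ⟨n, ⟨e⟩⟩ := Finite.exists_equiv_fin S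
  refine ⟨n, fun i => (e.symm i).1, fun M h1 h2 => ?_⟩
  obtain ⟨X, hX, ⟨f⟩⟩ := hcov M ⟨h1, h2⟩
  refine ⟨e ⟨X, hX⟩, ?_⟩
  simp only [Equiv.symm_apply_apply]
  exact ⟨f.toModuleIso⟩
end

section
/- Let A be a unital ring that is finitely generated as an abelian group. Then for every n > 0 there are only finitely many isomorphism classes of right A-modules that are projective and generated by n elements. -/
namespace JZ

theorem finite_of_surj {L M : Type} [AddCommGroup L] [AddCommGroup M] [Module.Finite ℤ L]
    (f : L →+ M) (hf : Function.Surjective f) : Module.Finite ℤ M :=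
  Module.Finite.of_surjective f.toIntLinearMap hf

theorem finite_of_inj {L M : Type} [AddCommGroup L] [AddCommGroup M] [Module.Finite ℤ M]
    (f : L →+ M) (hf : Function.Injective f) : Module.Finite ℤ L :=
  Module.Finite.of_injective f.toIntLinearMap hf

theorem finite_quot {R L : Type} [Ring R] [AddCommGroup L] [Module R L] [Module.Finite ℤ L]
    (N : Submodule R L) : Module.Finite ℤ (L ⧸ N) :=
  finite_of_surj N.mkQ.toAddMonoidHom N.mkQ_surjective

theorem finite_sub {R L : Type} [Ring R] [AddCommGroup L] [Module R L] [Module.Finite ℤ L]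
    (N : Submodule R L) : Module.Finite ℤ N :=
  finite_of_inj N.subtype.toAddMonoidHom N.injective_subtype

theorem noeth {R L : Type} [Ring R] [AddCommGroup L] [Module R L] [Module.Finite ℤ L] :
    IsNoetherian R L := isNoetherian_of_tower ℤ inferInstance

theorem uniform {L : Type} [AddCommGroup L] [Module.Finite ℤ L] (N : AddSubgroup L)
    (h : ∀ x : L, ∃ q : ℤ, q ≠ 0 ∧ q • x ∈ N) : ∃ q : ℕ, q ≠ 0 ∧ ∀ x : L, q • x ∈ N := by
  classical
  obtain ⟨s, hs⟩ := Module.Finite.fg_top (R := ℤ) (M := L)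
  choose q hq hqN using h
  refine ⟨(∏ x ∈ s, q x).natAbs, ?_, ?_⟩
  · simpa [Finset.prod_eq_zero_iff] using fun x _ => hq x
  · intro x
    have key : (∏ x ∈ s, q x) • x ∈ N := by
      have hx : x ∈ Submodule.span ℤ (s : Set L) := hs ▸ Submodule.mem_top
      induction hx using Submodule.span_induction with
      | mem x hx =>
        rw [← Finset.prod_erase_mul s q hx, mul_smul]
        exact N.zsmul_mem (hqN x) _
      | zero => simp
      | add x y _ _ hx hy => rw [smul_add]; exact N.add_mem hx hy
      | smul a x _ hx => rw [smul_comm]; exact N.zsmul_mem hx _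
    rw [← natCast_zsmul, Int.natCast_natAbs]
    rcases abs_choice (∏ x ∈ s, q x) with h | h <;> rw [h]
    · exact key
    · rw [neg_smul]; exact N.neg_mem key

/-- equal rank implies torsion quotient -/
theorem tors_of_rank {L M : Type} [AddCommGroup L] [AddCommGroup M] [Module.Finite ℤ M]
    (f : L →+ M) (hf : Function.Injective f)
    (h : Module.finrank ℤ M ≤ Module.finrank ℤ L) :
    ∀ x : M, ∃ q : ℤ, q ≠ 0 ∧ q • x ∈ f.range := by
  intro x
  have h1 := Submodule.finrank_quotient_add_finrank (R := ℤ) (LinearMap.range f.toIntLinearMap)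
  have h2 := LinearMap.finrank_range_of_inj (f := f.toIntLinearMap) hf
  have h3 : Module.finrank ℤ (M ⧸ LinearMap.range f.toIntLinearMap) = 0 := by omega
  rw [Module.finrank_eq_zero_iff_isTorsion] at h3
  obtain ⟨⟨a, ha⟩, hx⟩ := @h3 (Submodule.Quotient.mk x)
  refine ⟨a, nonZeroDivisors.ne_zero ha, ?_⟩
  have hx' : (Submodule.Quotient.mk (a • x) : M ⧸ LinearMap.range f.toIntLinearMap) = 0 := hx
  rw [Submodule.Quotient.mk_eq_zero] at hx'
  obtain ⟨y, hy⟩ := hx'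
  exact ⟨y, hy⟩

theorem rank_le {L M : Type} [AddCommGroup L] [AddCommGroup M] [Module.Finite ℤ M]
    (f : L →+ M) (hf : Function.Injective f) :
    Module.finrank ℤ L ≤ Module.finrank ℤ M :=
  LinearMap.finrank_le_finrank_of_injective (f := f.toIntLinearMap) hf

structure Irr (R X : Type) [Ring R] [AddCommGroup X] [Module R X] : Prop where
  fin : Module.Finite ℤ X
  tf : ∀ (q : ℤ) (x : X), q ≠ 0 → q • x = 0 → x = 0
  ne : ∃ x : X, x ≠ 0
  irr : ∀ N : Submodule R X, N ≠ ⊥ → ∀ x, ∃ q : ℤ, q ≠ 0 ∧ q • x ∈ N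

theorem zsmul_comm' {R L : Type} [Ring R] [AddCommGroup L] [Module R L] (q : ℤ) (r : R) (x : L) :
    q • r • x = r • q • x := smul_comm q r x

/-- every non-torsion module has an irreducible quotient -/
theorem exists_irr_quot {R L : Type} [Ring R] [AddCommGroup L] [Module R L] [Module.Finite ℤ L]
    (h : ∃ x : L, ∀ q : ℤ, q ≠ 0 → q • x ≠ 0) :
    ∃ N : Submodule R L, Irr R (L ⧸ N) ∧ Module.finrank ℤ N < Module.finrank ℤ L := by
  have hN := noeth (R := R) (L := L)
  obtain ⟨N, ⟨x, hx⟩, hmax⟩ := set_has_maximal_iff_noetherian.2 hN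
    {N : Submodule R L | ∃ x : L, ∀ q : ℤ, q ≠ 0 → q • x ∉ N} ⟨⊥, by simpa using h⟩
  have hmax' : ∀ M : Submodule R L, N < M → ∀ x, ∃ q : ℤ, q ≠ 0 ∧ q • x ∈ M := by
    intro M hM x
    by_contra! hc
    exact hmax M ⟨x, hc⟩ hM
  refine ⟨N, ⟨finite_quot N, ?_, ?_, ?_⟩, ?_⟩
  · intro q y hq hy
    obtain ⟨y, rfl⟩ := N.mkQ_surjective y
    rw [← map_zsmul, Submodule.mkQ_apply, Submodule.Quotient.mk_eq_zero] at hy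
    rw [Submodule.mkQ_apply, Submodule.Quotient.mk_eq_zero]
    by_contra hyN
    have hlt : N < N ⊔ Submodule.span R {y} := by
      refine lt_of_le_of_ne le_sup_left fun he => hyN ?_
      rw [he]
      exact Submodule.mem_sup_right (Submodule.mem_span_singleton_self y)
    obtain ⟨q', hq', hm⟩ := hmax' _ hlt x
    obtain ⟨n, hn, z, hz, hnz⟩ := Submodule.mem_sup.1 hm
    obtain ⟨r, rfl⟩ := Submodule.mem_span_singleton.1 hz
    refine hx (q * q') (mul_ne_zero hq hq') ?_
    rw [mul_smul, ← hnz, smul_add, zsmul_comm']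
    exact N.add_mem (zsmul_mem hn _) (N.smul_mem _ hy)
  · refine ⟨N.mkQ x, fun h0 => hx 1 one_ne_zero ?_⟩
    rw [Submodule.mkQ_apply, Submodule.Quotient.mk_eq_zero] at h0
    simpa using h0
  · intro M hM y
    obtain ⟨y, rfl⟩ := N.mkQ_surjective y
    have hlt : N < M.comap N.mkQ := by
      refine lt_of_le_of_ne (Submodule.le_comap_mkQ N M) fun he => hM ?_
      rw [eq_bot_iff]
      intro z hz
      obtain ⟨z, rfl⟩ := N.mkQ_surjective z
      have : z ∈ M.comap N.mkQ := hz
      rw [← he] at this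
      simpa using this
    obtain ⟨q, hq, hm⟩ := hmax' _ hlt y
    exact ⟨q, hq, by simpa using hm⟩
  · by_contra! hc
    obtain ⟨q, hq, ⟨y, hy⟩⟩ := tors_of_rank N.subtype.toAddMonoidHom N.injective_subtype hc x
    refine hx q hq ?_
    rw [← hy]
    exact y.2

/-- nonzero maps from irreducible to torsion free are injective -/
theorem Irr.inj {R X Y : Type} [Ring R] [AddCommGroup X] [Module R X] [AddCommGroup Y] [Module R Y]
    (hX : Irr R X) (hY : ∀ (q : ℤ) (x : Y), q ≠ 0 → q • x = 0 → x = 0) (f : X →ₗ[R] Y)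
    (hf : f ≠ 0) : Function.Injective f := by
  rw [← LinearMap.ker_eq_bot]
  by_contra hk
  apply hf
  ext x
  obtain ⟨q, hq, hm⟩ := hX.irr _ hk x
  rw [LinearMap.mem_ker, map_zsmul] at hm
  exact hY q _ hq hm

/-- the "radical" -/
def radI (R : Type) [Ring R] : Ideal R where
  carrier := {a | ∀ (X : Type) [AddCommGroup X] [Module R X], Irr R X → ∀ x : X, a • x = 0}
  zero_mem' := by intro X _ _ _ x; simp
  add_mem' := by intro a b ha hb X _ _ h x; rw [add_smul, ha X h, hb X h, add_zero]
  smul_mem' := by intro a b hb X _ _ h x; rw [smul_eq_mul, mul_smul, hb X h, smul_zero]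

theorem mem_radI {R : Type} [Ring R] {a : R} : a ∈ radI R ↔
  ∀ (X : Type) [AddCommGroup X] [Module R X], Irr R X → ∀ x : X, a • x = 0 := Iff.rfl

theorem rad_mul {R : Type} [Ring R] {a : R} (ha : a ∈ radI R) (b : R) : a * b ∈ radI R := by
  intro X _ _ h x; rw [mul_smul, ha X h]

theorem rad_tf {R : Type} [Ring R] {a : R} {q : ℤ} (hq : q ≠ 0) (ha : q • a ∈ radI R) :
    a ∈ radI R := by
  intro X _ _ h x
  have := ha X h x
  rw [smul_assoc] at this
  exact h.tf q _ hq this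

theorem rad_pow_tors (R : Type) [Ring R] (r : ℕ) : ∀ (L : Type) [AddCommGroup L] [Module R L]
    [Module.Finite ℤ L], Module.finrank ℤ L ≤ r → ∀ a ∈ radI R ^ r, ∀ x : L,
      ∃ q : ℤ, q ≠ 0 ∧ q • a • x = 0 := by
  induction r with
  | zero =>
    intro L _ _ _ hL a _ x
    by_contra! hc
    obtain ⟨N, -, hN⟩ := exists_irr_quot (R := R) ⟨a • x, hc⟩
    omega
  | succ r ih =>
    intro L _ _ _ hL a ha x
    by_cases h : ∃ x : L, ∀ q : ℤ, q ≠ 0 → q • x ≠ 0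
    swap
    · push Not at h
      exact h _
    obtain ⟨N, hirr, hN⟩ := exists_irr_quot (R := R) h
    have := finite_sub N
    rw [Submodule.pow_succ] at ha
    refine Submodule.smul_induction_on (p := fun a => ∃ q : ℤ, q ≠ 0 ∧ q • a • x = 0) ha ?_ ?_
    · intro b hb c hc
      have hcx : c • x ∈ N := by
        have := hc _ hirr (N.mkQ x)
        rw [← map_smul] at this
        exact (Submodule.Quotient.mk_eq_zero N).1 this
      obtain ⟨q, hq, h0⟩ := ih N (by omega) b hb ⟨c • x, hcx⟩
      refine ⟨q, hq, ?_⟩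
      rw [smul_eq_mul, mul_smul]
      exact congrArg Subtype.val h0
    · rintro a b ⟨q, hq, h1⟩ ⟨q', hq', h2⟩
      refine ⟨q * q', mul_ne_zero hq hq', ?_⟩
      rw [add_smul, smul_add, mul_smul q q' (b • x), h2, mul_comm, mul_smul, h1]
      simp

theorem exists_m (R : Type) [Ring R] [Module.Finite ℤ R] :
    ∃ m k : ℕ, m ≠ 0 ∧ ∀ a ∈ radI R ^ k, m • a = 0 := by
  have := finite_sub (radI R ^ Module.finrank ℤ R)
  obtain ⟨m, hm, h⟩ := uniform (L := ↥(radI R ^ Module.finrank ℤ R)) ⊥ (by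
    rintro ⟨a, ha⟩
    obtain ⟨q, hq, h⟩ := rad_pow_tors R _ R le_rfl a ha 1
    refine ⟨q, hq, ?_⟩
    rw [AddSubgroup.mem_bot]
    apply Subtype.ext
    simpa using h)
  refine ⟨m, Module.finrank ℤ R, hm, fun a ha => ?_⟩
  have := h ⟨a, ha⟩
  rw [AddSubgroup.mem_bot] at this
  exact congrArg Subtype.val this

theorem soc_tors {R M : Type} [Ring R] [AddCommGroup M] [Module R M] [Module.Finite ℤ M]
    (htf : ∀ (q : ℤ) (x : M), q ≠ 0 → q • x = 0 → x = 0)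
    (hX : ∀ x : M, x ≠ 0 → ∃ (X : Type) (_ : AddCommGroup X) (_ : Module R X) (_ : Irr R X)
      (g : M →ₗ[R] X), g x ≠ 0) (r : ℕ) :
    ∀ K : Submodule R M, Module.finrank ℤ K ≤ r → ∀ x ∈ K, ∃ q : ℤ, q ≠ 0 ∧
      q • x ∈ sSup {S : Submodule R M | Irr R S} := by
  induction r using Nat.strong_induction_on with
  | _ r ih =>
  intro K hK x hx
  by_cases hK0 : K = ⊥
  · subst hK0
    rw [Submodule.mem_bot] at hx
    exact ⟨1, one_ne_zero, by simp [hx]⟩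
  obtain ⟨S, ⟨hSK, hS0⟩, hmin⟩ := WellFounded.has_min
    (InvImage.wf (fun S : Submodule R M => Module.finrank ℤ S) Nat.lt_wfRel.wf)
    {S : Submodule R M | S ≤ K ∧ S ≠ ⊥} ⟨K, le_rfl, hK0⟩
  have hSf := finite_sub S
  obtain ⟨s0, hs0, hs0'⟩ := S.ne_bot_iff.1 hS0
  have hS : Irr R S := by
    refine ⟨hSf, ?_, ⟨⟨s0, hs0⟩, by simpa using hs0'⟩, ?_⟩
    · intro q y hq hy
      apply Subtype.ext
      exact htf q y hq (congrArg Subtype.val hy)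
    · intro N hN
      have h1 := hmin (N.map S.subtype) ⟨(Submodule.map_subtype_le S N).trans hSK, by
        intro h0
        apply hN
        rw [eq_bot_iff]
        intro z hz
        have : S.subtype z ∈ N.map S.subtype := Submodule.mem_map_of_mem hz
        rw [h0, Submodule.mem_bot] at this
        exact Subtype.ext this⟩
      have h2 : ¬ (Module.finrank ℤ (N.map S.subtype) < Module.finrank ℤ S) := h1
      have e := Submodule.equivMapOfInjective S.subtype S.injective_subtype N
      have := finite_sub N
      have h3 := rank_le e.symm.toLinearMap.toAddMonoidHom e.symm.injective
      intro y
      obtain ⟨q, hq, ⟨z, hz⟩⟩ := tors_of_rank N.subtype.toAddMonoidHom N.injective_subtype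
        (by omega) y
      exact ⟨q, hq, hz ▸ z.2⟩
  obtain ⟨X, _, _, hXi, g, hg⟩ := hX s0 hs0'
  have hgi : Function.Injective (g ∘ₗ S.subtype) := hS.inj hXi.tf _ (fun h0 => hg (by
    simpa using congrArg (fun f => f ⟨s0, hs0⟩) h0))
  have hKf := finite_sub K
  have hlt : Module.finrank ℤ ↥(K ⊓ LinearMap.ker g) < Module.finrank ℤ K := by
    by_contra! hc
    obtain ⟨q, hq, ⟨y, hy⟩⟩ := tors_of_rank
      (Submodule.inclusion (inf_le_left : K ⊓ LinearMap.ker g ≤ K)).toAddMonoidHom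
      (Submodule.inclusion_injective inf_le_left) hc ⟨s0, hSK hs0⟩
    have hy' : (y : M) = q • s0 := congrArg Subtype.val hy
    have h4 : g y = 0 := y.2.2
    rw [hy', map_zsmul] at h4
    exact hg (hXi.tf q _ hq h4)
  obtain ⟨q, hq, ⟨s, hs⟩⟩ := hXi.irr (LinearMap.range (g ∘ₗ S.subtype)) (by
    rw [Submodule.ne_bot_iff]
    exact ⟨g s0, ⟨⟨s0, hs0⟩, rfl⟩, hg⟩) (g x)
  have hs' : g (s : M) = q • g x := hs
  obtain ⟨q', hq', hm⟩ := ih _ (lt_of_lt_of_le hlt hK) (K ⊓ LinearMap.ker g) le_rfl (q • x - s)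
    ⟨K.sub_mem (zsmul_mem hx _) (hSK s.2), by
      change g _ = 0
      rw [map_sub, map_zsmul, hs', sub_self]⟩
  refine ⟨q' * q, mul_ne_zero hq' hq, ?_⟩
  have h5 : (q' * q) • x = q' • (q • x - s) + q' • (s : M) := by
    rw [smul_sub, sub_add_cancel, mul_smul]
  rw [h5]
  exact Submodule.add_mem _ hm (zsmul_mem (le_sSup (a := S) hS s.2) _)

theorem index_ne {L : Type} [AddCommGroup L] [Module.Finite ℤ L] (N : AddSubgroup L)
    (h : ∀ x : L, ∃ q : ℤ, q ≠ 0 ∧ q • x ∈ N) : N.index ≠ 0 := by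
  have h1 : Module.Finite ℤ (L ⧸ N) :=
    finite_of_surj (QuotientAddGroup.mk' N) (QuotientAddGroup.mk'_surjective N)
  have h2 : Finite (L ⧸ N) := by
    refine Module.finite_of_fg_torsion _ ?_
    intro y
    obtain ⟨y, rfl⟩ := QuotientAddGroup.mk'_surjective N y
    obtain ⟨q, hq, hm⟩ := h y
    refine ⟨⟨q, mem_nonZeroDivisors_of_ne_zero hq⟩, ?_⟩
    change q • (QuotientAddGroup.mk' N y) = 0
    rw [← map_zsmul]
    exact (QuotientAddGroup.eq_zero_iff _).2 hm
  exact AddSubgroup.index_ne_zero_of_finite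

theorem short {S : Type} [AddCommGroup S] {d : ℕ} (b : Module.Basis (Fin d) ℤ S) (hd : 0 < d)
    (N : AddSubgroup S) (hN : N.index ≠ 0) :
    ∃ m : ℕ, m ^ d ≤ N.index ∧ ∃ v ∈ N, v ≠ 0 ∧ ∀ i, |b.repr v i| ≤ m := by
  obtain ⟨m, hm1, hm2⟩ : ∃ m : ℕ, m ^ d ≤ N.index ∧ N.index < (m + 1) ^ d := by
    refine ⟨Nat.findGreatest (fun m => m ^ d ≤ N.index) N.index, ?_, ?_⟩
    · exact Nat.findGreatest_spec (P := fun m => m ^ d ≤ N.index) (Nat.zero_le _)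
        (by simp [hd.ne'])
    · by_contra! hc
      have h1 : Nat.findGreatest (fun m => m ^ d ≤ N.index) N.index + 1 ≤ N.index :=
        (Nat.le_self_pow hd.ne' _).trans hc
      have := Nat.le_findGreatest (P := fun m => m ^ d ≤ N.index) h1 hc
      omega
  refine ⟨m, hm1, ?_⟩
  have hfin : Finite (S ⧸ N) := by
    have : N.FiniteIndex := ⟨hN⟩
    exact AddSubgroup.finite_quotient_of_finiteIndex
  have := Fintype.ofFinite (S ⧸ N)
  let f : (Fin d → Fin (m + 1)) → S ⧸ N :=
    fun a => QuotientAddGroup.mk' N (∑ i, ((a i : ℕ) : ℤ) • b i)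
  obtain ⟨a, a', hne, he⟩ := Fintype.exists_ne_map_eq_of_card_lt f (by
    have h7 : Fintype.card (S ⧸ N) = N.index := Nat.card_eq_fintype_card.symm
    rw [h7]
    simpa using hm2)
  have hrep : ∀ i, b.repr (∑ i, ((a i : ℕ) : ℤ) • b i - ∑ i, ((a' i : ℕ) : ℤ) • b i) i =
      ((a i : ℕ) : ℤ) - ((a' i : ℕ) : ℤ) := by
    intro i
    rw [map_sub, Finsupp.sub_apply, Module.Basis.repr_sum_self, Module.Basis.repr_sum_self]
  refine ⟨∑ i, ((a i : ℕ) : ℤ) • b i - ∑ i, ((a' i : ℕ) : ℤ) • b i, ?_, ?_, ?_⟩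
  · have : f a - f a' = 0 := by rw [he, sub_self]
    simp only [f] at this
    rw [← map_sub] at this
    exact (QuotientAddGroup.eq_zero_iff _).1 this
  · intro h0
    apply hne
    funext i
    have := hrep i
    rw [h0] at this
    simp at this
    apply Fin.ext
    omega
  · intro i
    rw [hrep, abs_le]
    have := (a i).2
    have := (a' i).2
    constructor <;> omega

theorem det_bound {S S' : Type} [AddCommGroup S] [AddCommGroup S'] {d : ℕ}
    (b : Module.Basis (Fin d) ℤ S) (b' : Module.Basis (Fin d) ℤ S') (β : S →+ S' →+ S) :
    ∃ C : ℕ, C ≠ 0 ∧ ∀ N : AddSubgroup S, N.index ≠ 0 → ∀ m : ℕ, m ^ d ≤ N.index → ∀ v,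
      (∀ i, |b.repr v i| ≤ m) → Function.Injective (β v) → (∀ s, β v s ∈ N) →
      ∀ x ∈ N, C • x ∈ (β v).range := by
  let C0 : ℤ := ∑ i, ∑ j, ∑ k, |b.repr (β (b k) (b' j)) i|
  have hC0 : 0 ≤ C0 := by positivity
  refine ⟨(d.factorial * C0.natAbs ^ d).factorial, Nat.factorial_ne_zero _, ?_⟩
  intro N hN m hm v hv hinj hrange x hx
  have hfS : Module.Finite ℤ S := Module.Finite.of_basis b
  have hle : (β v).range ≤ N := by rintro _ ⟨s, rfl⟩; exact hrange s
  have hri : (β v).range.index ≠ 0 := by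
    refine index_ne _ (tors_of_rank (β v) hinj ?_)
    rw [Module.finrank_eq_card_basis b, Module.finrank_eq_card_basis b']
  let e : S' ≃+ (β v).range := AddMonoidHom.ofInjective hinj
  have hidx := AddSubgroup.index_eq_natAbs_det b (β v).range (b'.map e.toIntLinearEquiv)
  have hentry : ∀ i j, |b.repr (β v (b' j)) i| ≤ (m : ℤ) * C0 := by
    intro i j
    have h1 : b.repr (β v (b' j)) i = ∑ k, b.repr v k * b.repr (β (b k) (b' j)) i := by
      have h0 : β v (b' j) = ∑ k, b.repr v k • β (b k) (b' j) := by
        conv_lhs => rw [← b.sum_repr v]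
        rw [map_sum, AddMonoidHom.finsetSum_apply]
        simp only [map_zsmul]
        rfl
      rw [h0, map_sum, Finsupp.finsetSum_apply]
      simp
    rw [h1]
    calc _ ≤ ∑ k, |b.repr v k * b.repr (β (b k) (b' j)) i| := Finset.abs_sum_le_sum_abs _ _
      _ ≤ ∑ k, (m : ℤ) * |b.repr (β (b k) (b' j)) i| := by
        refine Finset.sum_le_sum fun k _ => ?_
        rw [abs_mul]
        exact mul_le_mul_of_nonneg_right (hv k) (abs_nonneg _)
      _ = m * ∑ k, |b.repr (β (b k) (b' j)) i| := by rw [Finset.mul_sum]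
      _ ≤ m * C0 := by
        refine mul_le_mul_of_nonneg_left ?_ (by positivity)
        calc _ ≤ ∑ j, ∑ k, |b.repr (β (b k) (b' j)) i| :=
              Finset.single_le_sum (f := fun j => ∑ k, |b.repr (β (b k) (b' j)) i|)
                (fun _ _ => by positivity) (Finset.mem_univ j)
          _ ≤ C0 := Finset.single_le_sum (f := fun i => ∑ j, ∑ k, |b.repr (β (b k) (b' j)) i|)
                (fun _ _ => by positivity) (Finset.mem_univ i)
  have hdet : ((β v).range.index : ℤ) ≤ d.factorial * (m * C0) ^ d := by
    rw [hidx, Module.Basis.det_apply, Int.natCast_natAbs]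
    have := Matrix.det_le (abv := AbsoluteValue.abs) (x := (m : ℤ) * C0)
      (A := b.toMatrix fun j => ((b'.map e.toIntLinearEquiv) j : S)) (fun i j => by
        exact hentry i j)
    simpa using this
  have hdet' : (β v).range.index ≤ (d.factorial * C0.natAbs ^ d) * N.index := by
    zify
    rw [abs_of_nonneg hC0]
    calc _ ≤ _ := hdet
      _ = d.factorial * C0 ^ d * ((m ^ d : ℕ) : ℤ) := by push_cast; ring
      _ ≤ _ := mul_le_mul_of_nonneg_left (by exact_mod_cast hm) (by positivity)
  have hmul := AddSubgroup.relIndex_mul_index hle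
  have hrel : (β v).range.relIndex N ≤ d.factorial * C0.natAbs ^ d := by
    rw [← hmul] at hdet'
    exact Nat.le_of_mul_le_mul_right hdet' (Nat.pos_of_ne_zero hN)
  have hrel0 : 0 < (β v).range.relIndex N := by
    rw [Nat.pos_iff_ne_zero]; intro h0; rw [h0, zero_mul] at hmul; exact hri hmul.symm
  obtain ⟨c, hc⟩ := Nat.dvd_factorial hrel0 hrel
  have hmem := AddSubgroup.nsmul_index_mem ((β v).range.addSubgroupOf N) ⟨x, hx⟩
  have hmem' : (β v).range.relIndex N • x ∈ (β v).range := by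
    exact hmem
  rw [hc, mul_comm, mul_smul]
  exact AddSubgroup.nsmul_mem _ hmem' _

/-- action of `R / rad` on elements of a module killed by `rad` -/
noncomputable def act {R L : Type} [Ring R] [AddCommGroup L] [Module R L]
    (hL : ∀ a ∈ radI R, ∀ x : L, a • x = 0) (x : L) : (R ⧸ radI R) →ₗ[R] L :=
  Submodule.liftQ (radI R) (LinearMap.toSpanSingleton R L x) (fun a ha => by
    rw [LinearMap.mem_ker, LinearMap.toSpanSingleton_apply]; exact hL a ha x)

theorem act_mk {R L : Type} [Ring R] [AddCommGroup L] [Module R L]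
    (hL : ∀ a ∈ radI R, ∀ x : L, a • x = 0) (x : L) (a : R) :
    act hL x (Submodule.mkQ (radI R) a) = a • x := rfl

theorem act_add {R L : Type} [Ring R] [AddCommGroup L] [Module R L]
    (hL : ∀ a ∈ radI R, ∀ x : L, a • x = 0) (x y : L) (s : R ⧸ radI R) :
    act hL (x + y) s = act hL x s + act hL y s := by
  obtain ⟨a, rfl⟩ := Submodule.mkQ_surjective (radI R) s
  simp only [act_mk, smul_add]

theorem act_map {R L M : Type} [Ring R] [AddCommGroup L] [Module R L] [AddCommGroup M] [Module R M]
    (hL : ∀ a ∈ radI R, ∀ x : L, a • x = 0) (hM : ∀ a ∈ radI R, ∀ x : M, a • x = 0)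
    (f : L →ₗ[R] M) (x : L) (s : R ⧸ radI R) :
    f (act hL x s) = act hM (f x) s := by
  obtain ⟨a, rfl⟩ := Submodule.mkQ_surjective (radI R) s
  simp only [act_mk, map_smul]

theorem Irr.kill {R X : Type} [Ring R] [AddCommGroup X] [Module R X] (hX : Irr R X) :
    ∀ a ∈ radI R, ∀ x : X, a • x = 0 := fun _ ha => ha X hX

theorem exists_soc (R : Type) [Ring R] [Module.Finite ℤ R] :
    ∃ t : Finset (Submodule R (R ⧸ radI R)), (∀ S ∈ t, Irr R S) ∧
      ∀ x : R ⧸ radI R, ∃ q : ℤ, q ≠ 0 ∧ q • x ∈ t.sup id := by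
  have hf : Module.Finite ℤ (R ⧸ radI R) := finite_quot (L := R) (radI R)
  have hn : IsNoetherian R (R ⧸ radI R) := noeth
  obtain ⟨t, ht, hsup⟩ := CompleteLattice.WellFoundedGT.isSupFiniteCompact
    (Submodule R (R ⧸ radI R)) {S | Irr R S}
  refine ⟨t, fun S hS => ht hS, fun x => ?_⟩
  rw [← hsup]
  refine soc_tors ?_ ?_ _ ⊤ le_rfl x Submodule.mem_top
  · intro q x hq hx
    obtain ⟨a, rfl⟩ := Submodule.mkQ_surjective (radI R) x
    rw [← map_zsmul] at hx
    exact (Submodule.Quotient.mk_eq_zero (radI R)).2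
      (rad_tf hq ((Submodule.Quotient.mk_eq_zero (radI R)).1 hx))
  · intro x hx
    obtain ⟨a, rfl⟩ := Submodule.mkQ_surjective (radI R) x
    have ha : a ∉ radI R := fun ha => hx ((Submodule.Quotient.mk_eq_zero (radI R)).2 ha)
    rw [mem_radI] at ha
    push Not at ha
    obtain ⟨X, _, _, hX, x, hx⟩ := ha
    exact ⟨X, _, _, hX, act hX.kill x, hx⟩

theorem exists_inj {R : Type} [Ring R] {t : Finset (Submodule R (R ⧸ radI R))}
    (ht : ∀ S ∈ t, Irr R S) (ht2 : ∀ x : R ⧸ radI R, ∃ q : ℤ, q ≠ 0 ∧ q • x ∈ t.sup id)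
    {X : Type} [AddCommGroup X] [Module R X] (hX : Irr R X) (x : X) (hx : x ≠ 0) :
    ∃ S ∈ t, Function.Injective (act hX.kill x ∘ₗ S.subtype) := by
  by_contra! hc
  have h1 : ∀ S ∈ t, S ≤ LinearMap.ker (act hX.kill x) := by
    intro S hS s hs
    by_contra h0
    refine hc S hS ((ht S hS).inj hX.tf _ fun h => h0 ?_)
    exact congrArg (fun f => f ⟨s, hs⟩) h
  have h2 : t.sup id ≤ LinearMap.ker (act hX.kill x) := Finset.sup_le h1
  obtain ⟨q, hq, hm⟩ := ht2 (Submodule.mkQ (radI R) 1)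
  have h3 := h2 hm
  rw [LinearMap.mem_ker, map_zsmul, act_mk, one_smul] at h3
  exact hx (hX.tf q _ hq h3)

/-- the division-by-image construction -/
theorem exists_back {R X Y : Type} [Ring R] [AddCommGroup X] [Module R X] [AddCommGroup Y]
    [Module R Y] (hY : ∀ (q : ℤ) (x : Y), q ≠ 0 → q • x = 0 → x = 0) (f : X →ₗ[R] Y)
    (hf : Function.Injective f)
    (q : ℕ) (hq : q ≠ 0) (h : ∀ y : Y, q • y ∈ LinearMap.range f) :
    ∃ g : Y →ₗ[R] X, Function.Injective g ∧ ∀ y, f (g y) = q • y := by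
  choose g hg using h
  refine ⟨⟨⟨g, ?_⟩, ?_⟩, ?_, hg⟩
  · intro x y
    apply hf
    rw [map_add, hg, hg, hg, smul_add]
  · intro r x
    apply hf
    rw [map_smul, hg, hg]
    exact smul_comm q r x
  · intro x y hxy
    have h1 : f (g x) = f (g y) := congrArg f hxy
    rw [hg, hg, ← sub_eq_zero, ← smul_sub, ← natCast_zsmul] at h1
    exact sub_eq_zero.1 (hY q _ (by exact_mod_cast hq) h1)

theorem Irr.range_tors {R X Y : Type} [Ring R] [AddCommGroup X] [Module R X] [AddCommGroup Y]
    [Module R Y] (hX : Irr R X) (hY : Irr R Y) (f : X →ₗ[R] Y) (hf : Function.Injective f) :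
    ∀ y : Y, ∃ q : ℤ, q ≠ 0 ∧ q • y ∈ LinearMap.range f := by
  refine hY.irr _ ?_
  obtain ⟨x, hx⟩ := hX.ne
  rw [Submodule.ne_bot_iff]
  exact ⟨f x, ⟨x, rfl⟩, fun h => hx (hf (by rw [h, map_zero]))⟩

theorem Irr.back {R X Y : Type} [Ring R] [AddCommGroup X] [Module R X] [AddCommGroup Y]
    [Module R Y] (hX : Irr R X) (hY : Irr R Y) (f : X →ₗ[R] Y) (hf : Function.Injective f) :
    ∃ g : Y →ₗ[R] X, Function.Injective g := by
  have := hY.fin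
  obtain ⟨q, hq, h⟩ := uniform (LinearMap.range f).toAddSubgroup (hX.range_tors hY f hf)
  obtain ⟨g, hg, -⟩ := exists_back hY.tf f hf q hq h
  exact ⟨g, hg⟩

theorem Irr.basis {R X : Type} [Ring R] [AddCommGroup X] [Module R X] (hX : Irr R X) :
    Nonempty (Module.Basis (Fin (Module.finrank ℤ X)) ℤ X) := by
  have := hX.fin
  have : Module.IsTorsionFree ℤ X := by
    refine Module.IsTorsionFree.mk fun q hq x y hxy => ?_
    rw [← sub_eq_zero]
    refine hX.tf q _ hq.ne_zero ?_
    have : q • x = q • y := hxy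
    rw [smul_sub, this, sub_self]
  have : Module.Free ℤ X := Module.free_of_finite_type_torsion_free'
  exact ⟨Module.finBasis ℤ X⟩

theorem base {R : Type} [Ring R] {t : Finset (Submodule R (R ⧸ radI R))}
    (ht : ∀ S ∈ t, Irr R S) (ht2 : ∀ x : R ⧸ radI R, ∃ q : ℤ, q ≠ 0 ∧ q • x ∈ t.sup id) :
    ∃ q : ℕ, q ≠ 0 ∧ ∀ (X : Type) [AddCommGroup X] [Module R X] (hX : Irr R X),
      ∃ S ∈ t, ∃ x : X, Function.Injective (act hX.kill x ∘ₗ S.subtype) ∧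
        ∀ y : X, q • y ∈ LinearMap.range (act hX.kill x ∘ₗ S.subtype) := by
  have hb : ∀ S : t, Nonempty (Module.Basis (Fin (Module.finrank ℤ S)) ℤ S) :=
    fun S => (ht S S.2).basis
  let b := fun S : t => (hb S).some
  let β : ∀ S S' : t, S →+ S' →+ S := fun S S' => AddMonoidHom.mk' (fun v =>
    (act (ht S S.2).kill v ∘ₗ (S' : Submodule R (R ⧸ radI R)).subtype).toAddMonoidHom) (by
      intro v w
      ext s
      exact congrArg Subtype.val (act_add (ht S S.2).kill v w s))
  have hC : ∀ S S' : t, ∃ C : ℕ, C ≠ 0 ∧ (Module.finrank ℤ S' = Module.finrank ℤ S →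
      ∀ N : AddSubgroup S, N.index ≠ 0 → ∀ m : ℕ, m ^ (Module.finrank ℤ S) ≤ N.index → ∀ v,
      (∀ i, |(b S).repr v i| ≤ m) → Function.Injective (β S S' v) → (∀ s, β S S' v s ∈ N) →
      ∀ x ∈ N, C • x ∈ (β S S' v).range) := by
    intro S S'
    by_cases he : Module.finrank ℤ S' = Module.finrank ℤ S
    · obtain ⟨C, hC, h⟩ := det_bound (b S) ((b S').reindex (finCongr he)) (β S S')
      exact ⟨C, hC, fun _ => h⟩
    · exact ⟨1, one_ne_zero, fun h => absurd h he⟩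
  choose C hC0 hC using hC
  refine ⟨∏ S, ∏ S', C S S', ?_, ?_⟩
  · rw [Finset.prod_ne_zero_iff]
    intro S _
    rw [Finset.prod_ne_zero_iff]
    exact fun S' _ => hC0 S S'
  intro X _ _ hX
  have hXf := hX.fin
  obtain ⟨x1, hx1⟩ := hX.ne
  obtain ⟨S, hS, hinj⟩ := exists_inj ht ht2 hX x1 hx1
  have hSi := ht S hS
  have hSf := hSi.fin
  obtain ⟨ψ, hψ⟩ := hSi.back hX _ hinj
  have hN := index_ne (LinearMap.range ψ).toAddSubgroup (hX.range_tors hSi ψ hψ)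
  obtain ⟨s0, hs0⟩ := hSi.ne
  have hd : 0 < Module.finrank ℤ S := by
    obtain ⟨N, -, h⟩ := exists_irr_quot (R := R) (L := S) ⟨s0, fun q hq h => hs0 (hSi.tf q _ hq h)⟩
    omega
  obtain ⟨m, hm, v, ⟨x, rfl⟩, hv0, hv⟩ := short (b ⟨S, hS⟩) hd _ hN
  obtain ⟨S', hS', hinj'⟩ := exists_inj ht ht2 hSi _ hv0
  have hSi' := ht S' hS'
  have hSf' := hSi'.fin
  have hcomp : ∀ s : S', ψ (act hX.kill x s) = act hSi.kill (ψ x) s := fun s =>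
    act_map hX.kill hSi.kill ψ x s
  obtain ⟨g, hg⟩ := hSi'.back hSi _ hinj'
  have hrk : Module.finrank ℤ S' = Module.finrank ℤ S :=
    le_antisymm (rank_le (act hSi.kill (ψ x) ∘ₗ S'.subtype).toAddMonoidHom hinj')
      (rank_le g.toAddMonoidHom hg)
  have key := hC ⟨S, hS⟩ ⟨S', hS'⟩ hrk _ hN m hm (ψ x) hv hinj'
    (fun s => ⟨act hX.kill x s, hcomp s⟩)
  refine ⟨S', hS', x, ?_, ?_⟩
  · intro s s' hss
    apply hinj'
    have : ψ (act hX.kill x s) = ψ (act hX.kill x s') := congrArg ψ hss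
    rw [hcomp, hcomp] at this
    exact this
  · intro y
    obtain ⟨s, hs⟩ := key (ψ y) ⟨y, rfl⟩
    have hs' : act hSi.kill (ψ x) s = C ⟨S, hS⟩ ⟨S', hS'⟩ • ψ y := hs
    rw [← hcomp, ← map_nsmul] at hs'
    have h1 : C ⟨S, hS⟩ ⟨S', hS'⟩ ∣ ∏ S, ∏ S', C S S' :=
      (Finset.dvd_prod_of_mem (fun S' => C ⟨S, hS⟩ S') (Finset.mem_univ _)).trans
        (Finset.dvd_prod_of_mem (fun S => ∏ S', C S S') (Finset.mem_univ _))
    obtain ⟨c, hc⟩ := h1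
    rw [hc, mul_comm, mul_smul]
    refine nsmul_mem (?_ : _ ∈ LinearMap.range (act hX.kill x ∘ₗ S'.subtype)) c
    exact ⟨s, hψ hs'⟩

theorem jz (R : Type) [Ring R] [Module.Finite ℤ R] (r : ℕ) :
    ∃ (ι : Type) (_ : Finite ι) (F : ι → ModuleCat.{0} R) (q : ℕ), q ≠ 0 ∧
      (∀ i, Module.Finite ℤ (F i)) ∧
      ∀ (L : Type) [AddCommGroup L] [Module R L] [Module.Finite ℤ L],
        (∀ (q : ℤ) (x : L), q ≠ 0 → q • x = 0 → x = 0) →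
        (∀ a ∈ radI R, ∀ x : L, a • x = 0) → Module.finrank ℤ L ≤ r →
        ∃ i, ∃ f : F i →ₗ[R] L, Function.Injective f ∧ ∀ y : L, q • y ∈ LinearMap.range f := by
  obtain ⟨t, ht, ht2⟩ := exists_soc R
  obtain ⟨q2, hq2, hbase⟩ := base ht ht2
  induction r with
  | zero =>
    refine ⟨Unit, inferInstance, fun _ => ModuleCat.of R PUnit, 1, one_ne_zero, ?_, ?_⟩
    · intro i
      change Module.Finite ℤ PUnit
      infer_instance
    · intro L _ _ _ htf hL hr
      have h0 : ∀ y : L, y = 0 := by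
        by_contra! hc
        obtain ⟨y, hy⟩ := hc
        obtain ⟨N, -, h⟩ := exists_irr_quot (R := R) (L := L)
          ⟨y, fun q hq h => hy (htf q _ hq h)⟩
        omega
      exact ⟨(), 0, fun x y _ => Subsingleton.elim (α := PUnit) x y, fun y => by simp [h0 y]⟩
  | succ r ih =>
    obtain ⟨ι, _, F, q1, hq1, hF, ih⟩ := ih
    refine ⟨Option (ι × t), inferInstance, fun o => match o with
      | none => ModuleCat.of R PUnit
      | some p => ModuleCat.of R (F p.1 × p.2), q1 * q2, mul_ne_zero hq1 hq2, ?_, ?_⟩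
    · rintro (_ | ⟨i, S⟩)
      · change Module.Finite ℤ PUnit
        infer_instance
      · change Module.Finite ℤ (F i × S)
        have := hF i
        have := (ht S S.2).fin
        infer_instance
    · intro L _ _ _ htf hL hr
      by_cases h0 : ∀ y : L, y = 0
      · exact ⟨none, 0, fun x y _ => Subsingleton.elim (α := PUnit) x y, fun y => by simp [h0 y]⟩
      push Not at h0
      obtain ⟨y, hy⟩ := h0
      obtain ⟨N, hN, hlt⟩ := exists_irr_quot (R := R) (L := L)
          ⟨y, fun q hq h => hy (htf q _ hq h)⟩
      have := finite_sub N
      obtain ⟨i, f, hf, hfq⟩ := ih N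
        (fun q x hq hx => Subtype.ext (htf q x hq (congrArg Subtype.val hx)))
        (fun a ha x => Subtype.ext (hL a ha x)) (by omega)
      obtain ⟨S, hS, x, hinj, hxq⟩ := hbase _ hN
      obtain ⟨x, rfl⟩ := N.mkQ_surjective x
      have hcomp : ∀ s, N.mkQ (act hL x s) = act hN.kill (N.mkQ x) s :=
        act_map hL hN.kill N.mkQ x
      have hmk : ∀ z : N, N.mkQ (z : L) = 0 := fun z => (Submodule.Quotient.mk_eq_zero N).2 z.2
      refine ⟨some (i, ⟨S, hS⟩), LinearMap.coprod (N.subtype ∘ₗ f) (act hL x ∘ₗ S.subtype), ?_, ?_⟩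
      · refine (injective_iff_map_eq_zero (LinearMap.coprod (N.subtype ∘ₗ f)
          (act hL x ∘ₗ S.subtype))).2 ?_
        rintro ⟨a, s⟩ h
        have h' : (f a : L) + act hL x s = 0 := h
        have h2 := congrArg N.mkQ h'
        rw [map_add, hmk, hcomp, zero_add, map_zero] at h2
        have hs : s = 0 := hinj (by rw [map_zero]; exact h2)
        subst hs
        rw [Submodule.coe_zero, map_zero, add_zero] at h'
        have ha : a = 0 := hf (by rw [map_zero]; exact Subtype.ext h')
        subst ha
        rfl
      · intro y
        obtain ⟨s, hs⟩ := hxq (N.mkQ y)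
        have hs' : act hN.kill (N.mkQ x) s = q2 • N.mkQ y := hs
        have hmem : q2 • y - act hL x s ∈ N := by
          rw [← Submodule.Quotient.mk_eq_zero N]
          change N.mkQ _ = 0
          rw [map_sub, map_nsmul, hcomp, hs', sub_self]
        obtain ⟨a, ha⟩ := hfq ⟨_, hmem⟩
        refine ⟨(a, q1 • s), ?_⟩
        have ha' : (f a : L) = q1 • (q2 • y - act hL x s) := congrArg Subtype.val ha
        change (f a : L) + act hL x ((q1 • s : S) : R ⧸ radI R) = _
        rw [ha', Submodule.coe_smul_of_tower, map_nsmul, smul_sub, sub_add_cancel, mul_smul]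

theorem finite_subs {R F : Type} [Ring R] [AddCommGroup F] [Module R F] [Module.Finite ℤ F]
    (q : ℕ) (hq : q ≠ 0) : Finite {N : Submodule R F // ∀ x : F, q • x ∈ N} := by
  let Q : AddSubgroup F := (nsmulAddMonoidHom (α := F) q).range
  have hQ : Q.index ≠ 0 := index_ne Q fun x => ⟨q, by exact_mod_cast hq, ⟨x, by simp⟩⟩
  have : Q.FiniteIndex := ⟨hQ⟩
  have : Finite (F ⧸ Q) := AddSubgroup.finite_quotient_of_finiteIndex
  refine Finite.of_injective (β := Set (F ⧸ Q))
    (fun N => (QuotientAddGroup.mk' Q) '' (N.1 : Set F)) ?_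
  have key : ∀ N M : {N : Submodule R F // ∀ x : F, q • x ∈ N},
      (QuotientAddGroup.mk' Q) '' (N.1 : Set F) = (QuotientAddGroup.mk' Q) '' (M.1 : Set F) →
      N.1 ≤ M.1 := by
    intro N M h x hx
    have : QuotientAddGroup.mk' Q x ∈ (QuotientAddGroup.mk' Q) '' (M.1 : Set F) := by
      rw [← h]; exact ⟨x, hx, rfl⟩
    obtain ⟨y, hy, hxy⟩ := this
    rw [← sub_eq_zero, ← map_sub] at hxy
    obtain ⟨z, hz⟩ := (QuotientAddGroup.eq_zero_iff _).1 hxy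
    have hz' : q • z = y - x := hz
    have : x = y - q • z := by rw [hz']; abel
    rw [this]
    exact M.1.sub_mem hy (M.2 z)
  intro N M h
  exact Subtype.ext (le_antisymm (key N M h) (key M N h.symm))

theorem lattice_classes (R : Type) [Ring R] [Module.Finite ℤ R] (r : ℕ) :
    ∃ (ι : Type) (_ : Finite ι) (F : ι → ModuleCat.{0} R),
      (∀ i, Module.Finite ℤ (F i)) ∧
      ∀ (L : Type) [AddCommGroup L] [Module R L] [Module.Finite ℤ L],
        (∀ (q : ℤ) (x : L), q ≠ 0 → q • x = 0 → x = 0) →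
        (∀ a ∈ radI R, ∀ x : L, a • x = 0) → Module.finrank ℤ L ≤ r →
        ∃ i, Nonempty (L ≃ₗ[R] F i) := by
  obtain ⟨ι, _, F, q, hq, hF, h⟩ := jz R r
  have := fun i => finite_subs (R := R) (F := F i) q hq
  refine ⟨Σ i, {N : Submodule R (F i) // ∀ x : F i, q • x ∈ N}, inferInstance,
    fun p => ModuleCat.of R p.2.1, ?_, ?_⟩
  · rintro ⟨i, N⟩
    exact finite_sub N.1
  · intro L _ _ _ htf hL hr
    obtain ⟨i, f, hf, hfq⟩ := h L htf hL hr
    obtain ⟨g, hg, hgf⟩ := exists_back htf f hf q hq hfq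
    refine ⟨⟨i, LinearMap.range g, fun x => ⟨f x, hf ?_⟩⟩, ⟨LinearEquiv.ofInjective g hg⟩⟩
    rw [hgf, map_nsmul]

/-- the radical of a module -/
def JP (R P : Type) [Ring R] [AddCommGroup P] [Module R P] : Submodule R P :=
  radI R • (⊤ : Submodule R P)

theorem JP_tf {R P : Type} [Ring R] [AddCommGroup P] [Module R P] [Module.Projective R P]
    (q : ℤ) (x : P) (hq : q ≠ 0) (hx : q • x ∈ JP R P) : x ∈ JP R P := by
  obtain ⟨s, hs⟩ := Module.projective_def'.1 (inferInstance : Module.Projective R P)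
  have h1 : ∀ y ∈ JP R P, ∀ p, s y p ∈ radI R := by
    intro y hy p
    refine Submodule.smul_induction_on (p := fun y => s y p ∈ radI R) hy ?_ ?_
    · intro a ha z _
      rw [map_smul, Finsupp.smul_apply, smul_eq_mul]
      exact rad_mul ha _
    · intro y z hy hz
      rw [map_add, Finsupp.add_apply]
      exact (radI R).add_mem hy hz
  have h2 : ∀ p, s x p ∈ radI R := by
    intro p
    have := h1 _ hx p
    rw [map_zsmul] at this
    exact rad_tf hq this
  have h3 : x = Finsupp.linearCombination R id (s x) := (congrArg (fun f => f x) hs).symm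
  rw [h3, Finsupp.linearCombination_apply]
  exact Submodule.sum_mem _ fun p _ => Submodule.smul_mem_smul (h2 p) Submodule.mem_top

theorem nak {R P P' : Type} [Ring R] [AddCommGroup P] [Module R P] [AddCommGroup P'] [Module R P']
    {m k : ℕ} (hmk : ∀ a ∈ radI R ^ k, m • a = 0) (f : P →ₗ[R] P')
    (h1 : ∀ y : P', ∃ p, y - f p ∈ JP R P') (h2 : ∀ y : P', ∃ p, ∃ z : P', y - f p = m • z) :
    Function.Surjective f := by
  have h3 : ∀ k : ℕ, (⊤ : Submodule R P') ≤ LinearMap.range f ⊔ (radI R ^ k) • ⊤ := by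
    intro k
    induction k with
    | zero =>
      rw [Submodule.pow_zero, Ideal.one_eq_top, Submodule.top_smul]
      exact le_sup_right
    | succ k ih =>
      refine ih.trans (sup_le le_sup_left ?_)
      have h4 : (⊤ : Submodule R P') ≤ LinearMap.range f ⊔ radI R • ⊤ := by
        intro y _
        obtain ⟨p, hp⟩ := h1 y
        exact Submodule.mem_sup.2 ⟨f p, ⟨p, rfl⟩, _, hp, by abel⟩
      calc radI R ^ k • (⊤ : Submodule R P')
          ≤ radI R ^ k • (LinearMap.range f ⊔ radI R • ⊤) := Submodule.smul_mono le_rfl h4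
        _ = radI R ^ k • LinearMap.range f ⊔ radI R ^ k • (radI R • ⊤) := Submodule.smul_sup _ _ _
        _ ≤ _ := by
          refine sup_le_sup Submodule.smul_le_right ?_
          rw [← Submodule.smul_assoc, Submodule.pow_succ]
          exact le_rfl
  intro y
  obtain ⟨p, z, hz⟩ := h2 y
  obtain ⟨_, ⟨p', rfl⟩, w, hw, hzw⟩ := Submodule.mem_sup.1 (h3 k (Submodule.mem_top (x := z)))
  have hw0 : m • w = 0 := by
    refine Submodule.smul_induction_on (p := fun w => m • w = 0) hw ?_ ?_
    · intro a ha x _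
      rw [← smul_assoc, hmk a ha, zero_smul]
    · intro x y hx hy
      rw [smul_add, hx, hy, add_zero]
  refine ⟨p + m • p', ?_⟩
  rw [← hzw, smul_add, hw0, add_zero, ← map_nsmul, sub_eq_iff_eq_add] at hz
  rw [hz, map_add, add_comm]

theorem lift_surj {R P P' F N : Type} [Ring R] [AddCommGroup P] [Module R P] [AddCommGroup P']
    [Module R P'] [AddCommGroup F] [Module R F] [AddCommGroup N] [Module R N]
    [Module.Projective R P]
    {m k : ℕ} (hmk : ∀ a ∈ radI R ^ k, m • a = 0)
    (π : F →ₗ[R] P) (hπ : Function.Surjective π) (π' : F →ₗ[R] P') (hπ' : Function.Surjective π')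
    (φ : (P ⧸ JP R P) ≃ₗ[R] N) (φ' : (P' ⧸ JP R P') ≃ₗ[R] N)
    (hK : ∀ a, (∃ z : P, π a = m • z) → ∃ z : P', π' a = m • z)
    (hW : ∀ a y, (∃ z : N, φ ((JP R P).mkQ (π a)) - y = m • z) →
      ∃ z : N, φ' ((JP R P').mkQ (π' a)) - y = m • z) :
    ∃ f : P →ₗ[R] P', Function.Surjective f := by
  obtain ⟨σ, hσ⟩ := Module.projective_lifting_property π LinearMap.id hπ
  have hσ' : ∀ p, π (σ p) = p := fun p => congrArg (fun f => f p) hσ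
  obtain ⟨f0, hf0⟩ := Module.projective_lifting_property (JP R P').mkQ
    (φ'.symm.toLinearMap ∘ₗ φ.toLinearMap ∘ₗ (JP R P).mkQ) (Submodule.mkQ_surjective _)
  have hf0' : ∀ p, (JP R P').mkQ (f0 p) = φ'.symm (φ ((JP R P).mkQ p)) :=
    fun p => congrArg (fun f => f p) hf0
  let h1 := π' ∘ₗ σ
  let c : (JP R P' × P') →ₗ[R] P' := LinearMap.coprod (JP R P').subtype (m • LinearMap.id)
  have hc : ∀ j z, c (j, z) = (j : P') + m • z := fun j z => rfl
  have hmem : ∀ p, (h1 - f0) p ∈ LinearMap.range c := by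
    intro p
    obtain ⟨z, hz⟩ := hW (σ p) (φ ((JP R P).mkQ p)) ⟨0, by rw [hσ', sub_self, smul_zero]⟩
    obtain ⟨w, hw⟩ := (JP R P').mkQ_surjective (φ'.symm z)
    have h2 : (JP R P').mkQ (h1 p - f0 p - m • w) = 0 := by
      apply φ'.injective
      simp only [map_sub, map_nsmul, hw, hf0', LinearEquiv.apply_symm_apply, map_zero]
      rw [← hz]
      exact sub_self _
    have h3 : h1 p - f0 p - m • w ∈ JP R P' := (Submodule.Quotient.mk_eq_zero _).1 h2
    exact ⟨(⟨_, h3⟩, w), by rw [hc]; simp⟩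
  obtain ⟨l, hl⟩ := Module.projective_lifting_property c.rangeRestrict
    ((h1 - f0).codRestrict _ hmem) c.surjective_rangeRestrict
  have hl' : ∀ p, ((l p).1 : P') + m • (l p).2 = h1 p - f0 p := fun p =>
    congrArg (fun f => ((f p : LinearMap.range c) : P')) hl
  refine ⟨f0 + (JP R P').subtype ∘ₗ LinearMap.fst R _ _ ∘ₗ l, nak hmk _ ?_ ?_⟩
  · intro y
    obtain ⟨p, hp⟩ := (JP R P).mkQ_surjective (φ.symm (φ' ((JP R P').mkQ y)))
    refine ⟨p, ?_⟩
    change y - (f0 p + ((l p).1 : P')) ∈ _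
    rw [← sub_sub]
    refine Submodule.sub_mem _ ?_ (l p).1.2
    rw [← Submodule.Quotient.mk_eq_zero]
    change (JP R P').mkQ _ = 0
    rw [map_sub, hf0', hp]
    simp
  · intro y
    obtain ⟨a, rfl⟩ := hπ' y
    obtain ⟨z, hz⟩ := hK (a - σ (π a)) ⟨0, by rw [map_sub, hσ', sub_self, smul_zero]⟩
    refine ⟨π a, z + (l (π a)).2, ?_⟩
    change π' a - (f0 (π a) + ((l (π a)).1 : P')) = _
    have h5 := hl' (π a)
    have h6 : h1 (π a) = π' (σ (π a)) := rfl
    rw [h6] at h5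
    rw [map_sub] at hz
    rw [smul_add, ← hz, eq_sub_of_add_eq h5]
    abel

theorem exists_pi {R M : Type} [Ring R] [AddCommGroup M] [Module R M] {n : ℕ}
    (h : ∃ s : Finset M, s.card ≤ n ∧ Submodule.span R (s : Set M) = ⊤) :
    ∃ π : (Fin n → R) →ₗ[R] M, Function.Surjective π := by
  obtain ⟨s, hs, hspan⟩ := h
  let g : Fin n → M := fun i => if h : (i : ℕ) < s.card then s.equivFin.symm ⟨i, h⟩ else 0
  refine ⟨Fintype.linearCombination R g, ?_⟩
  rw [← LinearMap.range_eq_top, Fintype.range_linearCombination, eq_top_iff, ← hspan]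
  refine Submodule.span_mono ?_
  intro x hx
  refine ⟨⟨s.equivFin ⟨x, hx⟩, (s.equivFin ⟨x, hx⟩).2.trans_le hs⟩, ?_⟩
  simp [g]

def Rel {R : Type} [Ring R] (n m : ℕ) {N : Type} [AddCommGroup N] [Module R N]
    (K : Submodule R (Fin n → R)) (W : Submodule R ((Fin n → R) × N))
    (P : Type) [AddCommGroup P] [Module R P] : Prop :=
  ∃ (π : (Fin n → R) →ₗ[R] P) (φ : (P ⧸ JP R P) ≃ₗ[R] N), Function.Surjective π ∧
    (∀ a, a ∈ K ↔ ∃ z : P, π a = m • z) ∧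
    ∀ a y, (a, y) ∈ W ↔ ∃ z : N, φ ((JP R P).mkQ (π a)) - y = m • z

theorem Rel.iso {R : Type} [Ring R] [Module.Finite ℤ R] {n m k : ℕ} {N : Type} [AddCommGroup N]
    [Module R N]
    {K : Submodule R (Fin n → R)} {W : Submodule R ((Fin n → R) × N)}
    {P P' : Type} [AddCommGroup P] [Module R P] [AddCommGroup P'] [Module R P']
    [Module.Projective R P] [Module.Projective R P']
    (hmk : ∀ a ∈ radI R ^ k, m • a = 0)
    (h : Rel n m K W P) (h' : Rel n m K W P') : Nonempty (P ≃ₗ[R] P') := by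
  obtain ⟨π, φ, hπ, hK, hW⟩ := h
  obtain ⟨π', φ', hπ', hK', hW'⟩ := h'
  obtain ⟨f, hf⟩ := lift_surj hmk π hπ π' hπ' φ φ' (fun a h => (hK' a).1 ((hK a).2 h))
    (fun a y h => (hW' a y).1 ((hW a y).2 h))
  obtain ⟨g, hg⟩ := lift_surj hmk π' hπ' π hπ φ' φ (fun a h => (hK a).1 ((hK' a).2 h))
    (fun a y h => (hW a y).1 ((hW' a y).2 h))
  have : Module.Finite ℤ P := finite_of_surj π.toAddMonoidHom hπ
  have : IsNoetherian R P := noeth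
  have hinj := IsNoetherian.injective_of_surjective_endomorphism (g ∘ₗ f) (hg.comp hf)
  exact ⟨LinearEquiv.ofBijective f ⟨Function.Injective.of_comp (f := g) hinj, hf⟩⟩

theorem main (R : Type) [Ring R] [Module.Finite ℤ R] (n : ℕ) :
    ∃ (k : ℕ) (N : Fin k → ModuleCat.{0} R),
      ∀ M : ModuleCat.{0} R, Module.Projective R M →
        (∃ s : Finset M, s.card ≤ n ∧ Submodule.span R (s : Set M) = ⊤) →
        ∃ i, Nonempty (M ≅ N i) := by
  classical
  obtain ⟨m, k, hm, hmk⟩ := exists_m R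
  obtain ⟨ι, _, F, hF, hcl⟩ := lattice_classes R (Module.finrank ℤ (Fin n → R))
  have hfin1 := finite_subs (R := R) (F := Fin n → R) m hm
  have hfin2 := fun i => finite_subs (R := R) (F := (Fin n → R) × F i) m hm
  let Inv := Σ i, {K : Submodule R (Fin n → R) // ∀ x : Fin n → R, m • x ∈ K} ×
    {W : Submodule R ((Fin n → R) × F i) // ∀ x : (Fin n → R) × F i, m • x ∈ W}
  have : Finite Inv := inferInstanceAs (Finite (Σ i, _ × _))
  let Q : Inv → ModuleCat.{0} R → Prop := fun v M => Module.Projective R M ∧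
    Rel n m v.2.1.1 v.2.2.1 M
  let e := Finite.equivFin Inv
  refine ⟨Nat.card Inv, fun i => if h : ∃ M, Q (e.symm i) M then h.choose else
    ModuleCat.of R PUnit, ?_⟩
  intro M hM hs
  obtain ⟨π, hπ⟩ := exists_pi hs
  have hMf : Module.Finite ℤ M := finite_of_surj π.toAddMonoidHom hπ
  have hLf := finite_quot (JP R M)
  obtain ⟨i, ⟨φ⟩⟩ := hcl (M ⧸ JP R M) (by
      intro q x hq hx
      obtain ⟨x, rfl⟩ := (JP R M).mkQ_surjective x
      rw [← map_zsmul] at hx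
      exact (Submodule.Quotient.mk_eq_zero _).2
        (JP_tf q x hq ((Submodule.Quotient.mk_eq_zero _).1 hx))) (by
      intro a ha x
      obtain ⟨x, rfl⟩ := (JP R M).mkQ_surjective x
      rw [← map_smul]
      exact (Submodule.Quotient.mk_eq_zero _).2
        (Submodule.smul_mem_smul ha Submodule.mem_top)) (by
      have h1 := LinearMap.finrank_range_le ((JP R M).mkQ ∘ₗ π).toAddMonoidHom.toIntLinearMap
      have h2 : LinearMap.range ((JP R M).mkQ ∘ₗ π).toAddMonoidHom.toIntLinearMap = ⊤ :=
        LinearMap.range_eq_top.2 ((JP R M).mkQ_surjective.comp hπ)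
      rw [h2, finrank_top] at h1
      exact h1)
  let d : (Fin n → R) × F i →ₗ[R] F i :=
    φ.toLinearMap ∘ₗ (JP R M).mkQ ∘ₗ π ∘ₗ LinearMap.fst R _ _ - LinearMap.snd R _ _
  let v : Inv := ⟨i, ⟨(LinearMap.range (m • (LinearMap.id : M →ₗ[R] M))).comap π,
      fun x => ⟨π x, by rw [map_nsmul]; rfl⟩⟩,
    ⟨(LinearMap.range (m • (LinearMap.id : F i →ₗ[R] F i))).comap
      d, fun x => ⟨d x, by rw [map_nsmul]; rfl⟩⟩⟩
  have hQ : Q v M := by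
    refine ⟨hM, π, φ, hπ, fun a => ?_, fun a y => ?_⟩
    · constructor
      · rintro ⟨z, hz⟩
        exact ⟨z, hz.symm⟩
      · rintro ⟨z, hz⟩
        exact ⟨z, hz.symm⟩
    · constructor
      · rintro ⟨z, hz⟩
        exact ⟨z, hz.symm⟩
      · rintro ⟨z, hz⟩
        exact ⟨z, hz.symm⟩
  refine ⟨e v, ?_⟩
  have hex : ∃ M, Q (e.symm (e v)) M := ⟨M, by rw [Equiv.symm_apply_apply]; exact hQ⟩
  beta_reduce
  rw [dif_pos hex]
  have hspec : Q (e.symm (e v)) hex.choose := hex.choose_spec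
  generalize hex.choose = M' at hspec
  rw [Equiv.symm_apply_apply] at hspec
  obtain ⟨hP', hR'⟩ := hspec
  obtain ⟨E⟩ := hQ.2.iso hmk hR'
  exact ⟨E.toModuleIso⟩

end JZ

/-- Let `A` be a unital ring which is finitely generated as an abelian group.
Then for every `n > 0` there are only finitely many isomorphism classes of
`n`-generated projective right `A`-modules (right `A`-modules = left
`Aᵐᵒᵖ`-modules). -/
theorem stmt_11 (A : Type) [Ring A] (hfg : AddGroup.FG A) (n : ℕ) (hn : 0 < n) :
    ∃ (k : ℕ) (N : Fin k → ModuleCat.{0} Aᵐᵒᵖ),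
      ∀ M : ModuleCat.{0} Aᵐᵒᵖ, Module.Projective Aᵐᵒᵖ M →
        (∃ s : Finset M, s.card ≤ n ∧ Submodule.span Aᵐᵒᵖ (s : Set M) = ⊤) →
        ∃ i, Nonempty (M ≅ N i) := by
  have h1 : Module.Finite ℤ A := Module.Finite.iff_addGroup_fg.2 hfg
  have h2 : Module.Finite ℤ Aᵐᵒᵖ :=
    JZ.finite_of_surj (MulOpposite.opAddEquiv : A ≃+ Aᵐᵒᵖ).toAddMonoidHom
      (MulOpposite.opAddEquiv : A ≃+ Aᵐᵒᵖ).surjective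
  exact JZ.main Aᵐᵒᵖ n
end

section
/- Let A be an additive category such that for all objects X, Y the abelian group of morphisms Hom(X, Y) is finitely generated. Then for any object X of A, there are only finitely many isomorphism classes of objects Y of A that are stably isomorphic to X, i.e., such that X ⊕ Z ≅ Y ⊕ Z for some object Z. -/
open CategoryTheory CategoryTheory.Limits

attribute [local instance] CategoryTheory.Limits.hasBinaryBiproducts_of_finite_biproducts

namespace StabIso
universe u v w

section Count
variable {R : Type u} [Ring R]

/-- number of injective linear maps -/
noncomputable def nInj (W P : Type v) [AddCommGroup W] [Module R W] [AddCommGroup P] [Module R P] : ℕ :=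
  Nat.card {f : W →ₗ[R] P // Function.Injective f}

theorem card_hom_eq (W P : Type v) [AddCommGroup W] [Module R W] [AddCommGroup P] [Module R P]
    [Finite W] [Finite P] [Fintype (Submodule R W)] :
    Nat.card (W →ₗ[R] P) = ∑ K : Submodule R W, nInj (R := R) (W ⧸ K) P := by
  classical
  have : Finite (W →ₗ[R] P) := Finite.of_injective (fun f => (f : W → P)) DFunLike.coe_injective
  have e : (W →ₗ[R] P) ≃ Σ K : Submodule R W, {f : (W ⧸ K) →ₗ[R] P // Function.Injective f} :=
    { toFun := fun f => ⟨LinearMap.ker f, ⟨(LinearMap.ker f).liftQ f le_rfl, by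
        rw [← LinearMap.ker_eq_bot]
        exact Submodule.ker_liftQ_eq_bot _ _ _ le_rfl⟩⟩
      invFun := fun x => x.2.1.comp x.1.mkQ
      left_inv := fun f => by ext; simp
      right_inv := by
        rintro ⟨K, f, hf⟩
        have hk : LinearMap.ker (f.comp K.mkQ) = K := by
          rw [LinearMap.ker_comp, LinearMap.ker_eq_bot.2 hf]
          exact K.ker_mkQ
        have : ∀ (K' : Submodule R W) (h : K' = K) (f' : (W ⧸ K') →ₗ[R] P) (hf' : Function.Injective f'),
            f'.comp K'.mkQ = f.comp K.mkQ → 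
            (⟨K', ⟨f', hf'⟩⟩ : Σ K : Submodule R W, {f : (W ⧸ K) →ₗ[R] P // Function.Injective f})
              = ⟨K, ⟨f, hf⟩⟩ := by
          rintro K' rfl f' hf' h
          congr 2
          exact Submodule.linearMap_qext _ h
        apply this _ hk
        ext; simp }
  have (K : Submodule R W) : Finite (W ⧸ K) := Finite.of_surjective _ K.mkQ_surjective
  have (K : Submodule R W) : Finite ((W ⧸ K) →ₗ[R] P) :=
    Finite.of_injective (fun f => (f : (W ⧸ K) → P)) DFunLike.coe_injective
  rw [Nat.card_congr e, Nat.card_sigma]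
  rfl

theorem nInj_congr (W W' P : Type v) [AddCommGroup W] [Module R W] [AddCommGroup P] [Module R P]
    [AddCommGroup W'] [Module R W'] (e : W ≃ₗ[R] W') : nInj (R := R) W P = nInj (R := R) W' P := by
  refine Nat.card_congr ⟨fun f => ⟨f.1.comp e.symm.toLinearMap, f.2.comp e.symm.injective⟩,
    fun f => ⟨f.1.comp e.toLinearMap, f.2.comp e.injective⟩, fun f => ?_, fun f => ?_⟩
  · ext; simp
  · ext; simp

theorem nInj_eq (P Q : Type v) [AddCommGroup P] [Module R P] [Finite P]
    [AddCommGroup Q] [Module R Q] [Finite Q]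
    (H : ∀ (W : Type v) [AddCommGroup W] [Module R W] [Finite W],
      Nat.card (W →ₗ[R] P) = Nat.card (W →ₗ[R] Q)) :
    ∀ (n : ℕ) (W : Type v) [AddCommGroup W] [Module R W] [Finite W], Nat.card W = n →
      nInj (R := R) W P = nInj (R := R) W Q := by
  classical
  intro n
  induction n using Nat.strong_induction_on with
  | _ n ih =>
    intro W _ _ _ hn
    have : Finite (Submodule R W) := Finite.of_injective (fun K => (K : Set W)) SetLike.coe_injective
    have := Fintype.ofFinite (Submodule R W)
    have h := H W
    rw [card_hom_eq, card_hom_eq, Fintype.sum_eq_add_sum_compl ⊥, Fintype.sum_eq_add_sum_compl ⊥,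
      nInj_congr _ _ P (Submodule.quotEquivOfEqBot (⊥ : Submodule R W) rfl),
      nInj_congr _ _ Q (Submodule.quotEquivOfEqBot (⊥ : Submodule R W) rfl)] at h
    have h2 : ∑ K ∈ ({⊥}ᶜ : Finset (Submodule R W)), nInj (R := R) (W ⧸ K) P =
        ∑ K ∈ ({⊥}ᶜ : Finset (Submodule R W)), nInj (R := R) (W ⧸ K) Q := by
      refine Finset.sum_congr rfl fun K hK => ?_
      have : Finite (W ⧸ K) := Finite.of_surjective _ K.mkQ_surjective
      refine ih (Nat.card (W ⧸ K)) ?_ _ rfl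
      have hK : K ≠ ⊥ := by simpa using hK
      rw [← hn]
      have h1 := Submodule.card_eq_card_quotient_mul_card K
      have h3 : 1 < Nat.card K := by
        rw [Finite.one_lt_card_iff_nontrivial]
        exact Submodule.nontrivial_iff_ne_bot.2 hK
      have h4 : 0 < Nat.card (W ⧸ K) := Nat.card_pos
      rw [h1]; nlinarith
    omega

theorem cancel (P Q Z : Type v) [AddCommGroup P] [Module R P] [Finite P]
    [AddCommGroup Q] [Module R Q] [Finite Q] [AddCommGroup Z] [Module R Z] [Finite Z]
    (e : (P × Z) ≃ₗ[R] (Q × Z)) : Nonempty (P ≃ₗ[R] Q) := by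
  have H : ∀ (W : Type v) [AddCommGroup W] [Module R W] [Finite W],
      Nat.card (W →ₗ[R] P) = Nat.card (W →ₗ[R] Q) := by
    intro W _ _ _
    have fin (P : Type v) [AddCommGroup P] [Module R P] [Finite P] : Finite (W →ₗ[R] P) :=
      Finite.of_injective (fun f => (f : W → P)) DFunLike.coe_injective
    have h1 (P : Type v) [AddCommGroup P] [Module R P] [Finite P] :
        Nat.card (W →ₗ[R] (P × Z)) = Nat.card (W →ₗ[R] P) * Nat.card (W →ₗ[R] Z) := by
      rw [← Nat.card_prod]
      exact Nat.card_congr (LinearMap.prodEquiv ℕ).toEquiv.symm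
    have h2 : Nat.card (W →ₗ[R] (P × Z)) = Nat.card (W →ₗ[R] (Q × Z)) :=
      Nat.card_congr ⟨fun f => e.toLinearMap.comp f, fun f => e.symm.toLinearMap.comp f,
        fun f => by ext <;> simp, fun f => by ext <;> simp⟩
    rw [h1, h1] at h2
    have := fin Z
    exact Nat.eq_of_mul_eq_mul_right Nat.card_pos h2
  have h := nInj_eq P Q H _ P rfl
  have hp : 0 < nInj (R := R) P P := by
    have : Finite (P →ₗ[R] P) := Finite.of_injective (fun f => (f : P → P)) DFunLike.coe_injective
    have : Nonempty {f : P →ₗ[R] P // Function.Injective f} := ⟨⟨LinearMap.id, fun _ _ h => h⟩⟩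
    exact Nat.card_pos
  rw [h] at hp
  obtain ⟨f, hf⟩ := (Nat.card_pos_iff.1 hp).1
  have hc : Nat.card P = Nat.card Q := by
    have := Nat.card_congr e.toEquiv
    rw [Nat.card_prod, Nat.card_prod] at this
    exact Nat.eq_of_mul_eq_mul_right Nat.card_pos this
  exact ⟨LinearEquiv.ofBijective f ((Nat.bijective_iff_injective_and_card f).2 ⟨hf, hc⟩)⟩

end Count
end StabIso

namespace StabIso
universe u v w

section Cat
variable {A : Type u} [Category.{v} A] [Preadditive A] 

/-- same genus -/
def Gen (X Y : A) : Prop := ∀ n : ℕ, 0 < n → ∃ (h : X ⟶ Y) (k : Y ⟶ X) (α : X ⟶ X) (β : Y ⟶ Y),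
  h ≫ k = 𝟙 X + n • α ∧ k ≫ h = 𝟙 Y + n • β

/-- multiples of n -/
def mulSub (n : ℕ) (W U : A) : Submodule (End U) (W ⟶ U) where
  carrier := {a | ∃ b : W ⟶ U, a = n • b}
  add_mem' := by
    rintro _ _ ⟨a, rfl⟩ ⟨b, rfl⟩
    exact ⟨a + b, by simp⟩
  zero_mem' := ⟨0, by simp⟩
  smul_mem' := by
    rintro r _ ⟨b, rfl⟩
    exact ⟨r • b, by rw [smul_comm]⟩

theorem finite_quot (hfg : ∀ X Y : A, AddGroup.FG (X ⟶ Y)) (n : ℕ) (hn : 0 < n) (W U : A) :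
    Finite ((W ⟶ U) ⧸ mulSub n W U) := by
  have := hfg W U
  have h1 : AddGroup.FG ((W ⟶ U) ⧸ mulSub n W U) :=
    AddGroup.fg_of_surjective (f := (mulSub n W U).mkQ.toAddMonoidHom) (mulSub n W U).mkQ_surjective
  apply AddCommGroup.finite_of_fg_isAddTorsion
  intro x
  obtain ⟨a, rfl⟩ := (mulSub n W U).mkQ_surjective x
  rw [isOfFinAddOrder_iff_nsmul_eq_zero]
  refine ⟨n, hn, ?_⟩
  rw [← map_nsmul]
  simp only [Submodule.mkQ_apply, Submodule.Quotient.mk_eq_zero]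
  exact ⟨a, rfl⟩

theorem lin_rep (n : ℕ) {X Y U : A} (i : X ⟶ U) (p : U ⟶ X) (hip : i ≫ p = 𝟙 X)
    (θ : ((X ⟶ U) ⧸ mulSub n X U) →ₗ[End U] ((Y ⟶ U) ⧸ mulSub n Y U)) :
    ∃ k : Y ⟶ X, ∀ a : X ⟶ U, θ ((mulSub n X U).mkQ a) = (mulSub n Y U).mkQ (k ≫ a) := by
  obtain ⟨b, hb⟩ := (mulSub n Y U).mkQ_surjective (θ ((mulSub n X U).mkQ i))
  refine ⟨b ≫ p, fun a => ?_⟩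
  let r : End U := p ≫ a
  have h1 : a = r • i := by
    change a = i ≫ p ≫ a
    rw [← Category.assoc, hip, Category.id_comp]
  have h2 : (b ≫ p) ≫ a = r • b := by
    change (b ≫ p) ≫ a = b ≫ p ≫ a
    rw [Category.assoc]
  rw [h2]
  conv_lhs => rw [h1]
  rw [map_smul, map_smul, map_smul, hb]

theorem gen_of_equiv (n : ℕ) {X Y U : A} (i : X ⟶ U) (p : U ⟶ X) (hip : i ≫ p = 𝟙 X)
    (j : Y ⟶ U) (q : U ⟶ Y) (hjq : j ≫ q = 𝟙 Y) 
    (θ : ((X ⟶ U) ⧸ mulSub n X U) ≃ₗ[End U] ((Y ⟶ U) ⧸ mulSub n Y U)) :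
    ∃ (h : X ⟶ Y) (k : Y ⟶ X) (α : X ⟶ X) (β : Y ⟶ Y),
      h ≫ k = 𝟙 X + n • α ∧ k ≫ h = 𝟙 Y + n • β := by
  obtain ⟨k, hk⟩ := lin_rep n i p hip θ.toLinearMap
  obtain ⟨h, hh⟩ := lin_rep n j q hjq θ.symm.toLinearMap
  have h1 : (mulSub n X U).mkQ (h ≫ k ≫ i) = (mulSub n X U).mkQ i := by
    rw [← hh, ← hk]; simp
  have h2 : (mulSub n Y U).mkQ (k ≫ h ≫ j) = (mulSub n Y U).mkQ j := by
    rw [← hk, ← hh]; simp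
  simp only [Submodule.mkQ_apply, Submodule.Quotient.eq] at h1 h2
  obtain ⟨a, ha⟩ := h1
  obtain ⟨b, hb⟩ := h2
  refine ⟨h, k, a ≫ p, b ≫ q, ?_, ?_⟩
  · have := congrArg (· ≫ p) ha
    simp only [Preadditive.sub_comp, Category.assoc, hip, Category.comp_id, Preadditive.nsmul_comp] at this
    rw [← this]; abel
  · have := congrArg (· ≫ q) hb
    simp only [Preadditive.sub_comp, Category.assoc, hjq, Category.comp_id, Preadditive.nsmul_comp] at this
    rw [← this]; abel

variable [HasFiniteBiproducts A]

/-- components -/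
noncomputable def comps (n : ℕ) (X Z U : A) : ((X ⊞ Z) ⟶ U) →ₗ[End U]
    ((X ⟶ U) ⧸ mulSub n X U) × ((Z ⟶ U) ⧸ mulSub n Z U) where
  toFun a := ((mulSub n X U).mkQ (biprod.inl ≫ a), (mulSub n Z U).mkQ (biprod.inr ≫ a))
  map_add' a b := by simp [Preadditive.comp_add]
  map_smul' r a := by
    have h1 : biprod.inl ≫ (r • a) = r • (biprod.inl (X := X) (Y := Z) ≫ a) := (Category.assoc _ _ _).symm
    have h2 : biprod.inr ≫ (r • a) = r • (biprod.inr (X := X) (Y := Z) ≫ a) := (Category.assoc _ _ _).symm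
    rw [h1, h2]; simp only [map_smul]; rfl

theorem comps_surj (n : ℕ) (X Z U : A) : Function.Surjective (comps n X Z U) := by
  rintro ⟨x, z⟩
  obtain ⟨a, rfl⟩ := (mulSub n X U).mkQ_surjective x
  obtain ⟨b, rfl⟩ := (mulSub n Z U).mkQ_surjective z
  exact ⟨biprod.desc a b, by simp [comps]⟩

theorem comps_ker (n : ℕ) (X Z U : A) : LinearMap.ker (comps n X Z U) = mulSub n (X ⊞ Z) U := by
  ext a
  simp only [LinearMap.mem_ker, comps, LinearMap.coe_mk, AddHom.coe_mk, Prod.mk_eq_zero, 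
    Submodule.mkQ_apply, Submodule.Quotient.mk_eq_zero]
  constructor
  · rintro ⟨⟨b, hb⟩, ⟨c, hc⟩⟩
    refine ⟨biprod.desc b c, ?_⟩
    ext
    · simp [hb]
    · simp [hc]
  · rintro ⟨b, rfl⟩
    exact ⟨⟨biprod.inl ≫ b, by simp⟩, ⟨biprod.inr ≫ b, by simp⟩⟩

theorem gen_of_stab (hfg : ∀ X Y : A, AddGroup.FG (X ⟶ Y)) (X Y Z : A) (φ : X ⊞ Z ≅ Y ⊞ Z) :
    Gen X Y := by
  intro n hn
  let U := X ⊞ Y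
  have := finite_quot hfg n hn X U
  have := finite_quot hfg n hn Y U
  have := finite_quot hfg n hn Z U
  let e0 : ((X ⊞ Z) ⟶ U) ≃ₗ[End U] ((Y ⊞ Z) ⟶ U) :=
    { toFun := fun a => φ.inv ≫ a
      invFun := fun a => φ.hom ≫ a
      left_inv := fun a => by simp
      right_inv := fun a => by simp
      map_add' := fun a b => by simp [Preadditive.comp_add]
      map_smul' := fun r a => (Category.assoc _ _ _).symm }
  have hmap : (LinearMap.ker (comps n X Z U)).map e0.toLinearMap = LinearMap.ker (comps n Y Z U) := by
    rw [comps_ker, comps_ker]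
    ext a
    constructor
    · rintro ⟨_, ⟨b, rfl⟩, rfl⟩
      exact ⟨φ.inv ≫ b, by simp [e0]⟩
    · rintro ⟨b, rfl⟩
      exact ⟨n • (φ.hom ≫ b), ⟨_, rfl⟩, by simp [e0]⟩
  let e1 := (comps n X Z U).quotKerEquivOfSurjective (comps_surj n X Z U)
  let e2 := (comps n Y Z U).quotKerEquivOfSurjective (comps_surj n Y Z U)
  let e3 := Submodule.Quotient.equiv _ _ e0 hmap
  obtain ⟨θ⟩ := cancel _ _ _ (e1.symm.trans (e3.trans e2))
  exact gen_of_equiv n biprod.inl biprod.fst (by simp) biprod.inr biprod.snd (by simp) θ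

end Cat
end StabIso

namespace StabIso
universe u v w

section Det

theorem pigeon {ι : Type*} [Fintype ι] (K : ℕ) (hK : 0 < K) (t : ι → ℚ) :
    ∃ r : ℕ, 0 < r ∧ r ≤ K ^ Fintype.card ι ∧ ∃ k : ι → ℤ, ∀ i, |r * t i - k i| < 1 / K := by
  classical
  have hK' : (0:ℚ) < K := by exact_mod_cast hK
  let g : ℕ → ι → ℕ := fun r i => ⌊K * Int.fract (r * t i)⌋₊
  have hg : ∀ r i, g r i < K := by
    intro r i
    rw [Nat.floor_lt (by positivity)]
    have := Int.fract_lt_one (r * t i)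
    nlinarith
  obtain ⟨a, ha, b, hb, hab, he⟩ := Finset.exists_ne_map_eq_of_card_lt_of_maps_to
    (s := Finset.range (K ^ Fintype.card ι + 1)) (t := Fintype.piFinset fun _ : ι => Finset.range K)
    (f := g) (by simp) (by intro r _; simp [hg])
  have key : ∀ a b : ℕ, a < b → b ≤ K ^ Fintype.card ι → g a = g b → 
      ∃ r : ℕ, 0 < r ∧ r ≤ K ^ Fintype.card ι ∧ ∃ k : ι → ℤ, ∀ i, |r * t i - k i| < 1 / K := by
    intro a b hlt hle he
    refine ⟨b - a, by omega, by omega, fun i => ⌊b * t i⌋ - ⌊a * t i⌋, fun i => ?_⟩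
    have h1 : g a i = g b i := congrFun he i
    have ha1 := Nat.floor_le (show 0 ≤ K * Int.fract (a * t i) by positivity)
    have ha2 := Nat.lt_floor_add_one (K * Int.fract (a * t i))
    have hb1 := Nat.floor_le (show 0 ≤ K * Int.fract (b * t i) by positivity)
    have hb2 := Nat.lt_floor_add_one (K * Int.fract (b * t i))
    change ⌊K * Int.fract (a * t i)⌋₊ = ⌊K * Int.fract (b * t i)⌋₊ at h1
    rw [h1] at ha1 ha2
    have e : ((b - a : ℕ) : ℚ) * t i - ((⌊b * t i⌋ - ⌊a * t i⌋ : ℤ) : ℚ)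
        = Int.fract (b * t i) - Int.fract (a * t i) := by
      rw [Nat.cast_sub hlt.le]; push_cast; unfold Int.fract; ring
    rw [e, abs_lt, lt_div_iff₀ hK', ← neg_div, div_lt_iff₀ hK']
    constructor <;> linarith
  simp only [Finset.mem_range] at ha hb
  rcases lt_or_gt_of_ne hab with h | h
  · exact key a b h (by omega) he
  · exact key b a h (by omega) he.symm

variable {V : Type v} [AddCommGroup V] [Module ℚ V]

theorem det_int (L : Submodule ℤ V) (hL : L.FG) (hfull : ∀ v : V, ∃ n : ℕ, 0 < n ∧ n • v ∈ L)
    (g : V →ₗ[ℚ] V) (hg : ∀ x ∈ L, g x ∈ L) : ∃ z : ℤ, LinearMap.det g = z := by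
  classical
  have : Module.Finite ℤ L := Module.Finite.iff_fg.2 hL
  have : IsAddTorsionFree V := IsAddTorsionFree.of_module_rat V
  have : Module.Free ℤ L := inferInstance
  let b := Module.Free.chooseBasis ℤ L
  have hli : LinearIndependent ℚ (fun i => (b i : V)) := by
    rw [← LinearIndependent.iff_fractionRing (R := ℤ) (K := ℚ)]
    exact b.linearIndependent.map' L.subtype (by simp)
  have hsp : ⊤ ≤ Submodule.span ℚ (Set.range fun i => (b i : V)) := by
    intro x _
    obtain ⟨n, hn, hx⟩ := hfull x
    have h1 : n • x ∈ Submodule.span ℚ (Set.range fun i => (b i : V)) := by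
      have := b.sum_repr ⟨n • x, hx⟩
      have := congrArg (L.subtype) this
      rw [map_sum] at this
      simp only [map_smul, Submodule.subtype_apply] at this
      rw [← this]
      refine Submodule.sum_mem _ fun i _ => ?_
      rw [← Int.cast_smul_eq_zsmul ℚ]
      exact Submodule.smul_mem _ _ (Submodule.subset_span ⟨i, rfl⟩)
    rw [← Nat.cast_smul_eq_nsmul ℚ] at h1
    have hn' : (n:ℚ) ≠ 0 := by positivity
    have := Submodule.smul_mem _ (n:ℚ)⁻¹ h1
    rwa [smul_smul, inv_mul_cancel₀ hn', one_smul] at this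
  let b' := Module.Basis.mk hli hsp
  let gL : L →ₗ[ℤ] L := (g.restrictScalars ℤ).restrict hg
  refine ⟨(LinearMap.toMatrix b b gL).det, ?_⟩
  rw [← LinearMap.det_toMatrix b', Int.cast_det]
  congr 1
  ext i j
  rw [LinearMap.toMatrix_apply, Matrix.map_apply, LinearMap.toMatrix_apply]
  have h2 : g (b' j) = ∑ i, ((b.repr (gL (b j)) i : ℤ) : ℚ) • b' i := by
    have := congrArg (L.subtype) (b.sum_repr (gL (b j)))
    rw [map_sum] at this
    simp only [map_smul, Submodule.subtype_apply] at this
    simp only [b', Module.Basis.mk_apply, Int.cast_smul_eq_zsmul]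
    rw [this]; rfl
  rw [h2, b'.repr_sum_self]

theorem det_small [Module.Finite ℚ V] [Nontrivial V] {ι : Type*} [Fintype ι] (β : ι → V →ₗ[ℚ] V) :
    ∃ K : ℕ, 0 < K ∧ ∀ t : ι → ℚ, (∀ i, |t i| < 1 / K) → |LinearMap.det (∑ i, t i • β i)| < 1 := by
  classical
  let b := Module.finBasis ℚ V
  let F : (ι → ℚ) → ℚ := fun t => (∑ i, t i • LinearMap.toMatrix b b (β i)).det
  have hF : ∀ t, F t = LinearMap.det (∑ i, t i • β i) := by
    intro t
    rw [← LinearMap.det_toMatrix b, map_sum]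
    simp [F]
  have hc : Continuous F := by
    apply Continuous.matrix_det
    fun_prop
  have h0 : F 0 = 0 := by
    rw [hF]
    simp [Module.finrank_pos.ne']
  have := (Metric.continuous_iff.1 hc) 0 1 one_pos
  obtain ⟨δ, hδ, h⟩ := this
  obtain ⟨K, hK⟩ := exists_nat_one_div_lt hδ
  refine ⟨K + 1, by omega, fun t ht => ?_⟩
  have h1 : dist t 0 < δ := by
    rw [dist_pi_lt_iff hδ]
    intro i
    have := ht i
    rw [Pi.zero_apply, Rat.dist_eq]  
    refine lt_trans ?_ hK
    simp only [Rat.cast_zero, sub_zero]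
    have h3 : ((|t i| : ℚ) : ℝ) < ((1 / ((K + 1 : ℕ) : ℚ) : ℚ) : ℝ) := Rat.cast_lt.2 this
    push_cast at h3
    exact h3
  have h2 := h t h1
  rw [h0, hF, Rat.dist_eq] at h2
  simp only [Rat.cast_zero, sub_zero] at h2
  exact_mod_cast h2

end Det
end StabIso

namespace StabIso
universe u v w

section JZ
variable {S : Type u} [Ring S] (Λ : Subring S) 

/-- full sublattice -/
def Full {V : Type v} [AddCommGroup V] [Module S V] (M : Submodule Λ V) : Prop :=
  ∀ x : V, ∃ n : ℕ, 0 < n ∧ n • x ∈ M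

/-- bounded -/
def Bdd {V : Type v} [AddCommGroup V] [Module S V] (M : Submodule Λ V) : Prop :=
  ∃ F : Submodule Λ V, F.FG ∧ M ≤ F

/-- Jordan-Zassenhaus property -/
def JZ (V : Type v) [AddCommGroup V] [Module S V] : Prop :=
  ∃ M₀ : Submodule Λ V, M₀.FG ∧ Full Λ M₀ ∧ ∃ N : ℕ, 0 < N ∧ ∀ M : Submodule Λ V,
    Full Λ M → Bdd Λ M → ∃ φ : V →ₗ[S] V, (∀ x ∈ M₀, φ x ∈ M) ∧ ∀ m ∈ M, ∃ x ∈ M₀, N • m = φ x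

variable {Λ}
variable {V W : Type v} [AddCommGroup V] [Module S V] [AddCommGroup W] [Module S W]

theorem finset_mul {X : Type*} (p : ℕ → X → Prop) (hp : ∀ m n x, p n x → p (m * n) x)
    (h : ∀ x, ∃ n, 0 < n ∧ p n x) (s : Finset X) : ∃ n, 0 < n ∧ ∀ x ∈ s, p n x := by
  classical
  induction s using Finset.induction_on with
  | empty => exact ⟨1, one_pos, by simp⟩
  | insert a s _ ih =>
    obtain ⟨n, hn, h1⟩ := ih
    obtain ⟨m, hm, h2⟩ := h a
    refine ⟨m * n, by positivity, fun x hx => ?_⟩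
    rcases Finset.mem_insert.1 hx with rfl | hx
    · rw [mul_comm]; exact hp _ _ _ h2
    · exact hp _ _ _ (h1 x hx)

theorem fg_mul {M F : Submodule Λ V} (hM : Full Λ M) (hF : F.FG) :
    ∃ c : ℕ, 0 < c ∧ ∀ x ∈ F, c • x ∈ M := by
  obtain ⟨s, rfl⟩ := hF
  obtain ⟨c, hc, h⟩ := finset_mul (fun n x => n • x ∈ M) 
    (fun m n x h => by rw [mul_smul]; exact M.nsmul_mem h m) hM s
  refine ⟨c, hc, fun x hx => ?_⟩
  induction hx using Submodule.span_induction with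
  | mem x hx => exact h x hx
  | zero => simp
  | add x y _ _ h1 h2 => rw [smul_add]; exact M.add_mem h1 h2
  | smul r x _ h1 => rw [smul_comm]; exact M.smul_mem r h1

theorem JZ.congr (e : V ≃ₗ[S] W) (h : JZ Λ V) : JZ Λ W := by
  obtain ⟨M₀, hfg, hfull, N, hN, H⟩ := h
  let e' : V →ₗ[Λ] W := e.toLinearMap.restrictScalars Λ
  refine ⟨M₀.map e', hfg.map _, ?_, N, hN, fun M hM hb => ?_⟩
  · intro x
    obtain ⟨n, hn, h⟩ := hfull (e.symm x)
    exact ⟨n, hn, _, h, by simp [e']⟩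
  · have hf : Full Λ (M.comap e') := by
      intro x
      obtain ⟨n, hn, h⟩ := hM (e x)
      exact ⟨n, hn, by simpa [e'] using h⟩
    have hb' : Bdd Λ (M.comap e') := by
      obtain ⟨F, hF, h⟩ := hb
      refine ⟨F.map (e.symm.toLinearMap.restrictScalars Λ), hF.map _, fun x hx => ?_⟩
      exact ⟨e x, h hx, by simp⟩
    obtain ⟨φ, h1, h2⟩ := H (M.comap e') hf hb'
    refine ⟨e.toLinearMap.comp (φ.comp e.symm.toLinearMap), ?_, ?_⟩
    · rintro _ ⟨x, hx, rfl⟩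
      have := h1 x hx
      simpa [e'] using this
    · intro m hm
      obtain ⟨x, hx, h⟩ := h2 (e.symm m) (by simpa [e'] using hm)
      refine ⟨e' x, ⟨x, hx, rfl⟩, ?_⟩
      have := congrArg e h
      simpa [e'] using this

theorem JZ.prod [Algebra ℚ S] [IsSemisimpleRing S] (hS : ∀ s : S, ∃ n : ℕ, 0 < n ∧ n • s ∈ Λ)
    (h1 : JZ Λ V) (h2 : JZ Λ W) : JZ Λ (V × W) := by
  classical
  obtain ⟨V₀, vfg, vfull, N₁, hN₁, H₁⟩ := h1
  obtain ⟨W₀, wfg, wfull, N₂, hN₂, H₂⟩ := h2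
  obtain ⟨s, hs⟩ := id wfg
  -- projectivity
  let π : (s → S) →ₗ[S] W := Fintype.linearCombination S (fun i : s => (i : W))
  have hπ : Function.Surjective π := by
    rw [← LinearMap.range_eq_top, Fintype.range_linearCombination, eq_top_iff]
    intro x _
    obtain ⟨n, hn, hx⟩ := wfull x
    rw [← hs] at hx
    have hx1 : n • x ∈ Submodule.span S (Set.range fun i : s => (i : W)) := by
      have : Submodule.span Λ (s : Set W) ≤
        (Submodule.span S (Set.range fun i : s => (i : W))).restrictScalars Λ := by
        rw [Submodule.span_le]
        intro y hy
        exact Submodule.subset_span ⟨⟨y, hy⟩, rfl⟩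
      exact this hx
    have hn' : (n : ℚ) ≠ 0 := by positivity
    have e : algebraMap ℚ S (n : ℚ)⁻¹ • (n • x) = x := by
      rw [← Nat.cast_smul_eq_nsmul S, smul_smul, ← map_natCast (algebraMap ℚ S), ← map_mul,
        inv_mul_cancel₀ hn', map_one, one_smul]
    rw [← e]
    exact Submodule.smul_mem _ _ hx1
  have := Module.projective_of_isSemisimpleRing S W
  obtain ⟨σ, hσ⟩ := Module.projective_lifting_property π LinearMap.id hπ
  obtain ⟨c, hc, hcσ⟩ : ∃ c : ℕ, 0 < c ∧ ∀ i : s, ∀ x ∈ W₀, c • σ x i ∈ Λ := by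
    have hΛ : Full Λ (⟨⟨⟨(Λ : Set S), Λ.add_mem⟩, Λ.zero_mem⟩, fun a x hx => Λ.mul_mem a.2 hx⟩ : Submodule Λ S) := hS
    obtain ⟨c, hc, h⟩ := finset_mul (X := s) (fun c i => ∀ x ∈ W₀, c • σ x i ∈ Λ) 
      (fun m n i h x hx => by rw [mul_smul]; exact Λ.nsmul_mem (h x hx) m) 
      (fun i => by
        obtain ⟨c, hc, h⟩ := fg_mul hΛ (wfg.map (((LinearMap.proj i).comp σ).restrictScalars Λ))
        exact ⟨c, hc, fun x hx => h _ ⟨x, hx, rfl⟩⟩) Finset.univ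
    exact ⟨c, hc, fun i => h i (Finset.mem_univ i)⟩
  have hσ' : ∀ x : W, ∑ i, σ x i • (i : W) = x := fun x => by
    have := LinearMap.congr_fun hσ x
    simpa [π, Fintype.linearCombination_apply] using this
  refine ⟨V₀.prod W₀, vfg.prod wfg, ?_, N₁ * (c * N₂), by positivity, fun M hM hb => ?_⟩
  · rintro ⟨x, y⟩
    obtain ⟨n, hn, h⟩ := vfull x
    obtain ⟨m, hm, h'⟩ := wfull y
    refine ⟨n * m, by positivity, ?_, ?_⟩
    · change (n * m) • x ∈ V₀
      rw [mul_comm, mul_smul]; exact V₀.nsmul_mem h m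
    · change (n * m) • y ∈ W₀
      rw [mul_smul]; exact W₀.nsmul_mem h' n
  obtain ⟨F, hF, hMF⟩ := hb
  obtain ⟨φ₁, a1, b1⟩ := H₁ (M.comap (LinearMap.inl Λ V W))
    (fun x => by
      obtain ⟨n, hn, h⟩ := hM (x, 0)
      refine ⟨n, hn, ?_⟩
      simpa using h)
    ⟨F.map (LinearMap.fst Λ V W), hF.map _, fun x hx => ⟨(x, 0), hMF hx, rfl⟩⟩
  obtain ⟨φ₂, a2, b2⟩ := H₂ (M.map (LinearMap.snd Λ V W))
    (fun x => by
      obtain ⟨n, hn, h⟩ := hM (0, x)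
      exact ⟨n, hn, _, h, by simp⟩)
    ⟨F.map (LinearMap.snd Λ V W), hF.map _, Submodule.map_mono hMF⟩
  have hw : ∀ i : s, ∃ w : V, (w, φ₂ i) ∈ M := by
    intro i
    obtain ⟨⟨w, y⟩, h, h'⟩ := a2 i (by rw [← hs]; exact Submodule.subset_span i.2)
    refine ⟨w, ?_⟩
    rw [← h']; exact h
  choose w hw using hw
  let ψ : W →ₗ[S] V := c • (Fintype.linearCombination S w).comp σ
  have hψ : ∀ x, ψ x = c • ∑ i, σ x i • w i := fun x => by
    simp [ψ, Fintype.linearCombination_apply]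
  have hψM : ∀ x ∈ W₀, (ψ x, c • φ₂ x) ∈ M := by
    intro x hx
    have e : (ψ x, c • φ₂ x) = ∑ i : s, (⟨c • σ x i, hcσ i x hx⟩ : Λ) • ((w i, φ₂ i) : V × W) := by
      have : ∀ i : s, (⟨c • σ x i, hcσ i x hx⟩ : Λ) • ((w i, φ₂ i) : V × W) = 
        (c • (σ x i • w i), c • (σ x i • φ₂ i)) := by
        intro i
        change ((c • σ x i) • w i, (c • σ x i) • φ₂ i) = _
        rw [smul_assoc, smul_assoc]
      simp_rw [this]
      ext
      · simp [Prod.fst_sum, hψ, Finset.smul_sum]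
      · simp only [Prod.snd_sum]
        conv_lhs => rw [← hσ' x]
        simp [Finset.smul_sum]
    rw [e]
    exact M.sum_mem fun i _ => M.smul_mem _ (hw i)
  refine ⟨LinearMap.prod (φ₁.coprod ψ) (c • φ₂.comp (LinearMap.snd S V W)), ?_, ?_⟩
  · rintro ⟨x, y⟩ ⟨hx, hy⟩
    have := M.add_mem (a1 x hx) (hψM y hy)
    simpa using this
  · rintro ⟨x, y⟩ hm
    obtain ⟨z, hz, h⟩ := b2 y ⟨(x, y), hm, rfl⟩
    have h3 : ((c * N₂) • x - ψ z, (0 : W)) ∈ M := by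
      have := M.sub_mem (M.nsmul_mem hm (c * N₂)) (hψM z hz)
      rw [← h] at this
      simpa [mul_smul] using this
    obtain ⟨t, ht, h'⟩ := b1 ((c * N₂) • x - ψ z) h3
    refine ⟨(t, N₁ • z), ⟨ht, W₀.nsmul_mem hz _⟩, ?_⟩
    ext
    · simp [← h', mul_smul, smul_sub]
    · simp [mul_smul, h, smul_comm c N₁]

end JZ
end StabIso

namespace StabIso
universe u v w
set_option linter.unusedSectionVars false

section JZ2
variable {S : Type u} [Ring S] [Algebra ℚ S] {Λ : Subring S} 
variable {V : Type v} [AddCommGroup V] [Module S V] [Module ℚ V] [IsScalarTower ℚ S V]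
  [Module.Finite ℚ V] [IsSimpleModule S V]

/-- norm -/
noncomputable def nrm (φ : V →ₗ[S] V) : ℚ := |LinearMap.det (φ.restrictScalars ℚ)|

theorem nrm_mul (φ ψ : V →ₗ[S] V) : nrm (φ.comp ψ) = nrm φ * nrm ψ := by
  unfold nrm
  rw [← abs_mul, ← LinearMap.det_comp]; rfl

theorem nrm_ne {φ : V →ₗ[S] V} (h : φ ≠ 0) : nrm φ ≠ 0 := by
  have hb := (LinearMap.bijective_or_eq_zero φ).resolve_right h
  let e := LinearEquiv.ofBijective (φ.restrictScalars ℚ) hb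
  have := LinearEquiv.isUnit_det' e
  exact abs_ne_zero.2 this.ne_zero

theorem JZ_simple (hS : ∀ s : S, ∃ n : ℕ, 0 < n ∧ n • s ∈ Λ) [Module.Finite ℤ Λ] : JZ Λ V := by
  classical
  have : Nontrivial V := IsSimpleModule.nontrivial S V
  have : SMulCommClass S ℚ V := SMulCommClass.symm _ _ _
  let D := Module.End S V
  have : IsScalarTower ℚ D V := ⟨fun q φ x => rfl⟩
  have : Module.Finite D V := Module.Finite.of_restrictScalars_finite ℚ D V
  have : Module.Finite ℚ D := by
    let r : D →ₗ[ℚ] (V →ₗ[ℚ] V) := LinearMap.restrictScalarsₗ ℚ S V V ℚ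
    exact Module.Finite.of_injective r (LinearMap.restrictScalars_injective ℚ)
  let b := Module.Free.chooseBasis D V
  obtain ⟨i0⟩ : Nonempty (Module.Free.ChooseBasisIndex D V) := b.index_nonempty
  set v := b i0 with hv
  have hv0 : v ≠ 0 := b.ne_zero i0
  -- density
  have hs : ∀ i, ∃ s : S, ∀ x : V, s • x = (b.repr x i) v := by
    intro i
    obtain ⟨s, hs⟩ := Module.Finite.toModuleEnd_moduleEnd_surjective (R := S) (M := V)
      ((LinearMap.toSpanSingleton D V v).comp (b.coord i))
    exact ⟨s, fun x => LinearMap.congr_fun hs x⟩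
  have ht : ∀ i, ∃ s : S, s • v = b i := by
    intro i
    obtain ⟨s, hs⟩ := Module.Finite.toModuleEnd_moduleEnd_surjective (R := S) (M := V)
      (b.constr ℕ (fun _ => b i))
    refine ⟨s, (LinearMap.congr_fun hs v).trans ?_⟩
    rw [hv, Module.Basis.constr_basis]
  choose s hs using hs
  choose t ht using ht
  have hpΛ : ∀ (m n : ℕ) (x : S), n • x ∈ Λ → (m * n) • x ∈ Λ := fun m n x h => by
    rw [mul_smul]; exact Λ.nsmul_mem h m
  obtain ⟨n, hn, hnΛ⟩ := finset_mul (fun n x => n • x ∈ Λ) hpΛ hS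
    (Finset.univ.image s ∪ Finset.univ.image t)
  have hns : ∀ i, n • s i ∈ Λ := fun i => hnΛ _ (by simp)
  have hnt : ∀ i, n • t i ∈ Λ := fun i => hnΛ _ (by simp)
  let M₀ : Submodule Λ V := Submodule.span Λ {v}
  have hfg : M₀.FG := Submodule.fg_span_singleton v
  have hvM : v ∈ M₀ := Submodule.mem_span_singleton_self v
  have hfull : Full Λ M₀ := by
    intro x
    obtain ⟨a, ha⟩ := IsSimpleModule.toSpanSingleton_surjective S hv0 x
    obtain ⟨m, hm, h⟩ := hS a
    refine ⟨m, hm, ?_⟩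
    have : m • x = (⟨m • a, h⟩ : Λ) • v := by
      rw [← ha]
      change m • (a • v) = (m • a) • v
      rw [smul_assoc]
    rw [this]
    exact M₀.smul_mem _ hvM
  -- integrality
  have hO : ∀ q : D, q v ∈ M₀ → ∀ x ∈ M₀, q x ∈ M₀ := by
    intro q hq x hx
    obtain ⟨a, rfl⟩ := Submodule.mem_span_singleton.1 hx
    have : q (a • v) = a • q v := q.map_smul (a : S) v
    rw [this]
    exact M₀.smul_mem _ hq
  have hint : ∀ q : D, q v ∈ M₀ → ∃ k : ℕ, nrm q = k := by
    intro q hq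
    obtain ⟨z, hz⟩ := det_int (M₀.restrictScalars ℤ) 
      (by
        have : Module.Finite Λ M₀ := Module.Finite.iff_fg.2 hfg
        have : Module.Finite ℤ M₀ := Module.Finite.trans Λ M₀
        exact Module.Finite.iff_fg.1 this) hfull (q.restrictScalars ℚ) (hO q hq)
    refine ⟨z.natAbs, ?_⟩
    unfold nrm
    rw [hz, Nat.cast_natAbs, Int.cast_abs]
  -- approximation
  obtain ⟨R, hR, happ⟩ : ∃ R : ℕ, 0 < R ∧ ∀ x : D, ∃ r : ℕ, 0 < r ∧ r ≤ R ∧ ∃ q : D, q v ∈ M₀ ∧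
      nrm (r • x - q) < 1 := by
    let β := Module.finBasis ℚ D
    obtain ⟨c, hc, hcβ⟩ := finset_mul (fun n (q : D) => n • q v ∈ M₀) 
      (fun m n x h => by rw [mul_smul]; exact M₀.nsmul_mem h m) (fun q => hfull (q v)) 
      (Finset.univ.image β)
    have hcβ : ∀ i, c • (β i) v ∈ M₀ := fun i => hcβ _ (by simp)
    obtain ⟨K, hK, hdet⟩ := det_small (V := V) (fun i => (c • β i : D).restrictScalars ℚ)
    refine ⟨K ^ Fintype.card (Fin (Module.finrank ℚ D)), by positivity, fun x => ?_⟩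
    obtain ⟨r, hr, hrR, k, hk⟩ := pigeon K hK (fun i => (c : ℚ)⁻¹ * β.repr x i)
    refine ⟨r, hr, hrR, ∑ i, k i • (c • β i), ?_, ?_⟩
    · have : (∑ i, k i • (c • β i) : D) v = ∑ i, k i • (c • (β i) v) := by
        rw [LinearMap.sum_apply]; rfl
      rw [this]
      exact M₀.sum_mem fun i _ => zsmul_mem (hcβ i) _
    · have h1 := hdet _ hk
      unfold nrm
      convert h1 using 3
      have hc' : (c : ℚ) ≠ 0 := by positivity
      have e : (r • x - ∑ i, k i • (c • β i) : D) = 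
          ∑ i, ((r : ℚ) * ((c : ℚ)⁻¹ * β.repr x i) - k i) • (c • β i) := by
        conv_lhs => rw [← β.sum_repr x]
        rw [Finset.smul_sum, ← Finset.sum_sub_distrib]
        refine Finset.sum_congr rfl fun i _ => ?_
        rw [sub_smul, Int.cast_smul_eq_zsmul, ← Nat.cast_smul_eq_nsmul ℚ c, smul_smul,
          ← Nat.cast_smul_eq_nsmul ℚ r, smul_smul]
        congr 2
        field_simp
      rw [e]
      ext y
      rw [LinearMap.restrictScalars_apply, LinearMap.sum_apply, LinearMap.sum_apply]
      rfl
  refine ⟨M₀, hfg, hfull, n * (R.factorial * n), by positivity, fun M hM hb => ?_⟩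
  obtain ⟨F, hF, hMF⟩ := hb
  obtain ⟨c, hc, hcF⟩ := fg_mul hfull hF
  have hcM : ∀ x ∈ M, c • x ∈ M₀ := fun x hx => hcF x (hMF hx)
  -- minimal element
  have hex : ∃ k : ℕ, ∃ φ : D, φ ≠ 0 ∧ φ v ∈ M ∧ nrm (c • φ) = k := by
    obtain ⟨m, hm, h⟩ := hM v
    obtain ⟨k, hk⟩ := hint (c • (m • (1 : D))) (hcM _ h)
    refine ⟨k, m • (1 : D), ?_, h, hk⟩
    intro h0
    have h1 : m • v = 0 := LinearMap.congr_fun h0 v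
    rw [← Nat.cast_smul_eq_nsmul ℚ, smul_eq_zero] at h1
    rcases h1 with h1 | h1
    · have : m = 0 := by exact_mod_cast h1
      omega
    · exact hv0 h1
  obtain ⟨φ, hφ0, hφM, hφk⟩ := Nat.find_spec hex
  have hmin : ∀ ψ : D, ψ ≠ 0 → ψ v ∈ M → nrm (c • φ) ≤ nrm (c • ψ) := by
    intro ψ h0 hψ
    obtain ⟨k, hk⟩ := hint (c • ψ) (hcM _ hψ)
    rw [hk, hφk]
    exact_mod_cast Nat.find_min' hex ⟨ψ, h0, hψ, hk⟩
  have hφx : ∀ x ∈ M₀, φ x ∈ M := by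
    intro x hx
    obtain ⟨a, rfl⟩ := Submodule.mem_span_singleton.1 hx
    have : φ (a • v) = a • φ v := φ.map_smul (a : S) v
    rw [this]
    exact M.smul_mem _ hφM
  have hcφ : 0 < nrm (c • φ) := by
    refine lt_of_le_of_ne (abs_nonneg _) (Ne.symm (nrm_ne ?_))
    rw [← Nat.cast_smul_eq_nsmul ℚ]
    exact smul_ne_zero (by positivity) hφ0
  have hmain : ∀ ψ : D, ψ v ∈ M → ∃ y ∈ M₀, R.factorial • ψ v = φ y := by
    intro ψ hψ
    have hb := (LinearMap.bijective_or_eq_zero φ).resolve_right hφ0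
    let e : V ≃ₗ[S] V := LinearEquiv.ofBijective φ hb
    let x : D := e.symm.toLinearMap.comp ψ
    have hx : ∀ y, φ (x y) = ψ y := fun y => e.apply_symm_apply (ψ y)
    obtain ⟨r, hr, hrR, q, hq, hlt⟩ := happ x
    have hz : r • ψ - φ.comp q = 0 := by
      by_contra h0
      have h1 := hmin _ h0 (by
        change r • ψ v - φ (q v) ∈ M
        exact M.sub_mem (M.nsmul_mem hψ r) (hφx _ hq))
      have h2 : c • (r • ψ - φ.comp q) = LinearMap.comp (c • φ) (r • x - q) := by
        ext y
        change c • (r • ψ y - φ (q y)) = c • φ (r • x y - q y)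
        rw [map_sub, map_nsmul, hx]
      rw [h2, nrm_mul] at h1
      nlinarith
    obtain ⟨l, hl⟩ := Nat.dvd_factorial hr hrR
    refine ⟨l • q v, M₀.nsmul_mem hq l, ?_⟩
    have h3 : r • ψ v = φ (q v) := sub_eq_zero.1 (LinearMap.congr_fun hz v)
    rw [hl, mul_comm, mul_smul, h3, map_nsmul]
  refine ⟨φ, hφx, fun m hm => ?_⟩
  have hy : ∀ i, ∃ y ∈ M₀, (R.factorial * n) • (s i • m) = φ y := by
    intro i
    have h1 : (n • b.repr m i : D) v ∈ M := by
      change n • (b.repr m i) v ∈ M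
      rw [← hs, ← smul_assoc]
      exact M.smul_mem ⟨n • s i, hns i⟩ hm
    obtain ⟨y, hy, h⟩ := hmain _ h1
    refine ⟨y, hy, ?_⟩
    rw [← h, hs, mul_smul]; rfl
  choose y hyM hy using hy
  refine ⟨∑ i, (⟨n • t i, hnt i⟩ : Λ) • y i, M₀.sum_mem fun i _ => M₀.smul_mem _ (hyM i), ?_⟩
  rw [map_sum]
  have h4 : ∀ i, φ ((⟨n • t i, hnt i⟩ : Λ) • y i) = n • (R.factorial * n) • (b.repr m i) (b i) := by
    intro i
    have : φ ((⟨n • t i, hnt i⟩ : Λ) • y i) = (n • t i) • φ (y i) := φ.map_smul _ _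
    rw [this, ← hy i, smul_assoc, hs, smul_comm (t i), ← ht i, LinearMap.map_smul]
  simp_rw [h4, ← Finset.smul_sum]
  have h5 : ∑ i, (b.repr m i) (b i) = m := b.sum_repr m
  rw [h5, mul_smul]

end JZ2

theorem JZ_all {S : Type u} [Ring S] [Algebra ℚ S] [IsSemisimpleRing S] {Λ : Subring S}
    (hS : ∀ s : S, ∃ n : ℕ, 0 < n ∧ n • s ∈ Λ) [Module.Finite ℤ Λ] : 
    ∀ (n : ℕ) (V : Type v) [AddCommGroup V] [Module S V] [Module ℚ V] [IsScalarTower ℚ S V]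
      [Module.Finite ℚ V], Module.finrank ℚ V = n → JZ Λ V := by
  intro n
  induction n using Nat.strong_induction_on with
  | _ n ih =>
    intro V _ _ _ _ _ hn
    rcases subsingleton_or_nontrivial V with h | h
    · refine ⟨⊥, Submodule.fg_bot, fun x => ⟨1, one_pos, ?_⟩, 1, one_pos, fun M _ _ => ⟨0, ?_, ?_⟩⟩
      · simp [Subsingleton.elim x 0]
      · intro x _; simp
      · intro m _
        exact ⟨0, by simp, Subsingleton.elim _ _⟩
    · obtain ⟨W, hW⟩ := IsSemisimpleModule.exists_simple_submodule S V
      obtain ⟨W', hc⟩ := exists_isCompl W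
      have e := Submodule.prodEquivOfIsCompl W W' hc
      have e' : (W × W') ≃ₗ[ℚ] V := e.restrictScalars ℚ
      have : Nontrivial W := IsSimpleModule.nontrivial S W
      have : Module.Finite ℚ (W × W') := Module.Finite.equiv e'.symm
      have : Module.Finite ℚ W := Module.Finite.of_surjective (LinearMap.fst ℚ W W') Prod.fst_surjective
      have : Module.Finite ℚ W' := Module.Finite.of_surjective (LinearMap.snd ℚ W W') Prod.snd_surjective
      have h1 := e'.finrank_eq
      rw [Module.finrank_prod] at h1
      have h2 : 0 < Module.finrank ℚ W := Module.finrank_pos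
      exact JZ.congr e (JZ.prod hS (JZ_simple hS) (ih _ (by omega) W' rfl))

end StabIso

namespace StabIso
universe u v w

section Core

theorem tors_bound (G : Type u) [AddCommGroup G] [Module.Finite ℤ G] :
    ∃ c : ℕ, 0 < c ∧ ∀ x : G, (∃ n : ℕ, 0 < n ∧ n • x = 0) → c • x = 0 := by
  let T : Submodule ℤ G := (AddCommGroup.torsion G).toIntSubmodule
  have hT : T.FG := IsNoetherian.noetherian T
  have mem : ∀ x : G, x ∈ T ↔ ∃ n : ℕ, 0 < n ∧ n • x = 0 := by
    intro x
    exact isOfFinAddOrder_iff_nsmul_eq_zero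
  have : Module.Finite ℤ T := Module.Finite.iff_fg.2 hT
  obtain ⟨s, hs⟩ := this.fg_top
  obtain ⟨c, hc, h⟩ := finset_mul (fun n (x : T) => n • x = 0)
    (fun m n x h => by rw [mul_smul, h, smul_zero])
    (fun x => by
      obtain ⟨n, hn, h⟩ := (mem x.1).1 x.2
      exact ⟨n, hn, Subtype.ext (by simpa using h)⟩) s
  refine ⟨c, hc, fun x hx => ?_⟩
  have key : ∀ y : T, c • y = 0 := by
    intro y
    have hy : y ∈ Submodule.span ℤ (s : Set T) := hs ▸ Submodule.mem_top
    induction hy using Submodule.span_induction with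
    | mem x hx => exact h x hx
    | zero => simp
    | add x y _ _ h1 h2 => rw [smul_add, h1, h2, add_zero]
    | smul r x _ h1 => rw [smul_comm, h1, smul_zero]
  have := congrArg Subtype.val (key ⟨x, (mem x).2 hx⟩)
  simpa using this

theorem two_kill {G : Type u} [AddCommGroup G] [Module.Finite ℤ G] (K L : AddSubgroup G)
    (h : ∀ x ∈ K, ∃ y ∈ K, x + 2 • y ∈ L) : ∃ r : ℕ, 0 < r ∧ ∀ x ∈ K, r • x ∈ L := by
  let L' : Submodule ℤ G := L.toIntSubmodule
  let N : Submodule ℤ (G ⧸ L') := (K.toIntSubmodule).map L'.mkQ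
  have hN : N.FG := IsNoetherian.noetherian N
  have hle : N ≤ Ideal.span {(2 : ℤ)} • N := by
    rintro _ ⟨x, hx, rfl⟩
    obtain ⟨y, hy, hxy⟩ := h x hx
    have : L'.mkQ x = (2 : ℤ) • L'.mkQ (-y) := by
      rw [← sub_eq_zero, ← map_smul, ← map_sub]
      simp only [Submodule.mkQ_apply, Submodule.Quotient.mk_eq_zero]
      change x - (2:ℤ) • (-y) ∈ L
      convert hxy using 1
      simp only [two_smul]; abel
    rw [this]
    exact Submodule.smul_mem_smul (Ideal.mem_span_singleton_self _) ⟨-y, K.neg_mem hy, rfl⟩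
  obtain ⟨r, hr, h2⟩ := Submodule.exists_sub_one_mem_and_smul_eq_zero_of_fg_of_le_smul _ _ hN hle
  refine ⟨r.natAbs, ?_, fun x hx => ?_⟩
  · rw [Ideal.mem_span_singleton] at hr
    omega
  · have h3 := h2 (L'.mkQ x) ⟨x, hx, rfl⟩
    rw [← map_smul] at h3
    simp only [Submodule.mkQ_apply, Submodule.Quotient.mk_eq_zero] at h3
    have h4 : r • x ∈ L := h3
    rw [← natCast_zsmul]
    rcases abs_choice r with h | h
    · rw [Int.natCast_natAbs, h]; exact h4
    · rw [Int.natCast_natAbs, h, neg_smul]; exact L.neg_mem h4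

/-- genus for modules -/
def GenM (E : Type u) [Ring E] (I : Type v) [AddCommGroup I] [Module E I] : Prop :=
  ∀ n : ℕ, 0 < n → ∃ (h : E →ₗ[E] I) (k : I →ₗ[E] E) (a : E) (β : I →ₗ[E] I),
    (∀ e, k (h e) = e + n • (e * a)) ∧ ∀ i, h (k i) = i + n • β i

theorem core_abs {E : Type u} [Ring E] {S : Type v} [Ring S] [Algebra ℚ S]
    [IsSemisimpleRing S] [Module.Finite ℚ S] [Module.Finite ℤ E] (ρ : E →+* S)
    (hρ : ∀ s : S, ∃ n : ℕ, 0 < n ∧ ∃ e, n • s = ρ e)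
    (hu : ∀ a, IsUnit (1 + 2 • ρ a))
    (c r : ℕ) (hc : 0 < c) (hJ : ∀ x ∈ (RingHom.ker ρ) ^ r, c • x = 0) :
    ∃ N : ℕ, 0 < N ∧ ∀ (I : Type u) [AddCommGroup I] [Module E I] [Module.Finite ℤ I],
      GenM E I → ∃ f : I, ∀ i, ∃ e : E, N • i = e • f := by
  let Λ : Subring S := ρ.range
  have hS : ∀ s : S, ∃ n : ℕ, 0 < n ∧ n • s ∈ Λ := by
    intro s
    obtain ⟨n, hn, e, h⟩ := hρ s
    exact ⟨n, hn, e, h.symm⟩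
  have : Module.Finite ℤ Λ :=
    Module.Finite.of_surjective ρ.rangeRestrict.toAddMonoidHom.toIntLinearMap
      ρ.rangeRestrict_surjective
  obtain ⟨M₀, hfg, hfull, N, hN, H⟩ := JZ_all (Λ := Λ) hS _ S rfl
  obtain ⟨c1, hc1, h1⟩ := hfull 1
  let Λ1 : Submodule Λ S := Submodule.span Λ {1}
  have memΛ1 : ∀ x : S, x ∈ Λ1 ↔ x ∈ Λ := by
    intro x
    rw [Submodule.mem_span_singleton]
    constructor
    · rintro ⟨y, rfl⟩
      have : y • (1:S) = y.1 := by rw [Subring.smul_def, smul_eq_mul, mul_one]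
      rw [this]; exact y.2
    · intro h
      exact ⟨⟨x, h⟩, by rw [Subring.smul_def, smul_eq_mul, mul_one]⟩
  have hΛfull : Full Λ Λ1 := fun x => by
    obtain ⟨n, hn, h⟩ := hS x
    exact ⟨n, hn, (memΛ1 _).2 h⟩
  obtain ⟨c2, hc2, h2⟩ := fg_mul hΛfull hfg
  have hsatS : ∀ (m : ℕ) (s : S), 0 < m → m • s = 0 → s = 0 := by
    intro m s hm h
    have h3 : (m : ℚ) • s = 0 := by rw [Nat.cast_smul_eq_nsmul]; exact h
    exact (smul_eq_zero_iff_right (by positivity)).1 h3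
  obtain ⟨N', hN', hNe⟩ : ∃ N' : ℕ, 0 < N' ∧ N' = c1 * c2 * N := ⟨_, by positivity, rfl⟩
  refine ⟨c * N' ^ r, by positivity, ?_⟩
  intro I _ _ _ hG
  let JI : Submodule E I := RingHom.ker ρ • (⊤ : Submodule E I)
  have sat : ∀ (m : ℕ) (x : I), 0 < m → m • x ∈ JI → x ∈ JI := by
    intro m x hm hx
    obtain ⟨h, k, a, β, hk, hh⟩ := hG m hm
    have k1 : ∀ y ∈ JI, ρ (k y) = 0 := by
      intro y hy
      induction hy using Submodule.smul_induction_on' with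
      | smul r hr n _ => rw [map_smul, smul_eq_mul, map_mul, RingHom.mem_ker.1 hr, zero_mul]
      | add x _ y _ h1 h2 => rw [map_add, map_add, h1, h2, add_zero]
    have k2 : ρ (k x) = 0 := hsatS m _ hm (by rw [← map_nsmul, ← map_nsmul]; exact k1 _ hx)
    have k3 : h (k x) ∈ JI := by
      have : h (k x) = (k x) • h 1 := by rw [← map_smul, smul_eq_mul, mul_one]
      rw [this]
      exact Submodule.smul_mem_smul (RingHom.mem_ker.2 k2) Submodule.mem_top
    have k4 : m • β x ∈ JI := by
      rw [← map_nsmul]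
      have : JI ≤ JI.comap β := by
        refine Submodule.smul_le.2 fun r hr n _ => ?_
        rw [Submodule.mem_comap, map_smul]
        exact Submodule.smul_mem_smul hr Submodule.mem_top
      exact this hx
    have := JI.sub_mem k3 k4
    rwa [hh, add_sub_cancel_right] at this
  obtain ⟨h, k, a, β, hk, hh⟩ := hG 2 two_pos
  have kk : ∀ i, ρ (k (β i)) = ρ (k i) * ρ a := by
    intro i
    rw [← sub_eq_zero]
    apply hsatS 2 _ two_pos
    have e1 := hk (k i)
    rw [hh, map_add, map_nsmul, add_right_inj] at e1
    rw [← map_mul, ← map_sub, ← map_nsmul, smul_sub, e1, sub_self, map_zero]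
  have hK : ∀ i, ρ (k i) = 0 → i ∈ JI := by
    let K : AddSubgroup I := (ρ.toAddMonoidHom.comp k.toAddMonoidHom).ker
    have memK : ∀ i, i ∈ K ↔ ρ (k i) = 0 := fun i => Iff.rfl
    obtain ⟨r, hr, h5⟩ := two_kill K JI.toAddSubgroup (fun x hx => by
      rw [memK] at hx
      refine ⟨β x, by rw [memK, kk, hx, zero_mul], ?_⟩
      rw [← hh]
      have : h (k x) = (k x) • h 1 := by rw [← map_smul, smul_eq_mul, mul_one]
      rw [this]
      exact Submodule.smul_mem_smul (RingHom.mem_ker.2 hx) Submodule.mem_top)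
    intro i hi
    exact sat r i hr (h5 i hi)
  let M : Submodule Λ S :=
    { carrier := {s | ∃ i, s = ρ (k i)}
      add_mem' := by
        rintro _ _ ⟨i, rfl⟩ ⟨j, rfl⟩
        exact ⟨i + j, by simp⟩
      zero_mem' := ⟨0, by simp⟩
      smul_mem' := by
        rintro ⟨_, e, rfl⟩ _ ⟨i, rfl⟩
        exact ⟨e • i, by rw [Subring.smul_def]; simp⟩ }
  have hMb : Bdd Λ M := ⟨Λ1, ⟨{1}, by simp [Λ1]⟩, by
    rintro _ ⟨i, rfl⟩
    exact (memΛ1 _).2 ⟨_, rfl⟩⟩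
  have hMf : Full Λ M := by
    intro s
    obtain ⟨u, hu⟩ := hu a
    obtain ⟨n, hn, e, he⟩ := hρ (s * ↑u⁻¹)
    refine ⟨n, hn, h e, ?_⟩
    rw [hk, map_add, map_nsmul, map_mul, ← he]
    have : n • (s * ↑u⁻¹) + 2 • (n • (s * ↑u⁻¹) * ρ a) = n • (s * ↑u⁻¹) * (1 + 2 • ρ a) := by
      rw [mul_add, mul_one, mul_smul_comm]
    rw [this, ← hu, smul_mul_assoc, Units.inv_mul_cancel_right]
  obtain ⟨φ, hφ, hφ2⟩ := H M hMf hMb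
  obtain ⟨f, hf⟩ := hφ _ h1
  have main : ∀ i, ∃ e : E, N' • i - e • f ∈ JI := by
    intro i
    obtain ⟨x, hx, hx2⟩ := hφ2 (ρ (k i)) ⟨i, rfl⟩
    obtain ⟨e, he⟩ := (memΛ1 _).1 (h2 x hx)
    refine ⟨e, hK _ ?_⟩
    rw [map_sub, map_nsmul, map_smul, smul_eq_mul, map_sub, map_mul, map_nsmul ρ, ← hf, he,
      ← smul_eq_mul, ← map_smul φ]
    have : (c2 • x) • c1 • (1 : S) = (c1 * c2) • x := by
      rw [smul_eq_mul, mul_smul_comm, mul_one, mul_smul]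
    rw [this, map_nsmul, ← hx2, ← mul_smul, hNe, sub_self]
  have ind : ∀ s : ℕ, ∀ i, ∃ e : E, N' ^ s • i - e • f ∈ (RingHom.ker ρ) ^ s • (⊤ : Submodule E I) := by
    have step : ∀ s : ℕ, ∀ w ∈ (RingHom.ker ρ) ^ s • (⊤ : Submodule E I), 
        ∃ e : E, N' • w - e • f ∈ (RingHom.ker ρ) ^ (s+1) • (⊤ : Submodule E I) := by
      intro s w hw
      induction hw using Submodule.smul_induction_on' with
      | smul j hj n _ =>
        obtain ⟨e, he⟩ := main n
        refine ⟨j * e, ?_⟩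
        rw [smul_comm N' j n, mul_smul, ← smul_sub, Submodule.pow_succ, Submodule.mul_smul]
        exact Submodule.smul_mem_smul hj he
      | add x _ y _ h1 h2 =>
        obtain ⟨e, he⟩ := h1
        obtain ⟨e', he'⟩ := h2
        refine ⟨e + e', ?_⟩
        convert Submodule.add_mem _ he he' using 1
        rw [smul_add, add_smul]; abel
    intro s
    induction s with
    | zero => 
      intro i
      exact ⟨0, by rw [Submodule.pow_zero, Ideal.one_eq_top, Submodule.top_smul]; trivial⟩
    | succ s ih =>
      intro i
      obtain ⟨e, he⟩ := ih i
      obtain ⟨e', he'⟩ := step s _ he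
      refine ⟨N' • e + e', ?_⟩
      convert he' using 1
      rw [smul_sub, ← mul_smul, pow_succ', add_smul, smul_assoc]; abel
  refine ⟨f, fun i => ?_⟩
  obtain ⟨e, he⟩ := ind r i
  refine ⟨c • e, ?_⟩
  have : ∀ w ∈ (RingHom.ker ρ) ^ r • (⊤ : Submodule E I), c • w = 0 := by
    intro w hw
    induction hw using Submodule.smul_induction_on' with
    | smul j hj n _ => rw [← smul_assoc, hJ j hj, zero_smul]
    | add x _ y _ h1 h2 => rw [smul_add, h1, h2, add_zero]
  have := this _ he
  rwa [smul_sub, sub_eq_zero, ← mul_smul, ← smul_assoc] at this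

end Core
end StabIso

namespace StabIso
universe u v w
set_option linter.unusedSectionVars false
open TensorProduct

theorem dede (B : Type v) [Ring B] [Algebra ℚ B] [Module.Finite ℚ B] (u v : B) (h : IsUnit (u * v)) :
    IsUnit v := by
  obtain ⟨w, hw⟩ := h
  have h1 : (↑w⁻¹ * u) * v = 1 := by rw [mul_assoc, ← hw, Units.inv_mul]
  have h2 : Function.Injective (LinearMap.mulLeft ℚ v) := by
    intro x y hxy
    have hxy' : v * x = v * y := hxy
    rw [← one_mul x, ← one_mul y, ← h1, mul_assoc, hxy', mul_assoc, mul_assoc, mul_assoc]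
  obtain ⟨z, hz⟩ := LinearMap.injective_iff_surjective.1 h2 1
  have hz' : v * z = 1 := hz
  have : z = ↑w⁻¹ * u := (left_inv_eq_right_inv h1 hz').symm
  exact ⟨⟨v, z, hz', by rw [this, h1]⟩, rfl⟩

theorem core_B (E : Type u) [Ring E] [Module.Finite ℤ E] (B : Type v) [Ring B] [Algebra ℚ B]
    [Module.Finite ℚ B] (io : E →+* B) (io_surj : ∀ x : B, ∃ n : ℕ, 0 < n ∧ ∃ e, n • x = io e)
    (io_ker : ∀ e : E, io e = 0 → ∃ n : ℕ, 0 < n ∧ n • e = 0)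
    (io_unit : ∀ a : E, IsUnit (1 + 2 • io a)) :
    ∃ N : ℕ, 0 < N ∧ ∀ (I : Type u) [AddCommGroup I] [Module E I] [Module.Finite ℤ I],
      GenM E I → ∃ f : I, ∀ i, ∃ e : E, N • i = e • f := by
  have : IsArtinianRing (B) := IsArtinianRing.of_finite ℚ _
  let q := Ideal.Quotient.mk (Ring.jacobson (B))
  have : IsSemisimpleRing ((B) ⧸ Ring.jacobson (B)) := inferInstance
  have : Module.Finite ℚ ((B) ⧸ Ring.jacobson (B)) := inferInstance
  obtain ⟨r, hr⟩ := IsSemiprimaryRing.isNilpotent (R := B)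
  obtain ⟨c, hc, hcE⟩ := tors_bound E
  refine core_abs (q.comp (io)) ?_ ?_ c r hc ?_
  · intro s
    obtain ⟨x, rfl⟩ := Ideal.Quotient.mk_surjective s
    obtain ⟨n, hn, e, h⟩ := io_surj x
    exact ⟨n, hn, e, by rw [← map_nsmul, h]; rfl⟩
  · intro a
    have := (io_unit a).map q
    rw [map_add, map_one, map_nsmul] at this
    exact this
  · intro x hx
    apply hcE
    apply io_ker
    have h1 : ∀ s : ℕ, ∀ x ∈ RingHom.ker (q.comp (io)) ^ s, io x ∈ (Ring.jacobson (B)) ^ s := by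
      intro s
      induction s with
      | zero => intro x _; rw [Submodule.pow_zero, Ideal.one_eq_top]; trivial
      | succ s ih =>
        intro x hx
        rw [Submodule.pow_succ] at hx ⊢
        induction hx using Submodule.mul_induction_on' with
        | mem_mul_mem m hm n hn =>
          rw [map_mul]
          refine Ideal.mul_mem_mul (ih m hm) ?_
          exact Ideal.Quotient.eq_zero_iff_mem.1 (RingHom.mem_ker.1 hn)
        | add x _ y _ h1 h2 => rw [map_add]; exact Ideal.add_mem _ h1 h2
    have := h1 r x hx
    rw [hr] at this
    simpa using this

section Inst
variable (E : Type u) [Ring E] [Module.Finite ℤ E]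

/-- the map to the rationalization -/
noncomputable def io : E →+* (ℚ ⊗[ℤ] E) := (Algebra.TensorProduct.includeRight : E →ₐ[ℤ] ℚ ⊗[ℤ] E).toRingHom

theorem io_surj (x : ℚ ⊗[ℤ] E) : ∃ n : ℕ, 0 < n ∧ ∃ e, n • x = io E e := by
  obtain ⟨⟨e, s⟩, h⟩ := IsLocalizedModule.surj (nonZeroDivisors ℤ) (TensorProduct.mk ℤ ℚ E 1) x
  have hs : (s : ℤ) ≠ 0 := nonZeroDivisors.ne_zero s.2
  have h' : (s : ℤ) • x = io E e := h
  refine ⟨(s : ℤ).natAbs, by omega, ?_⟩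
  rw [← natCast_zsmul, Int.natCast_natAbs]
  rcases abs_choice (s : ℤ) with h1 | h1
  · exact ⟨e, by rw [h1, h']⟩
  · exact ⟨-e, by rw [h1, neg_smul, h', map_neg]⟩

theorem io_ker (e : E) (h : io E e = 0) : ∃ n : ℕ, 0 < n ∧ n • e = 0 := by
  have := (IsLocalizedModule.eq_zero_iff (nonZeroDivisors ℤ) (TensorProduct.mk ℤ ℚ E 1)).1 h
  obtain ⟨s, h⟩ := this
  have hs : (s : ℤ) ≠ 0 := nonZeroDivisors.ne_zero s.2
  refine ⟨(s : ℤ).natAbs, by omega, ?_⟩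
  have h' : (s : ℤ) • e = 0 := h
  rw [← natCast_zsmul, Int.natCast_natAbs]
  rcases abs_choice (s : ℤ) with h1 | h1
  · rw [h1, h']
  · rw [h1, neg_smul, h', neg_zero]

theorem io_unit (a : E) : IsUnit (1 + 2 • io E a) := by
  rcases subsingleton_or_nontrivial (ℚ ⊗[ℤ] E) with hn | hn
  · exact isUnit_of_subsingleton _
  by_contra hcon
  obtain ⟨p, hp, hpa⟩ := IsIntegral.of_finite ℤ a
  have h1 : (-1/2 : ℚ) ∈ spectrum ℚ (io E a) := by
    rw [spectrum.mem_iff]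
    intro h
    apply hcon
    have e1 : 1 + 2 • io E a = (algebraMap ℚ (ℚ ⊗[ℤ] E) (-1/2) - io E a) * algebraMap ℚ _ (-2) := by
      rw [sub_mul, ← map_mul, ← Algebra.commutes, ← Algebra.smul_def]
      rw [show (-1/2 : ℚ) * -2 = 1 by norm_num, map_one, neg_smul, sub_neg_eq_add,
        show (2:ℚ) = 1 + 1 by norm_num, add_smul, one_smul, two_smul]
    rw [e1]
    exact h.mul ((IsUnit.mk0 (-2 : ℚ) (by norm_num)).map _)
  have h2 := spectrum.subset_polynomial_aeval (io E a) (p.map (algebraMap ℤ ℚ)) ⟨_, h1, rfl⟩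
  have h3 : Polynomial.aeval (io E a) (p.map (algebraMap ℤ ℚ)) = 0 := by
    rw [Polynomial.aeval_map_algebraMap]
    have : Polynomial.aeval ((Algebra.TensorProduct.includeRight : E →ₐ[ℤ] ℚ ⊗[ℤ] E) a) p = 0 := by
      rw [Polynomial.aeval_algHom_apply, Polynomial.aeval_def, hpa, map_zero]
    exact this
  rw [h3, spectrum.zero_eq, Set.mem_singleton_iff] at h2
  have h4 : IsIntegral ℤ (-1/2 : ℚ) := ⟨p, hp, by rw [← Polynomial.eval_map]; exact h2⟩
  obtain ⟨z, hz⟩ := IsIntegrallyClosed.isIntegral_iff.1 h4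
  have h5 : ((2 * z : ℤ) : ℚ) = ((-1 : ℤ) : ℚ) := by
    push_cast
    have : (z : ℚ) = -1/2 := hz
    rw [this]; norm_num
  have := Int.cast_injective h5
  omega

theorem ker_tors (v t : E) (N : ℕ) (hN : 0 < N) (a : E) (u : E)
    (h : v * u = N • (1 + 2 • a)) (ht : t * v = 0) : ∃ n : ℕ, 0 < n ∧ n • t = 0 := by
  apply io_ker
  have e1 : io E v * io E u = N • (1 + 2 • io E a) := by
    rw [← map_mul, h, map_nsmul, map_add, map_one, map_nsmul]
  have e2 : io E t * io E v = 0 := by rw [← map_mul, ht, map_zero]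
  have e3 : N • (io E t * (1 + 2 • io E a)) = 0 := by
    rw [← mul_smul_comm, ← e1, ← mul_assoc, e2, zero_mul]
  have e4 : (io E t * (1 + 2 • io E a)) = 0 := by
    have h3 : (N : ℚ) • (io E t * (1 + 2 • io E a)) = 0 := by
      rw [Nat.cast_smul_eq_nsmul]; exact e3
    exact (smul_eq_zero_iff_right (by positivity)).1 h3
  exact (io_unit E a).mul_left_eq_zero.1 e4

theorem ker_tors2 (v t : E) (N : ℕ) (hN : 0 < N) (a : E) (u : E)
    (h : u * v = N • (1 + 2 • a)) (ht : t * v = 0) : ∃ n : ℕ, 0 < n ∧ n • t = 0 := by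
  apply io_ker
  have e1 : io E u * io E v = N • (1 + 2 • io E a) := by
    rw [← map_mul, h, map_nsmul, map_add, map_one, map_nsmul]
  have e2 : io E t * io E v = 0 := by rw [← map_mul, ht, map_zero]
  have : IsArtinianRing (ℚ ⊗[ℤ] E) := IsArtinianRing.of_finite ℚ _
  have e3 : IsUnit (io E u * io E v) := by
    have : N • (1 + 2 • io E a) = algebraMap ℚ _ (N : ℚ) * (1 + 2 • io E a) := by
      rw [← Algebra.smul_def, Nat.cast_smul_eq_nsmul]
    rw [e1, this]
    exact ((IsUnit.mk0 (N : ℚ) (by positivity)).map _).mul (io_unit E a)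
  have e4 : IsUnit (io E v) := dede _ _ _ e3
  exact e4.mul_left_eq_zero.1 e2

theorem core : ∃ N : ℕ, 0 < N ∧ ∀ (I : Type u) [AddCommGroup I] [Module E I] [Module.Finite ℤ I],
      GenM E I → ∃ f : I, ∀ i, ∃ e : E, N • i = e • f :=
  core_B E _ (io E) (io_surj E) (io_ker E) (io_unit E)

end Inst
end StabIso

namespace StabIso
universe u v w

section Cat2
variable {A : Type u} [Category.{v} A] [Preadditive A]

theorem genM_of_gen {X Y : A} (hG : Gen X Y) : GenM (End X) (Y ⟶ X) := by
  intro n hn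
  obtain ⟨h, k, α, β, h1, h2⟩ := hG n hn
  let h' : End X →ₗ[End X] (Y ⟶ X) :=
    { toFun := fun e => k ≫ (show X ⟶ X from e)
      map_add' := fun a b => Preadditive.comp_add _ _ _ _ _ _
      map_smul' := fun r e => by
        change k ≫ (show X ⟶ X from e) ≫ (show X ⟶ X from r) = (k ≫ (show X ⟶ X from e)) ≫ (show X ⟶ X from r)
        rw [Category.assoc] }
  let k' : (Y ⟶ X) →ₗ[End X] End X :=
    { toFun := fun i => h ≫ i
      map_add' := fun a b => Preadditive.comp_add _ _ _ _ _ _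
      map_smul' := fun r e => by
        change h ≫ e ≫ (show X ⟶ X from r) = (h ≫ e) ≫ (show X ⟶ X from r)
        rw [Category.assoc] }
  let β' : (Y ⟶ X) →ₗ[End X] (Y ⟶ X) :=
    { toFun := fun i => β ≫ i
      map_add' := fun a b => Preadditive.comp_add _ _ _ _ _ _
      map_smul' := fun r e => by
        change β ≫ e ≫ (show X ⟶ X from r) = (β ≫ e) ≫ (show X ⟶ X from r)
        rw [Category.assoc] }
  refine ⟨h', k', α, β', fun e => ?_, fun i => ?_⟩
  · change h ≫ k ≫ (show X ⟶ X from e) = (show X ⟶ X from e) + n • (α ≫ (show X ⟶ X from e))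
    rw [← Category.assoc, h1, Preadditive.add_comp, Category.id_comp, Preadditive.nsmul_comp]
  · change k ≫ h ≫ i = i + n • (β ≫ i)
    rw [← Category.assoc, h2, Preadditive.add_comp, Category.id_comp, Preadditive.nsmul_comp]

theorem fin_hom (hfg : ∀ X Y : A, AddGroup.FG (X ⟶ Y)) (X Y : A) : Module.Finite ℤ (X ⟶ Y) :=
  Module.Finite.iff_addGroup_fg.2 (hfg X Y)

theorem fg_pair (hfg : ∀ X Y : A, AddGroup.FG (X ⟶ Y)) (X : A) :
    ∃ N : ℕ, 0 < N ∧ ∀ Y : A, Gen X Y → ∃ (f : Y ⟶ X) (g : X ⟶ Y),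
      f ≫ g = N • 𝟙 Y ∧ g ≫ f = N • 𝟙 X := by
  have : Module.Finite ℤ (End X) := fin_hom hfg X X
  obtain ⟨N, hN, H⟩ := core (End X)
  obtain ⟨c, hc, hcE⟩ := tors_bound (End X)
  refine ⟨c * N, by positivity, fun Y hG => ?_⟩
  have : Module.Finite ℤ (Y ⟶ X) := fin_hom hfg Y X
  have : Module.Finite ℤ (Y ⟶ Y) := fin_hom hfg Y Y
  obtain ⟨f, hf⟩ := H (Y ⟶ X) (genM_of_gen hG)
  let T : AddSubgroup (Y ⟶ Y) :=
    { carrier := {t | ∃ g : X ⟶ Y, N • t = f ≫ g}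
      add_mem' := by
        rintro a b ⟨g, hg⟩ ⟨g', hg'⟩
        exact ⟨g + g', by rw [smul_add, hg, hg', Preadditive.comp_add]⟩
      zero_mem' := ⟨0, by simp⟩
      neg_mem' := by
        rintro a ⟨g, hg⟩
        exact ⟨-g, by rw [smul_neg, hg, Preadditive.comp_neg]⟩ }
  have hT1 : ∀ (k : Y ⟶ X) (h : X ⟶ Y), k ≫ h ∈ T := by
    intro k h
    obtain ⟨e, he⟩ := hf k
    have he' : N • k = f ≫ (show X ⟶ X from e) := he
    exact ⟨(show X ⟶ X from e) ≫ h, by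
      rw [← Preadditive.nsmul_comp, he', Category.assoc]⟩
  have hT2 : ∀ t ∈ T, ∀ x : Y ⟶ Y, t ≫ x ∈ T := by
    rintro t ⟨g, hg⟩ x
    exact ⟨g ≫ x, by rw [← Preadditive.nsmul_comp, hg, Category.assoc]⟩
  obtain ⟨h, k, α, β, h1, h2⟩ := hG 2 two_pos
  obtain ⟨r, hr, hrT⟩ := two_kill (⊤ : AddSubgroup (Y ⟶ Y)) T (fun x _ => by
    refine ⟨β ≫ x, trivial, ?_⟩
    have : x + 2 • (β ≫ x) = (k ≫ h) ≫ x := by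
      rw [h2, Preadditive.add_comp, Category.id_comp, Preadditive.nsmul_comp]
    rw [this]
    exact hT2 _ (hT1 _ _) _)
  have h1T : 𝟙 Y ∈ T := by
    obtain ⟨h, k, α, β, h1, h2⟩ := hG r hr
    have := T.sub_mem (hT1 k h) (hT2 _ (hrT (𝟙 Y) trivial) β)
    rwa [h2, Preadditive.nsmul_comp, Category.id_comp, add_sub_cancel_right] at this
  obtain ⟨g, hg⟩ := h1T
  have ht : c • (g ≫ f - N • 𝟙 X) = 0 := by
    refine hcE (g ≫ f - N • 𝟙 X : X ⟶ X) ?_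
    refine ker_tors2 (End X) (h ≫ f) _ N hN α (g ≫ k) ?_ ?_
    · have e0 : (h ≫ f) ≫ g ≫ k = N • (𝟙 X + 2 • α) := by
        rw [← h1, Category.assoc, ← Category.assoc f, ← hg, Preadditive.nsmul_comp,
          Category.id_comp, Preadditive.comp_nsmul]
      exact e0
    · change (h ≫ f) ≫ (g ≫ f - N • 𝟙 X) = 0
      rw [Preadditive.comp_sub, Category.assoc, ← Category.assoc f, ← hg]
      simp
  refine ⟨f, c • g, ?_, ?_⟩
  · rw [Preadditive.comp_nsmul, ← hg, mul_smul]
  · rw [smul_sub, sub_eq_zero] at ht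
    rw [Preadditive.nsmul_comp, ht, mul_smul]

theorem tors_Y {X Y : A} (c : ℕ)
    (hc : ∀ t : X ⟶ X, (∃ s : ℕ, 0 < s ∧ s • t = 0) → c • t = 0) (hG : Gen X Y) (t : Y ⟶ Y)
    (s : ℕ) (hs : 0 < s) (hst : s • t = 0) : c • t = 0 := by
  obtain ⟨h, k, α, β, h1, h2⟩ := hG s hs
  have e1 : c • (h ≫ t ≫ k) = 0 := hc _ ⟨s, hs, by
    rw [← Preadditive.comp_nsmul, ← Preadditive.nsmul_comp, hst]; simp⟩
  have e2 : (k ≫ h) ≫ t ≫ (k ≫ h) = t := by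
    rw [h2]
    simp only [Preadditive.add_comp, Preadditive.comp_add, Category.id_comp, Category.comp_id,
      Preadditive.nsmul_comp, Preadditive.comp_nsmul]
    have a1 : s • β ≫ t = 0 := by rw [← Preadditive.comp_nsmul, hst, Limits.comp_zero]
    have a2 : s • t ≫ β = 0 := by rw [← Preadditive.nsmul_comp, hst, Limits.zero_comp]
    have a3 : s • β ≫ t ≫ β = 0 := by rw [← Preadditive.comp_nsmul, a2, Limits.comp_zero]
    simp [a1, a2, a3]
  calc c • t = c • ((k ≫ h) ≫ t ≫ (k ≫ h)) := by rw [e2]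
    _ = k ≫ (c • (h ≫ t ≫ k)) ≫ h := by
        simp only [Category.assoc, Preadditive.nsmul_comp, Preadditive.comp_nsmul]
    _ = 0 := by rw [e1]; simp

theorem half {X Y Y' : A} (N c : ℕ) {f : Y ⟶ X} {g : X ⟶ Y} {g' : X ⟶ Y'}
    {k : Y ⟶ X} {h' : X ⟶ Y'} {k' : Y' ⟶ X} {β' : Y' ⟶ Y'} {z : X ⟶ X}
    (hfg : f ≫ g = N • 𝟙 Y) (hk' : k' ≫ h' = 𝟙 Y' + (N * c) • β')
    (hz : g ≫ k = g' ≫ k' + (N * c) • z) : ∃ w : Y ⟶ Y', f ≫ g' = N • (k ≫ h' + c • w) := by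
  refine ⟨-(f ≫ z ≫ h' + f ≫ g' ≫ β'), ?_⟩
  have e1 : f ≫ (g ≫ k) ≫ h' = N • (k ≫ h') := by
    rw [← Category.assoc, ← Category.assoc f, hfg]; simp
  have e2 : f ≫ g' ≫ (k' ≫ h') = f ≫ g' + (N * c) • (f ≫ g' ≫ β') := by
    rw [hk']; simp
  rw [hz, Preadditive.add_comp, Preadditive.comp_add, Category.assoc, e2] at e1
  rw [smul_add, ← e1, ← mul_smul]
  simp only [Preadditive.nsmul_comp, Preadditive.comp_nsmul, smul_neg, smul_add]
  abel

theorem uu {X Y Y' : A} (N c : ℕ) (hN : 0 < N) (hc0 : 0 < c)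
    (hc : ∀ t : X ⟶ X, (∃ s : ℕ, 0 < s ∧ s • t = 0) → c • t = 0) (hG : Gen X Y)
    {f : Y ⟶ X} {g : X ⟶ Y} {f' : Y' ⟶ X} {g' : X ⟶ Y'}
    {h : X ⟶ Y} {k : Y ⟶ X} {h' : X ⟶ Y'} {k' : Y' ⟶ X} {β : Y ⟶ Y} {α' : X ⟶ X}
    (hfg : f ≫ g = N • 𝟙 Y) (hgf' : g' ≫ f' = N • 𝟙 X)
    (hk : k ≫ h = 𝟙 Y + (N * c) • β) (hh' : h' ≫ k' = 𝟙 X + (N * c) • α')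
    (w : Y ⟶ Y') (w' : Y' ⟶ Y) (hw : f ≫ g' = N • (k ≫ h' + c • w))
    (hw' : f' ≫ g = N • (k' ≫ h + c • w')) : (k ≫ h' + c • w) ≫ (k' ≫ h + c • w') = 𝟙 Y := by
  obtain ⟨x, hx⟩ : ∃ x, (k ≫ h' + c • w) ≫ (k' ≫ h + c • w') = 𝟙 Y + c • x := by
    refine ⟨N • β + N • (k ≫ α' ≫ h) + (k ≫ h' ≫ w' + w ≫ k' ≫ h + c • (w ≫ w')), ?_⟩
    have e1 : (k ≫ h') ≫ (k' ≫ h) = 𝟙 Y + (N * c) • β + (N * c) • (k ≫ α' ≫ h) := by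
      rw [← hk, Category.assoc, ← Category.assoc h', hh']; simp
    rw [Preadditive.add_comp, Preadditive.comp_add, Preadditive.comp_add, e1, mul_comm N c]
    simp only [Preadditive.nsmul_comp, Preadditive.comp_nsmul, smul_add, mul_smul, Category.assoc]
    abel
  have e2 : (N * N) • ((k ≫ h' + c • w) ≫ (k' ≫ h + c • w')) = (N * N) • 𝟙 Y := by
    calc (N * N) • ((k ≫ h' + c • w) ≫ (k' ≫ h + c • w')) 
        = (N • (k ≫ h' + c • w)) ≫ (N • (k' ≫ h + c • w')) := by
          rw [Preadditive.nsmul_comp, Preadditive.comp_nsmul, mul_smul]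
      _ = f ≫ (g' ≫ f') ≫ g := by rw [← hw, ← hw']; simp
      _ = (N * N) • 𝟙 Y := by 
          rw [hgf', Preadditive.nsmul_comp, Category.id_comp, Preadditive.comp_nsmul, hfg, mul_smul]
  have e3 : c • x = 0 := by
    apply tors_Y c hc hG x (N * N * c) (by positivity)
    rw [hx, smul_add, add_eq_left] at e2
    rw [mul_smul, e2]
  rw [hx, e3, add_zero]

theorem finite_classes (hfg : ∀ X Y : A, AddGroup.FG (X ⟶ Y)) (X : A) :
    ∃ (n : ℕ) (f : Fin n → A), ∀ Y : A, Gen X Y → ∃ i, Nonempty (Y ≅ f i) := by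
  classical
  obtain ⟨N, hN, H⟩ := fg_pair hfg X
  have : Module.Finite ℤ (X ⟶ X) := fin_hom hfg X X
  obtain ⟨c, hc0, hc⟩ := tors_bound (X ⟶ X)
  have hm : 0 < N * c := by positivity
  have hfin := finite_quot hfg (N * c) hm X X
  let S := {Y : A // Gen X Y}
  choose f g h1 h2 using fun Y : S => H Y.1 Y.2
  choose h k α β h3 h4 using fun Y : S => Y.2 (N * c) hm
  let F : S → (X ⟶ X) ⧸ mulSub (N * c) X X := fun Y => (mulSub (N * c) X X).mkQ (g Y ≫ k Y)
  have key : ∀ Y Y' : S, F Y = F Y' → ∃ z : X ⟶ X, g Y ≫ k Y = g Y' ≫ k Y' + (N * c) • z := by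
    intro Y Y' hF
    obtain ⟨z, hz⟩ := (Submodule.Quotient.eq _).1 hF
    exact ⟨z, by rw [← hz]; abel⟩
  have iso : ∀ Y Y' : S, F Y = F Y' → Nonempty (Y.1 ≅ Y'.1) := by
    intro Y Y' hF
    obtain ⟨z, hz⟩ := key Y Y' hF
    obtain ⟨z', hz'⟩ := key Y' Y hF.symm
    obtain ⟨w, hw⟩ := half N c (h1 Y) (h4 Y') hz
    obtain ⟨w', hw'⟩ := half N c (h1 Y') (h4 Y) hz'
    exact ⟨⟨_, _, uu N c hN hc0 hc Y.2 (h1 Y) (h2 Y') (h4 Y) (h3 Y') w w' hw hw',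
      uu N c hN hc0 hc Y'.2 (h1 Y') (h2 Y) (h4 Y') (h3 Y) w' w hw' hw⟩⟩
  let e := Finite.equivFin ((X ⟶ X) ⧸ mulSub (N * c) X X)
  refine ⟨_, fun i => if hi : ∃ Y : S, e (F Y) = i then hi.choose.1 else X, fun Y hY => ?_⟩
  have hi : ∃ Y' : S, e (F Y') = e (F ⟨Y, hY⟩) := ⟨⟨Y, hY⟩, rfl⟩
  refine ⟨e (F ⟨Y, hY⟩), ?_⟩
  beta_reduce
  rw [dif_pos hi]
  exact iso ⟨Y, hY⟩ _ (e.injective hi.choose_spec).symm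

end Cat2
end StabIso

/-- In an additive category with finitely generated Hom groups, each stable
isomorphism class contains only finitely many isomorphism classes: for any
object `X` there are finitely many objects, up to isomorphism, that are stably
isomorphic to `X`. -/
theorem stmt_12 {A : Type*} [Category A] [Preadditive A] [HasFiniteBiproducts A]
    (hfg : ∀ X Y : A, AddGroup.FG (X ⟶ Y)) (X : A) :
    ∃ (n : ℕ) (f : Fin n → A),
      ∀ Y : A, (∃ Z : A, Nonempty (X ⊞ Z ≅ Y ⊞ Z)) → ∃ i, Nonempty (Y ≅ f i) := by
  obtain ⟨n, f, h⟩ := StabIso.finite_classes hfg X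
  exact ⟨n, f, fun Y ⟨Z, ⟨φ⟩⟩ => h Y (StabIso.gen_of_stab hfg X Y Z φ)⟩
end
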